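/- arXiv:1408.0235 — 3 statements merged into one kernel-verified Lean document; each statement's English description precedes it below -/
import Mathlib

section
/- Let b > 1 be an integer, let χ be a primitive Dirichlet character of modulus b all of whose values are real, and set d = χ(-1)·b ∈ ℤ (so d = ±b according as χ(-1) = ±1). Let K be any number field with [K : ℚ] = 2 whose discriminant equals d, let h be the class number of K, let w be the number of roots of unity in the ring of integers of K, and let R be the regulator of K. If d < 0, then L(1, χ) = 2π·h/(w·√|d|). If d > 0, then L(1, χ) = 2·R·h/√d. -/
/-!
The Gauss sum of `χ` lies in `ℚ(ζ_b)` and squares to `χ(-1) b = d`, so `K = ℚ(√d)` embeds in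
`ℚ(ζ_b)`. The Frobenius at a prime `p ∤ b` maps `ζ_b` to `ζ_b ^ p` and hence multiplies the Gauss
sum by `χ(p)`. Restricted to `K` it is trivial exactly when `p` splits, so `χ(p) = 1` if `p` splits
and `χ(p) = -1` if `p` is inert, while the primes dividing `b`, where `χ` vanishes, are the ramified
ones. The number of ideals of norm `n` is therefore `∑ χ(m)` over the divisors `m` of `n`, that is
`ζ_K(s) = ζ(s) L(s, χ)`, and `L(1, χ)` is the residue of `ζ_K` at `s = 1`, which the analytic class
number formula expresses through the invariants of `K`.
-/

open NumberField

section Characters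

theorem exists_ringHomComp_eq_of_forall_mem_range {M S R : Type*} [CommMonoid M] [CommRing S]
    [CommRing R] {f : S →+* R} (hf : Function.Injective f) (χ : MulChar M R)
    (hχ : ∀ a, χ a ∈ f.range) : ∃ χ' : MulChar M S, χ'.ringHomComp f = χ := by
  choose g hg using hχ
  refine ⟨⟨⟨⟨g, hf ?_⟩, fun x y ↦ hf ?_⟩, fun a ha ↦ hf ?_⟩, MulChar.ext' hg⟩
  · rw [hg, map_one, map_one]
  · simp only [map_mul, hg]
  · rw [hg, χ.map_nonunit ha, map_zero]

theorem isQuadratic_of_forall_im_eq_zero {R : Type*} [CommRing R] [Finite Rˣ] {χ : MulChar R ℂ}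
    (hχ : ∀ a, (χ a).im = 0) : χ.IsQuadratic := by
  have hinv : χ⁻¹ = χ := by
    rw [← MulChar.star_eq_inv]
    exact MulChar.ext' fun a ↦ Complex.conj_eq_iff_im.mpr (hχ a)
  rw [MulChar.isQuadratic_iff_sq_eq_one, sq]
  nth_rw 1 [← hinv]
  exact inv_mul_cancel χ

theorem exists_intCast_ringHomComp_eq {M R : Type*} [CommMonoid M] [CommRing R] [CharZero R]
    {χ : MulChar M R} (hχ : χ.IsQuadratic) :
    ∃ χ' : MulChar M ℤ, χ'.ringHomComp (Int.castRingHom R) = χ := by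
  refine exists_ringHomComp_eq_of_forall_mem_range (RingHom.injective_int _) χ fun a ↦ ?_
  rcases hχ a with h | h | h <;> rw [h]
  exacts [zero_mem _, one_mem _, neg_mem (one_mem _)]

theorem isQuadratic_int {M : Type*} [CommMonoid M] (χ : MulChar M ℤ) : χ.IsQuadratic := fun a ↦ by
  by_cases ha : IsUnit a
  · exact .inr (Int.isUnit_iff.mp (ha.map χ))
  · exact .inl (χ.map_nonunit ha)

theorem isPrimitive_ringHomComp_iff {b : ℕ} [NeZero b] {S R : Type*} [CommRing S] [CommRing R]
    {f : S →+* R} (hf : Function.Injective f) {χ : DirichletCharacter S b} :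
    DirichletCharacter.IsPrimitive (χ.ringHomComp f) ↔ χ.IsPrimitive := by
  have factorsThrough_iff (d : ℕ) :
      DirichletCharacter.FactorsThrough (χ.ringHomComp f) d ↔ χ.FactorsThrough d := by
    by_cases hd : d ∣ b
    · simp only [DirichletCharacter.factorsThrough_iff_ker_unitsMap hd, SetLike.le_def,
        MonoidHom.mem_ker, Units.ext_iff, MulChar.coe_toUnitHom, MulChar.ringHomComp_apply,
        Units.val_one, map_eq_one_iff f hf]
    · exact iff_of_false (hd ·.dvd) (hd ·.dvd)
  simp only [DirichletCharacter.isPrimitive_def, DirichletCharacter.conductor,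
    DirichletCharacter.conductorSet, factorsThrough_iff]

theorem gaussSum_mul_gaussSum_inv {b : ℕ} [NeZero b] {R : Type*} [CommRing R] [IsDomain R]
    {χ : DirichletCharacter R b} (hχ : χ.IsPrimitive) {ψ : AddChar (ZMod b) R}
    (hψ : ψ.IsPrimitive) : gaussSum χ ψ * gaussSum χ⁻¹ ψ = χ (-1) * b := by
  classical
  calc gaussSum χ ψ * gaussSum χ⁻¹ ψ = ∑ a, ψ a * (χ⁻¹ a * gaussSum χ ψ) := by
        rw [gaussSum, gaussSum, Finset.mul_sum]
        exact Finset.sum_congr rfl fun a _ ↦ by ring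
    _ = ∑ a, ∑ c, ψ a * (χ c * ψ (a * c)) := by
        refine Finset.sum_congr rfl fun a _ ↦ ?_
        rw [← gaussSum_mulShift_of_isPrimitive ψ hχ, gaussSum, Finset.mul_sum]
        rfl
    _ = ∑ c, χ c * ∑ a, ψ (a * (c + 1)) := by
        rw [Finset.sum_comm]
        refine Finset.sum_congr rfl fun c _ ↦ ?_
        rw [Finset.mul_sum]
        refine Finset.sum_congr rfl fun a _ ↦ ?_
        rw [mul_add, AddChar.map_add_eq_mul, mul_one]
        ring
    _ = χ (-1) * b := by
        simp [AddChar.sum_mulShift _ hψ, add_eq_zero_iff_eq_neg, ZMod.card]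

theorem zetaMul_prime_pow {b : ℕ} (χ : DirichletCharacter ℂ b) {p : ℕ} (hp : p.Prime) (k : ℕ) :
    χ.zetaMul (p ^ k) = ∑ i ∈ Finset.range (k + 1), χ p ^ i := by
  rw [DirichletCharacter.zetaMul, ArithmeticFunction.coe_zeta_mul_apply,
    Nat.sum_divisors_prime_pow hp]
  refine Finset.sum_congr rfl fun i _ ↦ ?_
  simp [toArithmeticFunction, hp.ne_zero]

end Characters

section Frobenius

variable {R S : Type*} [CommRing R] [CommRing S] [Algebra R S]

theorem isArithFrobAt_id_iff_natCard_eq {Q : Ideal S} [Q.IsMaximal] [Finite (S ⧸ Q)] :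
    (AlgHom.id R S).IsArithFrobAt Q ↔ Nat.card (S ⧸ Q) = Nat.card (R ⧸ Q.under R) := by
  classical
  let := Ideal.Quotient.field Q
  let := Fintype.ofFinite (S ⧸ Q)
  have hinj : Function.Injective (algebraMap (R ⧸ Q.under R) (S ⧸ Q)) :=
    Ideal.algebraMap_quotient_injective
  have : Finite (R ⧸ Q.under R) := .of_injective _ hinj
  refine ⟨fun h ↦ le_antisymm ?_ (Nat.card_le_card_of_injective _ hinj), fun h x ↦ ?_⟩
  · -- All elements of `S ⧸ Q` are then roots of `X ^ q - X`.
    set q := Nat.card (R ⧸ Q.under R)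
    have hq : 1 < q := Finite.one_lt_card_iff_nontrivial.mpr inferInstance
    have hroots : (Finset.univ : Finset (S ⧸ Q)).val ⊆
        (Polynomial.X ^ q - Polynomial.X : Polynomial (S ⧸ Q)).roots := fun x _ ↦ by
      obtain ⟨y, rfl⟩ := Ideal.Quotient.mk_surjective x
      rw [Polynomial.mem_roots (FiniteField.X_pow_card_sub_X_ne_zero _ hq)]
      simpa [sub_eq_zero] using (h.mk_apply y).symm
    simpa [FiniteField.X_pow_card_sub_X_natDegree_eq _ hq] using
      Polynomial.card_le_degree_of_subset_roots hroots
  · rw [← Ideal.Quotient.eq, ← h, Nat.card_eq_fintype_card, map_pow, FiniteField.pow_card]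
    rfl

theorem eq_one_iff_of_isArithFrobAt {G : Type*} [Group G] [MulSemiringAction G S]
    [SMulCommClass G R S] [FaithfulSMul G S] [IsDomain S] [IsNoetherianRing S] {Q : Ideal S}
    [Q.IsMaximal] [Finite (S ⧸ Q)] [Algebra.IsUnramifiedAt R Q] {σ : G}
    (hσ : IsArithFrobAt R σ Q) :
    σ = 1 ↔ Nat.card (S ⧸ Q) = Nat.card (R ⧸ Q.under R) := by
  rw [← isArithFrobAt_id_iff_natCard_eq]
  constructor
  · rintro rfl
    convert hσ
    ext x
    simp
  · intro h
    have hid := hσ.eq_of_isUnramifiedAt h Q.primeCompl_le_nonZeroDivisors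
    exact eq_of_smul_eq_smul fun x : S ↦ by simpa using DFunLike.congr_fun hid x

theorem isArithFrobAt_comap {T : Type*} [CommRing T] [Algebra R T] {f : S →ₐ[R] T}
    {φ : S →ₐ[R] S} {ψ : T →ₐ[R] T} (hf : f.comp φ = ψ.comp f) {Q : Ideal T}
    (hψ : ψ.IsArithFrobAt Q) : φ.IsArithFrobAt (Q.comap f) := fun x ↦ by
  have hunder : (Q.comap f).under R = Q.under R := by
    ext r
    simp
  rw [hunder, Ideal.mem_comap, map_sub, map_pow]
  exact DFunLike.congr_fun hf x ▸ hψ (f x)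

end Frobenius

section CyclotomicFrobenius

theorem map_gaussSum_eq_mul {b : ℕ} [NeZero b] {R : Type*} [CommRing R] [IsDomain R]
    {χ : DirichletCharacter R b} (hχ : χ.IsPrimitive) {ψ : AddChar (ZMod b) R} {f : R →+* R}
    {n : ZMod b} (hfχ : ∀ a, f (χ a) = χ a) (hfψ : ∀ a, f (ψ a) = ψ (n * a)) :
    f (gaussSum χ ψ) = χ⁻¹ n * gaussSum χ ψ := by
  rw [← gaussSum_mulShift_of_isPrimitive ψ hχ, gaussSum, gaussSum, map_sum]
  exact Finset.sum_congr rfl fun a _ ↦ by rw [map_mul, hfχ, hfψ, AddChar.mulShift_apply]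

theorem natCard_int_quotient_under {R : Type*} [CommRing R] {P : Ideal R} [P.IsPrime] {p : ℕ}
    (hp : p.Prime) (hpP : (p : R) ∈ P) : Nat.card (ℤ ⧸ P.under ℤ) = p := by
  have : P.LiesOver (Ideal.span {(p : ℤ)}) :=
    (Ideal.liesOver_span_iff ‹P.IsPrime›.ne_top (Nat.prime_iff_prime_int.mp hp)).mpr (by simpa)
  rw [← P.over_def (Ideal.span {(p : ℤ)}),
    Nat.card_congr (Int.quotientSpanEquivZMod p).toEquiv, Nat.card_zmod,
    Int.natAbs_natCast]

theorem natCast_notMem_of_not_dvd {R : Type*} [CommRing R] {P : Ideal R} [P.IsPrime] {p b : ℕ}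
    (hp : p.Prime) (hpP : (p : R) ∈ P) (hpb : ¬ p ∣ b) : (b : R) ∉ P := fun hbP ↦ by
  refine ‹P.IsPrime›.one_notMem ?_
  obtain ⟨x, y, hxy⟩ := Nat.Coprime.cast (R := R) (hp.coprime_iff_not_dvd.mpr hpb)
  exact hxy ▸ P.add_mem (P.mul_mem_left x hpP) (P.mul_mem_left y hbP)

variable {E : Type*} [Field E] [NumberField E] {b p : ℕ} {P : Ideal (𝓞 E)} [P.IsPrime]
  {σ : Gal(E/ℚ)}

theorem apply_eq_pow_of_isArithFrobAt [NeZero b] (hp : p.Prime) (hpP : (p : 𝓞 E) ∈ P)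
    (hpb : ¬ p ∣ b) (hσ : IsArithFrobAt ℤ σ P) {ζ : E} (hζ : IsPrimitiveRoot ζ b) :
    σ ζ = ζ ^ p := by
  have h := AlgHom.IsArithFrobAt.apply_of_pow_eq_one hσ (m := b)
    hζ.toInteger_isPrimitiveRoot.pow_eq_one (natCast_notMem_of_not_dvd hp hpP hpb)
  rw [natCard_int_quotient_under hp hpP] at h
  exact congrArg (algebraMap (𝓞 E) E) h

theorem exists_sq_eq_and_isArithFrobAt_apply [NeZero b] {ζ : E} (hζ : IsPrimitiveRoot ζ b)
    {χ : DirichletCharacter ℤ b} (hχ : χ.IsPrimitive) :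
    ∃ g : E, g ^ 2 = (χ (-1) * b : ℤ) ∧
      ∀ {p : ℕ} {P : Ideal (𝓞 E)} [P.IsPrime] {σ : Gal(E/ℚ)}, p.Prime → (p : 𝓞 E) ∈ P →
        ¬ p ∣ b → IsArithFrobAt ℤ σ P → σ g = χ p * g := by
  let χE : DirichletCharacter E b := χ.ringHomComp (Int.castRingHom E)
  have hχE : χE.IsPrimitive := (isPrimitive_ringHomComp_iff (RingHom.injective_int _)).mpr hχ
  have hinv : χE⁻¹ = χE := ((isQuadratic_int χ).comp _).inv
  let ψ : AddChar (ZMod b) E := AddChar.zmodChar b hζ.pow_eq_one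
  have hψ : ψ.IsPrimitive := AddChar.zmodChar_primitive_of_primitive_root b hζ
  refine ⟨gaussSum χE ψ, ?_, fun {p P _ σ} hp hpP hpb hσ ↦ ?_⟩
  · have h := gaussSum_mul_gaussSum_inv hχE hψ
    rw [hinv] at h
    simpa [sq, χE] using h
  · have hσψ (a : ZMod b) : σ (ψ a) = ψ (p * a) := by
      rw [← nsmul_eq_mul, AddChar.map_nsmul_eq_pow, AddChar.zmodChar_apply, map_pow,
        apply_eq_pow_of_isArithFrobAt hp hpP hpb hσ hζ, pow_right_comm]
    have h := map_gaussSum_eq_mul hχE (f := (σ : E →+* E)) (n := p) (by simp [χE]) hσψ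
    rwa [hinv] at h

end CyclotomicFrobenius

section QuadraticFrobenius

variable {K : Type*} [Field K] [NumberField K]

theorem natCast_dvd_discr_iff {b n : ℕ} {χ : DirichletCharacter ℤ b}
    (hK : discr K = χ (-1) * b) : (n : ℤ) ∣ discr K ↔ n ∣ b := by
  rw [hK, (isUnit_one.neg.map χ).dvd_mul_left, Int.natCast_dvd_natCast]

theorem ne_zero_of_sq_eq_discr {δ : K} (hδ : δ ^ 2 = discr K) : δ ≠ 0 := by
  rw [← pow_ne_zero_iff two_ne_zero, hδ]
  exact_mod_cast discr_ne_zero K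

variable [Algebra.IsQuadraticExtension ℚ K]

theorem exists_sq_eq_discr_and_apply_eq_neg :
    ∃ δ : K, δ ^ 2 = discr K ∧ ∀ s : Gal(K/ℚ), s ≠ 1 → s δ = -δ := by
  have hcard : Nat.card Gal(K/ℚ) = 2 := by
    rw [IsGalois.card_aut_eq_finrank, Algebra.IsQuadraticExtension.finrank_eq_two]
  obtain ⟨s, hs, hs'⟩ := (Nat.card_eq_two_iff' (1 : Gal(K/ℚ))).mp hcard
  have htrace (x : K) : ((Algebra.trace ℚ K x : ℚ) : K) = x + s x := by
    classical
    rw [← eq_ratCast (algebraMap ℚ K), trace_eq_sum_automorphisms,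
      Fintype.sum_eq_add 1 s hs.symm fun t ht ↦ absurd (hs' t ht.1) ht.2]
    rfl
  have hss (x : K) : s (s x) = x := by
    have : s * s = 1 := by
      by_contra h
      exact hs (mul_eq_left.mp (hs' _ h))
    exact DFunLike.congr_fun this x
  let B := (RingOfIntegers.basis K).reindex (Fintype.equivFinOfCardEq (n := 2) (by
    rw [← Module.finrank_eq_card_chooseBasisIndex, RingOfIntegers.rank,
      Algebra.IsQuadraticExtension.finrank_eq_two]))
  -- `δ` is the determinant of the matrix of conjugates of an integral basis.
  refine ⟨B 0 * s (B 1) - B 1 * s (B 0), ?_, fun t ht ↦ ?_⟩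
  · have htr (x : 𝓞 K) : ((Algebra.trace ℤ (𝓞 K) x : ℤ) : K) = x + s x := by
      rw [← htrace, ← Algebra.coe_trace_int, Rat.cast_intCast]
    rw [← discr_eq_discr K B, Algebra.discr_def, Matrix.det_fin_two]
    push_cast [Algebra.traceMatrix_apply, Algebra.traceForm_apply, htr, map_mul]
    ring
  · rw [hs' t ht, map_sub, map_mul, map_mul, hss, hss]
    ring

theorem adjoin_eq_top_of_sq_eq_discr {δ : K} (hδ : δ ^ 2 = discr K)
    (hneg : ∀ s : Gal(K/ℚ), s ≠ 1 → s δ = -δ) : IntermediateField.adjoin ℚ {δ} = ⊤ := by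
  rw [Field.primitive_element_iff_algHom_eq_of_eval ℚ K (Normal.splits inferInstance) _
    (AlgHom.id ℚ K)]
  intro ψ hψ
  by_contra hne
  have hψ1 : AlgEquiv.ofBijective ψ ψ.bijective ≠ 1 := fun h ↦
    hne (AlgHom.ext fun x ↦ (DFunLike.congr_fun h x).symm)
  exact ne_zero_of_sq_eq_discr hδ (self_eq_neg.mp (hψ.trans (hneg _ hψ1)))

theorem nonempty_algHom_of_sq_eq_discr {E : Type*} [Field E] [CharZero E] {g : E}
    (hg : g ^ 2 = discr K) : Nonempty (K →ₐ[ℚ] E) := by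
  obtain ⟨δ, hδ, hneg⟩ := exists_sq_eq_discr_and_apply_eq_neg (K := K)
  have hdvd : minpoly ℚ δ ∣ .X ^ 2 - .C (discr K : ℚ) := minpoly.dvd ℚ δ (by simp [hδ])
  have hsplits : (.X ^ 2 - .C (discr K : E) : Polynomial E).Splits :=
    X_pow_sub_C_splits_of_isPrimitiveRoot (IsPrimitiveRoot.neg_one 0 two_ne_zero.symm) hg
  refine IntermediateField.nonempty_algHom_of_adjoin_splits (S := {δ}) ?_
    (adjoin_eq_top_of_sq_eq_discr hδ hneg)
  rintro _ rfl
  refine ⟨.of_finite ℚ _, hsplits.of_dvd (Polynomial.X_pow_sub_C_ne_zero two_pos _) ?_⟩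
  simpa using Polynomial.map_dvd (algebraMap ℚ E) hdvd

theorem ne_bot_of_natCast_mem {R : Type*} [Ring R] [CharZero R] {I : Ideal R} {n : ℕ}
    (hn : n ≠ 0) (hnI : (n : R) ∈ I) : I ≠ ⊥ := by
  rintro rfl
  exact hn (by simpa using hnI)

theorem exists_isArithFrobAt_and_apply_eq_of_algebra {E : Type*} [Field E] [NumberField E]
    [IsGalois ℚ E] [Algebra K E] {b : ℕ} [NeZero b] {ζ : E} (hζ : IsPrimitiveRoot ζ b)
    {χ : DirichletCharacter ℤ b} (hχ : χ.IsPrimitive) (hK : discr K = χ (-1) * b) {p : ℕ}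
    (hp : p.Prime) (hpb : ¬ p ∣ b) {P : Ideal (𝓞 K)} [P.IsPrime] (hpP : (p : 𝓞 K) ∈ P) {δ : K}
    (hδ : δ ^ 2 = discr K) : ∃ s : Gal(K/ℚ), IsArithFrobAt ℤ s P ∧ s δ = χ p * δ := by
  have : P.IsMaximal := ‹P.IsPrime›.isMaximal (ne_bot_of_natCast_mem hp.ne_zero hpP)
  obtain ⟨Q, hQmax, hQP⟩ :=
    Ideal.exists_maximal_ideal_liesOver_of_isIntegral (S := 𝓞 E) P
  have hpQ : (p : 𝓞 E) ∈ Q := by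
    rw [hQP.over] at hpP
    simpa using hpP
  have : Finite (𝓞 E ⧸ Q) :=
    Ring.HasFiniteQuotients.finiteQuotient (ne_bot_of_natCast_mem hp.ne_zero hpQ)
  obtain ⟨σ, hσ⟩ := IsArithFrobAt.exists_of_isInvariant ℤ Gal(E/ℚ) Q
  obtain ⟨g, hg, hσg⟩ := exists_sq_eq_and_isArithFrobAt_apply hζ hχ
  refine ⟨σ.restrictNormal K, ?_, (algebraMap K E).injective ?_⟩
  · rw [hQP.over]
    refine isArithFrobAt_comap (f := IsScalarTower.toAlgHom ℤ (𝓞 K) (𝓞 E)) ?_ hσ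
    ext x
    exact σ.restrictNormal_commutes K x
  · have hδg : algebraMap K E δ = g ∨ algebraMap K E δ = -g := by
      rw [← sq_eq_sq_iff_eq_or_eq_neg, hg, ← map_pow, hδ, hK, map_intCast]
    have hσg := hσg hp hpQ hpb hσ
    rw [σ.restrictNormal_commutes, map_mul, map_intCast]
    rcases hδg with h | h <;> rw [h]
    · exact hσg
    · rw [map_neg, hσg, mul_neg]

theorem exists_isArithFrobAt_and_apply_eq {b : ℕ} [NeZero b] {χ : DirichletCharacter ℤ b}
    (hχ : χ.IsPrimitive) (hK : discr K = χ (-1) * b) {p : ℕ} (hp : p.Prime) (hpb : ¬ p ∣ b)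
    {P : Ideal (𝓞 K)} [P.IsPrime] (hpP : (p : 𝓞 K) ∈ P) {δ : K} (hδ : δ ^ 2 = discr K) :
    ∃ s : Gal(K/ℚ), IsArithFrobAt ℤ s P ∧ s δ = χ p * δ := by
  -- `CyclotomicField b ℚ` is a `ℚ`-algebra both as a splitting field over `ℚ` and as a field of
  -- characteristic zero; the lemmas above refer to the latter structure.
  have : IsCyclotomicExtension {b} ℚ (CyclotomicField b ℚ) := by
    convert! CyclotomicField.isCyclotomicExtension b ℚ
  have : IsGalois ℚ (CyclotomicField b ℚ) := IsCyclotomicExtension.isGalois {b} _ _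
  have hζ := IsCyclotomicExtension.zeta_spec b ℚ (CyclotomicField b ℚ)
  obtain ⟨g, hg, -⟩ := exists_sq_eq_and_isArithFrobAt_apply hζ hχ
  obtain ⟨φ⟩ := nonempty_algHom_of_sq_eq_discr (K := K) (hK ▸ hg)
  let := φ.toAlgebra
  exact exists_isArithFrobAt_and_apply_eq_of_algebra hζ hχ hK hp hpb hpP hδ

theorem absNorm_eq_iff_of_not_dvd {b : ℕ} [NeZero b] {χ : DirichletCharacter ℤ b}
    (hχ : χ.IsPrimitive) (hK : discr K = χ (-1) * b) {p : ℕ} (hp : p.Prime) (hpb : ¬ p ∣ b)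
    {P : Ideal (𝓞 K)} [P.IsPrime] (hpP : (p : 𝓞 K) ∈ P) : Ideal.absNorm P = p ↔ χ p = 1 := by
  have hPbot : P ≠ ⊥ := ne_bot_of_natCast_mem hp.ne_zero hpP
  have : P.IsMaximal := ‹P.IsPrime›.isMaximal hPbot
  have : Finite (𝓞 K ⧸ P) := Ring.HasFiniteQuotients.finiteQuotient hPbot
  have : FaithfulSMul Gal(K/ℚ) (𝓞 K) := IsGaloisGroup.faithful ℤ
  have : Algebra.IsUnramifiedAt ℤ P :=
    (not_dvd_discr_iff_forall_mem K (𝓞 K) (Nat.prime_iff_prime_int.mp hp)).mp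
      (mt (natCast_dvd_discr_iff hK).mp hpb) P ‹_› (by simpa)
  obtain ⟨δ, hδ, hneg⟩ := exists_sq_eq_discr_and_apply_eq_neg (K := K)
  have hδ0 : δ ≠ 0 := ne_zero_of_sq_eq_discr hδ
  obtain ⟨s, hs, hsδ⟩ := exists_isArithFrobAt_and_apply_eq hχ hK hp hpb hpP hδ
  have hs1 : s = 1 ↔ χ p = 1 := by
    refine ⟨fun h ↦ ?_, fun h ↦ ?_⟩
    · rw [h, AlgEquiv.one_apply, eq_comm, mul_eq_right₀ hδ0] at hsδ
      exact_mod_cast hsδ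
    · by_contra hne
      rw [hneg s hne, h, Int.cast_one, one_mul, neg_eq_self] at hsδ
      exact hδ0 hsδ
  rw [← hs1, eq_one_iff_of_isArithFrobAt hs, natCard_int_quotient_under hp hpP]
  rfl

end QuadraticFrobenius

section IdealCount

theorem eq_and_eq_of_mul_eq_mul_of_coprime {a b m n : ℕ} (ha : a.Coprime n) (hb : b.Coprime m)
    (h : a * b = m * n) : a = m ∧ b = n :=
  ⟨Nat.dvd_antisymm (ha.dvd_of_dvd_mul_right (h ▸ dvd_mul_right a b))
      (hb.symm.dvd_of_dvd_mul_right (h ▸ dvd_mul_right m n)),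
    Nat.dvd_antisymm (hb.dvd_of_dvd_mul_left (h ▸ dvd_mul_left b a))
      (ha.symm.dvd_of_dvd_mul_left (h ▸ dvd_mul_left n m))⟩

theorem le_of_pow_mul_pow_eq_pow_mul_pow {M : Type*} [CommMonoidWithZero M] [IsCancelMulZero M]
    {p q : M} (hp : Prime p) (hpq : ¬ p ∣ q) {i j k l : ℕ} (h : p ^ i * q ^ k = p ^ j * q ^ l) :
    j ≤ i :=
  (pow_dvd_pow_iff hp.ne_zero hp.not_isUnit).mp
    (hp.pow_dvd_of_dvd_mul_right j (mt hp.dvd_of_dvd_pow hpq) (Dvd.intro _ h.symm))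

variable {R : Type*} [CommRing R]

theorem sup_span_singleton_mul_sup_span_singleton {I : Ideal R} {x y : R} (hxy : IsCoprime x y)
    (hI : x * y ∈ I) : (I ⊔ Ideal.span {x}) * (I ⊔ Ideal.span {y}) = I := by
  apply le_antisymm
  · rw [Ideal.sup_mul, Ideal.mul_sup, Ideal.mul_sup, Ideal.span_singleton_mul_span_singleton]
    exact sup_le (sup_le Ideal.mul_le_left Ideal.mul_le_left)
      (sup_le Ideal.mul_le_right ((Ideal.span_singleton_le_iff_mem _).mpr hI))
  · intro z hz
    obtain ⟨u, v, huv⟩ := hxy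
    have hz' : z = (u * x) * z + z * (v * y) := by linear_combination (-z) * huv
    have mem_span (c w : R) : c * w ∈ I ⊔ Ideal.span {w} :=
      Ideal.mem_sup_right (Ideal.mul_mem_left _ _ (Ideal.mem_span_singleton_self _))
    rw [hz']
    exact add_mem (Ideal.mul_mem_mul (mem_span u x) (Ideal.mem_sup_left hz))
      (Ideal.mul_mem_mul (Ideal.mem_sup_left hz) (mem_span v y))

variable [IsDedekindDomain R] [Module.Free ℤ R]

theorem isCoprime_of_coprime_absNorm {I J : Ideal R}
    (h : (Ideal.absNorm I).Coprime (Ideal.absNorm J)) : IsCoprime I J := by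
  obtain ⟨u, v, huv⟩ := Nat.Coprime.cast (R := R) h
  exact Ideal.isCoprime_iff_exists.mpr ⟨_, I.mul_mem_left u (Ideal.absNorm_mem I), _,
    J.mul_mem_left v (Ideal.absNorm_mem J), huv⟩

theorem eq_of_mul_eq_mul_of_coprime_absNorm {I I' J J' : Ideal R}
    (hI : Ideal.absNorm I = Ideal.absNorm I') (hJ : Ideal.absNorm J = Ideal.absNorm J')
    (hIJ : (Ideal.absNorm I).Coprime (Ideal.absNorm J)) (h : I * J = I' * J') :
    I = I' ∧ J = J' := by
  have h₁ : IsCoprime I J' := isCoprime_of_coprime_absNorm (hJ ▸ hIJ)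
  have h₂ : IsCoprime I' J := isCoprime_of_coprime_absNorm (hI ▸ hIJ)
  exact ⟨dvd_antisymm (h₁.dvd_of_dvd_mul_right (h ▸ dvd_mul_right I J))
      (h₂.dvd_of_dvd_mul_right (h ▸ dvd_mul_right I' J')),
    dvd_antisymm (h₂.symm.dvd_of_dvd_mul_left (h ▸ dvd_mul_left J I))
      (h₁.symm.dvd_of_dvd_mul_left (h ▸ dvd_mul_left J' I'))⟩

theorem coprime_absNorm_sup_span_natCast [Module.Finite ℤ R] (I : Ideal R) {m n : ℕ}
    (hmn : m.Coprime n) : (Ideal.absNorm (I ⊔ Ideal.span {(m : R)})).Coprime n := by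
  refine .coprime_dvd_left (Ideal.absNorm_dvd_absNorm_of_le le_sup_right) ?_
  rw [Ideal.absNorm_span_natCast]
  exact hmn.pow_left _

theorem exists_mul_eq_of_absNorm_eq_mul [Module.Finite ℤ R] {m n : ℕ} (hmn : m.Coprime n)
    {L : Ideal R} (hL : Ideal.absNorm L = m * n) :
    ∃ I J : Ideal R, Ideal.absNorm I = m ∧ Ideal.absNorm J = n ∧ I * J = L := by
  have hprod : (L ⊔ Ideal.span {(m : R)}) * (L ⊔ Ideal.span {(n : R)}) = L :=
    sup_span_singleton_mul_sup_span_singleton hmn.cast (by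
      exact_mod_cast hL ▸ Ideal.absNorm_mem L)
  obtain ⟨hm, hn⟩ := eq_and_eq_of_mul_eq_mul_of_coprime
    (coprime_absNorm_sup_span_natCast L hmn) (coprime_absNorm_sup_span_natCast L hmn.symm)
    (by rw [← map_mul, hprod, hL])
  exact ⟨_, _, hm, hn, hprod⟩

variable (R) in
/-- The number of ideals of `R` of absolute norm `n`, as an arithmetic function; for `R = 𝓞 K`
these are the coefficients of the Dedekind zeta function of `K`. Its value at `0` is `0`, whereas
`⊥` is an ideal of norm `0`. -/
noncomputable def idealCount : ArithmeticFunction ℕ :=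
  ⟨fun n ↦ if n = 0 then 0 else Nat.card {I : Ideal R // Ideal.absNorm I = n}, if_pos rfl⟩

theorem idealCount_apply {n : ℕ} (hn : n ≠ 0) :
    idealCount R n = Nat.card {I : Ideal R // Ideal.absNorm I = n} :=
  if_neg hn

theorem isMultiplicative_idealCount [Module.Finite ℤ R] : (idealCount R).IsMultiplicative := by
  refine ArithmeticFunction.IsMultiplicative.iff_ne_zero.mpr ⟨?_, fun {m n} hm hn hmn ↦ ?_⟩
  · simp [idealCount_apply, Ideal.absNorm_eq_one_iff]
  · rw [idealCount_apply hm, idealCount_apply hn, idealCount_apply (mul_ne_zero hm hn),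
      ← Nat.card_prod]
    refine (Nat.card_eq_of_bijective
      (fun x ↦ ⟨x.1.1 * x.2.1, by rw [map_mul, x.1.2, x.2.2]⟩) ⟨?_, ?_⟩).symm
    · rintro ⟨⟨I, rfl⟩, ⟨J, rfl⟩⟩ ⟨⟨I', hI⟩, ⟨J', hJ⟩⟩ h
      obtain ⟨rfl, rfl⟩ :=
        eq_of_mul_eq_mul_of_coprime_absNorm hI.symm hJ.symm hmn (congrArg Subtype.val h)
      rfl
    · rintro ⟨L, hL⟩
      obtain ⟨I, J, hI, hJ, rfl⟩ := exists_mul_eq_of_absNorm_eq_mul hmn hL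
      exact ⟨(⟨I, hI⟩, ⟨J, hJ⟩), rfl⟩

theorem dvd_span_natCast_pow_of_absNorm_eq_pow {p k : ℕ} {I : Ideal R}
    (hI : Ideal.absNorm I = p ^ k) : I ∣ Ideal.span {(p : R)} ^ k := by
  rw [Ideal.span_singleton_pow, Ideal.dvd_span_singleton, ← Nat.cast_pow, ← hI]
  exact Ideal.absNorm_mem I

variable {p : ℕ} {P Q : Ideal R}

theorem idealCount_prime_pow_of_span_eq_pow (hp : p.Prime) (hP : Prime P) {e f : ℕ}
    (hpP : Ideal.span {(p : R)} = P ^ e) (hPf : Ideal.absNorm P = p ^ f) (k : ℕ) :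
    idealCount R (p ^ k) = if f ∣ k then 1 else 0 := by
  have absNorm_pow (i : ℕ) : Ideal.absNorm (P ^ i) = p ^ (f * i) := by rw [map_pow, hPf, pow_mul]
  have exists_eq_pow {I : Ideal R} (hI : Ideal.absNorm I = p ^ k) : ∃ i, k = f * i ∧ I = P ^ i := by
    have hdvd := dvd_span_natCast_pow_of_absNorm_eq_pow hI
    rw [hpP, ← pow_mul] at hdvd
    obtain ⟨i, -, hi⟩ := (dvd_prime_pow hP _).mp hdvd
    obtain rfl := associated_iff_eq.mp hi
    exact ⟨i, Nat.pow_right_injective hp.two_le (hI.symm.trans (absNorm_pow i)), rfl⟩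
  have hf : f ≠ 0 := by
    rintro rfl
    exact hP.not_isUnit (Ideal.isUnit_iff.mpr (Ideal.absNorm_eq_one_iff.mp hPf))
  rw [idealCount_apply (pow_ne_zero k hp.ne_zero)]
  split_ifs with hk
  · obtain ⟨i, rfl⟩ := hk
    refine Nat.card_eq_one_iff_exists.mpr ⟨⟨P ^ i, absNorm_pow i⟩, fun ⟨I, hI⟩ ↦ ?_⟩
    obtain ⟨j, hij, rfl⟩ := exists_eq_pow hI
    simp [Nat.eq_of_mul_eq_mul_left hf.pos hij]
  · refine Nat.card_eq_zero.mpr (.inl ⟨fun ⟨I, hI⟩ ↦ hk ?_⟩)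
    obtain ⟨j, rfl, -⟩ := exists_eq_pow hI
    exact dvd_mul_right f j

theorem absNorm_eq_pow_iff_exists_eq_pow_mul_pow (hp : p.Prime) (hP : Prime P) (hQ : Prime Q)
    (hNP : Ideal.absNorm P = p) (hNQ : Ideal.absNorm Q = p)
    (hpPQ : Ideal.span {(p : R)} = P * Q) {k : ℕ} {I : Ideal R} :
    Ideal.absNorm I = p ^ k ↔ ∃ i ≤ k, I = P ^ i * Q ^ (k - i) := by
  have absNorm_mul (i j : ℕ) : Ideal.absNorm (P ^ i * Q ^ j) = p ^ (i + j) := by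
    rw [map_mul, map_pow, map_pow, hNP, hNQ, pow_add]
  constructor
  · intro hI
    have hdvd := dvd_span_natCast_pow_of_absNorm_eq_pow hI
    rw [hpPQ, mul_pow] at hdvd
    obtain ⟨A, B, hA, hB, rfl⟩ := exists_dvd_and_dvd_of_dvd_mul hdvd
    obtain ⟨i, -, hi⟩ := (dvd_prime_pow hP _).mp hA
    obtain ⟨j, -, hj⟩ := (dvd_prime_pow hQ _).mp hB
    obtain rfl := associated_iff_eq.mp hi
    obtain rfl := associated_iff_eq.mp hj
    obtain rfl : i + j = k := Nat.pow_right_injective hp.two_le ((absNorm_mul i j).symm.trans hI)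
    exact ⟨i, Nat.le_add_right i j, by rw [Nat.add_sub_cancel_left]⟩
  · rintro ⟨i, hi, rfl⟩
    rw [absNorm_mul, Nat.add_sub_cancel' hi]

theorem idealCount_prime_pow_of_span_eq_mul (hp : p.Prime) (hP : Prime P) (hQ : Prime Q)
    (hPQ : P ≠ Q) (hNP : Ideal.absNorm P = p) (hNQ : Ideal.absNorm Q = p)
    (hpPQ : Ideal.span {(p : R)} = P * Q) (k : ℕ) : idealCount R (p ^ k) = k + 1 := by
  have hndvd : ¬ P ∣ Q := fun h ↦ hPQ (associated_iff_eq.mp (hP.associated_of_dvd hQ h))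
  classical
  have hset : {I : Ideal R | Ideal.absNorm I = p ^ k} =
      (Finset.range (k + 1)).image fun i ↦ P ^ i * Q ^ (k - i) := by
    ext I
    simp [absNorm_eq_pow_iff_exists_eq_pow_mul_pow hp hP hQ hNP hNQ hpPQ, eq_comm (a := I)]
  have hinj : Function.Injective fun i ↦ P ^ i * Q ^ (k - i) := fun i j hij ↦
    le_antisymm (le_of_pow_mul_pow_eq_pow_mul_pow hP hndvd hij.symm)
      (le_of_pow_mul_pow_eq_pow_mul_pow hP hndvd hij)
  calc idealCount R (p ^ k) = {I : Ideal R | Ideal.absNorm I = p ^ k}.ncard :=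
        idealCount_apply (pow_ne_zero k hp.ne_zero)
    _ = k + 1 := by
        rw [hset, Set.ncard_coe_finset, Finset.card_image_of_injective _ hinj, Finset.card_range]

end IdealCount

section Decomposition

theorem isUnramifiedAt_iff_not_sq_dvd {R : Type*} [CommRing R] [IsDedekindDomain R] [CharZero R]
    [Module.Finite ℤ R] {P : Ideal R} [P.IsPrime] {p : ℕ} (hp : p.Prime) (hpP : (p : R) ∈ P) :
    Algebra.IsUnramifiedAt ℤ P ↔ ¬ P ^ 2 ∣ Ideal.span {(p : R)} := by
  have hp' := Nat.prime_iff_prime_int.mp hp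
  have hmap : (Ideal.span {(p : ℤ)}).map (algebraMap ℤ R) = Ideal.span {(p : R)} := by
    simp [Ideal.map_span]
  have : P.LiesOver (Ideal.span {(p : ℤ)}) :=
    (Ideal.liesOver_span_iff ‹P.IsPrime›.ne_top hp').mpr (by simpa)
  rw [← Ideal.ramificationIdx_eq_one_iff, ← Ideal.ramificationIdx'_eq_ramificationIdx
    (Ideal.span {(p : ℤ)}) P (by simp [hp.ne_zero]), ← not_iff_not, not_not, Ideal.dvd_iff_le,
    ← hmap]
  refine Ideal.ramificationIdx'_ne_one_iff ?_
  rwa [hmap, Ideal.span_singleton_le_iff_mem]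

theorem exists_isPrime_natCast_mem {R : Type*} [CommRing R] [Algebra.IsIntegral ℤ R]
    [FaithfulSMul ℤ R] {p : ℕ} (hp : p.Prime) : ∃ P : Ideal R, P.IsPrime ∧ (p : R) ∈ P := by
  have hp' := Nat.prime_iff_prime_int.mp hp
  have := (Ideal.span_singleton_prime hp'.ne_zero).mpr hp'
  obtain ⟨⟨P, hP, hPp⟩⟩ := (Ideal.span {(p : ℤ)}).nonempty_primesOver (S := R)
  exact ⟨P, hP, by simpa using (Ideal.liesOver_span_iff hP.ne_top hp').mp hPp⟩

theorem prime_of_absNorm_eq_prime {R : Type*} [CommRing R] [IsDedekindDomain R] [Module.Free ℤ R]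
    {p : ℕ} (hp : p.Prime) {P : Ideal R} (hP : Ideal.absNorm P = p) : Prime P :=
  irreducible_iff_prime.mp (Ideal.irreducible_of_irreducible_absNorm (hP ▸ hp))

variable {K : Type*} [Field K] [NumberField K] {p : ℕ}

theorem prime_dvd_discr_iff_exists_sq_dvd_span (hp : p.Prime) :
    (p : ℤ) ∣ discr K ↔
      ∃ P : Ideal (𝓞 K), P.IsPrime ∧ (p : 𝓞 K) ∈ P ∧ P ^ 2 ∣ Ideal.span {(p : 𝓞 K)} := by
  rw [← not_iff_not, not_dvd_discr_iff_forall_mem K (𝓞 K) (Nat.prime_iff_prime_int.mp hp)]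
  push Not
  refine forall₂_congr fun P _ ↦ ?_
  simp only [Int.cast_natCast]
  exact forall_congr' fun hpP ↦ isUnramifiedAt_iff_not_sq_dvd hp hpP

variable [Algebra.IsQuadraticExtension ℚ K] {P : Ideal (𝓞 K)} [P.IsPrime]

theorem absNorm_eq_sq_or_exists_span_eq_mul (hp : p.Prime) (hpP : (p : 𝓞 K) ∈ P) :
    (Ideal.absNorm P = p ^ 2 ∧ Ideal.span {(p : 𝓞 K)} = P) ∨
      (Ideal.absNorm P = p ∧ ∃ Q, Ideal.absNorm Q = p ∧ Ideal.span {(p : 𝓞 K)} = P * Q) := by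
  obtain ⟨Q, hQ⟩ := Ideal.dvd_span_singleton.mpr hpP
  have hN : Ideal.absNorm P * Ideal.absNorm Q = p ^ 2 := by
    rw [← map_mul, ← hQ, Ideal.absNorm_span_natCast, RingOfIntegers.rank,
      Algebra.IsQuadraticExtension.finrank_eq_two]
  have hP1 : Ideal.absNorm P ≠ 1 := mt Ideal.absNorm_eq_one_iff.mp ‹P.IsPrime›.ne_top
  by_cases hQ1 : Ideal.absNorm Q = 1
  · left
    rw [hQ1, mul_one] at hN
    rw [Ideal.absNorm_eq_one_iff] at hQ1
    exact ⟨hN, by rw [hQ, hQ1, Ideal.mul_top]⟩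
  · right
    obtain ⟨hNP, hNQ⟩ := (hp.mul_eq_prime_sq_iff hP1 hQ1).mp hN
    exact ⟨hNP, Q, hNQ, hQ⟩

theorem span_eq_sq_of_sq_dvd (hp : p.Prime) (hpP : (p : 𝓞 K) ∈ P)
    (hdvd : P ^ 2 ∣ Ideal.span {(p : 𝓞 K)}) :
    Ideal.absNorm P = p ∧ Ideal.span {(p : 𝓞 K)} = P ^ 2 := by
  have hP : Prime P := Ideal.prime_of_isPrime (ne_bot_of_natCast_mem hp.ne_zero hpP) ‹_›
  rcases absNorm_eq_sq_or_exists_span_eq_mul hp hpP with ⟨-, h⟩ | ⟨hNP, Q, hNQ, h⟩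
  · rw [h] at hdvd
    exact absurd (hP.irreducible.squarefree P (sq P ▸ hdvd)) hP.not_isUnit
  · rw [h, sq, mul_dvd_mul_iff_left hP.ne_zero] at hdvd
    rw [h, sq, ← associated_iff_eq.mp
      (hP.associated_of_dvd (prime_of_absNorm_eq_prime hp hNQ) hdvd)]
    exact ⟨hNP, rfl⟩

variable {b : ℕ} {χ : DirichletCharacter ℤ b}

theorem idealCount_prime_pow_of_dvd (hK : discr K = χ (-1) * b) (hp : p.Prime) (hpb : p ∣ b)
    (k : ℕ) : idealCount (𝓞 K) (p ^ k) = 1 := by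
  obtain ⟨P, hPprime, hpP, hdvd⟩ :=
    (prime_dvd_discr_iff_exists_sq_dvd_span hp).mp ((natCast_dvd_discr_iff hK).mpr hpb)
  obtain ⟨hNP, hspan⟩ := span_eq_sq_of_sq_dvd hp hpP hdvd
  simpa using idealCount_prime_pow_of_span_eq_pow hp (prime_of_absNorm_eq_prime hp hNP) hspan
    (hNP.trans (pow_one p).symm) k

variable [NeZero b]

theorem idealCount_prime_pow (hχ : χ.IsPrimitive) (hK : discr K = χ (-1) * b) (hp : p.Prime)
    (k : ℕ) : (idealCount (𝓞 K) (p ^ k) : ℤ) = ∑ i ∈ Finset.range (k + 1), χ p ^ i := by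
  by_cases hpb : p ∣ b
  · have hχp : χ p = 0 := χ.map_nonunit fun h ↦
      (Nat.Prime.coprime_iff_not_dvd hp).mp ((ZMod.isUnit_iff_coprime p b).mp h) hpb
    simp [idealCount_prime_pow_of_dvd hK hp hpb, hχp, Finset.sum_range_succ']
  obtain ⟨P, hPprime, hpP⟩ := exists_isPrime_natCast_mem (R := 𝓞 K) hp
  have hP : Prime P := Ideal.prime_of_isPrime (ne_bot_of_natCast_mem hp.ne_zero hpP) hPprime
  have hχp := absNorm_eq_iff_of_not_dvd hχ hK hp hpb hpP
  rcases absNorm_eq_sq_or_exists_span_eq_mul hp hpP with ⟨hNP, hspan⟩ | ⟨hNP, Q, hNQ, hspan⟩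
  · have hχp_ne_one : χ p ≠ 1 := fun h ↦ by
      simpa [hp.ne_zero, hp.ne_one, sq] using hNP.symm.trans (hχp.mpr h)
    have hχp_unit : IsUnit (χ p) :=
      ((ZMod.isUnit_iff_coprime p b).mpr ((Nat.Prime.coprime_iff_not_dvd hp).mpr hpb)).map χ
    rw [idealCount_prime_pow_of_span_eq_pow hp hP (hspan.trans (pow_one P).symm) hNP,
      (Int.isUnit_iff.mp hχp_unit).resolve_left hχp_ne_one, neg_one_geom_sum]
    simp [Nat.even_add_one, ← even_iff_two_dvd, -Nat.not_even_iff_odd]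
  · have hPQ : P ≠ Q := by
      rintro rfl
      exact hpb ((natCast_dvd_discr_iff hK).mp ((prime_dvd_discr_iff_exists_sq_dvd_span hp).mpr
        ⟨P, hPprime, hpP, by rw [hspan, sq]⟩))
    rw [idealCount_prime_pow_of_span_eq_mul hp hP (prime_of_absNorm_eq_prime hp hNQ) hPQ hNP hNQ
      hspan, hχp.mp hNP]
    simp

theorem idealCount_eq_zetaMul (hχ : χ.IsPrimitive) (hK : discr K = χ (-1) * b) :
    (idealCount (𝓞 K) : ArithmeticFunction ℂ) =
      DirichletCharacter.zetaMul (χ.ringHomComp (Int.castRingHom ℂ)) := by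
  refine (ArithmeticFunction.IsMultiplicative.eq_iff_eq_on_prime_powers _
    isMultiplicative_idealCount.natCast _
    (DirichletCharacter.isMultiplicative_zetaMul _)).mpr fun p k hp ↦ ?_
  rw [zetaMul_prime_pow _ hp, ArithmeticFunction.natCoe_apply, ← Int.cast_natCast (R := ℂ),
    idealCount_prime_pow hχ hK hp]
  simp

end Decomposition

section Analytic

open Filter Topology

theorem tendsto_ofReal_nhdsGT_one_nhdsNE :
    Tendsto (fun s : ℝ ↦ (s : ℂ)) (𝓝[>] 1) (𝓝[≠] 1) :=
  tendsto_nhdsWithin_iff.mpr ⟨(Complex.continuous_ofReal.tendsto' 1 1 Complex.ofReal_one).mono_left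
    nhdsWithin_le_nhds, eventually_mem_nhdsWithin.mono fun _ hs ↦
      Complex.ofReal_eq_one.not.mpr (Set.mem_Ioi.mp hs).ne'⟩

theorem LSeries_zetaMul_eq {b : ℕ} [NeZero b] (χ : DirichletCharacter ℂ b) {s : ℂ}
    (hs : 1 < s.re) : LSeries (fun n ↦ χ.zetaMul n) s = riemannZeta s * χ.LFunction s := by
  have hχ : LSeriesSummable (fun n ↦ toArithmeticFunction (fun n : ℕ ↦ χ (n : ZMod b)) n) s :=
    (LSeriesSummable_congr s χ.apply_eq_toArithmeticFunction_apply).mp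
      (χ.LSeriesSummable_of_one_lt_re hs)
  rw [χ.LFunction_eq_LSeries hs, LSeries_congr χ.apply_eq_toArithmeticFunction_apply,
    ← ArithmeticFunction.LSeries_zeta_eq_riemannZeta hs]
  exact ArithmeticFunction.LSeries_mul' (ArithmeticFunction.LSeriesSummable_zeta_iff.mpr hs) hχ

theorem dedekindZeta_eq_LSeries_idealCount (K : Type*) [Field K] [NumberField K] (s : ℂ) :
    dedekindZeta K s = LSeries (fun n ↦ (idealCount (𝓞 K) : ArithmeticFunction ℂ) n) s :=
  LSeries_congr (fun hn ↦ by simp [idealCount_apply hn]) s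

theorem LFunction_one_eq_dedekindZeta_residue_of_idealCount_eq {K : Type*} [Field K]
    [NumberField K] {b : ℕ} [NeZero b] {χ : DirichletCharacter ℂ b} (hχ : χ ≠ 1)
    (h : (idealCount (𝓞 K) : ArithmeticFunction ℂ) = χ.zetaMul) :
    χ.LFunction 1 = dedekindZeta_residue K := by
  have hζ := riemannZeta_residue_one.comp tendsto_ofReal_nhdsGT_one_nhdsNE
  have hL : Tendsto (fun s : ℝ ↦ χ.LFunction s) (𝓝[>] 1) (𝓝 (χ.LFunction 1)) :=
    ((DirichletCharacter.differentiable_LFunction hχ).continuous.tendsto 1).comp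
      (tendsto_ofReal_nhdsGT_one_nhdsNE.mono_right nhdsWithin_le_nhds)
  refine tendsto_nhds_unique (one_mul (χ.LFunction 1) ▸ hζ.mul hL)
    ((tendsto_sub_one_mul_dedekindZeta_nhdsGT K).congr' ?_)
  filter_upwards [self_mem_nhdsWithin] with s hs
  rw [dedekindZeta_eq_LSeries_idealCount, h, LSeries_zetaMul_eq χ (by simpa using hs), ← mul_assoc,
    Function.comp_apply]

theorem LFunction_one_eq_dedekindZeta_residue {K : Type*} [Field K] [NumberField K]
    [Algebra.IsQuadraticExtension ℚ K] {b : ℕ} (hb : 1 < b) [NeZero b]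
    {χ : DirichletCharacter ℂ b} (hχ : χ.IsPrimitive) (hreal : ∀ a, (χ a).im = 0)
    (hK : (discr K : ℂ) = χ (-1) * b) : χ.LFunction 1 = dedekindZeta_residue K := by
  obtain ⟨χ, rfl⟩ :=
    exists_intCast_ringHomComp_eq (R := ℂ) (isQuadratic_of_forall_im_eq_zero hreal)
  have hχ_ne_one : χ.ringHomComp (Int.castRingHom ℂ) ≠ 1 := by
    intro h
    rw [h] at hχ
    exact hb.ne (DirichletCharacter.conductor_one.symm.trans hχ)
  refine LFunction_one_eq_dedekindZeta_residue_of_idealCount_eq hχ_ne_one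
    (idealCount_eq_zetaMul ((isPrimitive_ringHomComp_iff Int.cast_injective).mp hχ) ?_)
  rw [MulChar.ringHomComp_apply, eq_intCast] at hK
  exact_mod_cast hK

end Analytic

section Residue

open InfinitePlace Units

variable {K : Type*} [Field K] [NumberField K]

theorem torsionOrder_eq_two_of_nrRealPlaces_ne_zero (h : nrRealPlaces K ≠ 0) :
    torsionOrder K = 2 := by
  refine le_antisymm (not_lt.mp fun hlt ↦ h ?_)
    (Nat.le_of_dvd (torsionOrder_pos K) (even_torsionOrder K).two_dvd)
  obtain ⟨ζ, hζ⟩ : ∃ ζ : torsion K, orderOf ζ = torsionOrder K := IsCyclic.exists_ofOrder_eq_natCard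
  rw [← IsPrimitiveRoot.iff_orderOf, ← IsPrimitiveRoot.coe_submonoidClass_iff,
    ← IsPrimitiveRoot.coe_units_iff] at hζ
  exact (hζ.map_of_injective RingOfIntegers.coe_injective).nrRealPlaces_eq_zero_of_two_lt hlt

theorem regulator_eq_one_of_rank_eq_zero (h : rank K = 0) : regulator K = 1 := by
  classical
  have hcard := Fintype.card_congr (equivFinRank K)
  rw [Fintype.card_fin, h] at hcard
  rw [regulator_eq_det', Matrix.det_eq_one_of_card_eq_zero hcard.symm, abs_one]

variable [Algebra.IsQuadraticExtension ℚ K]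

variable (K) in
theorem nrRealPlaces_add_two_mul_nrComplexPlaces_eq_two :
    nrRealPlaces K + 2 * nrComplexPlaces K = 2 := by
  rw [card_add_two_mul_card_eq_rank, Algebra.IsQuadraticExtension.finrank_eq_two]

theorem isTotallyComplex_of_discr_neg (h : discr K < 0) : IsTotallyComplex K := by
  have hsign := sign_discr K
  have hrank := nrRealPlaces_add_two_mul_nrComplexPlaces_eq_two K
  refine nrRealPlaces_eq_zero_iff.mp ?_
  have : nrComplexPlaces K ≠ 0 := fun h0 ↦ by simp [h0, Int.sign_eq_neg_one_of_neg h] at hsign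
  omega

theorem isTotallyReal_of_discr_pos (h : 0 < discr K) : IsTotallyReal K := by
  have hsign := sign_discr K
  have hrank := nrRealPlaces_add_two_mul_nrComplexPlaces_eq_two K
  refine nrComplexPlaces_eq_zero_iff.mp ?_
  have : nrComplexPlaces K ≠ 1 := fun h1 ↦ by simp [h1, Int.sign_eq_one_of_pos h] at hsign
  omega

theorem dedekindZeta_residue_of_discr_neg (h : discr K < 0) :
    dedekindZeta_residue K =
      2 * Real.pi * classNumber K / (torsionOrder K * Real.sqrt |(discr K : ℝ)|) := by
  have := isTotallyComplex_of_discr_neg h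
  have hcomplex : nrComplexPlaces K = 1 := by
    simpa using nrRealPlaces_add_two_mul_nrComplexPlaces_eq_two K
  have hrank : rank K = 0 := by
    simp [rank, card_eq_nrRealPlaces_add_nrComplexPlaces, hcomplex]
  simp [dedekindZeta_residue_def, hcomplex, regulator_eq_one_of_rank_eq_zero hrank]

theorem dedekindZeta_residue_of_discr_pos (h : 0 < discr K) :
    dedekindZeta_residue K = 2 * regulator K * classNumber K / Real.sqrt (discr K) := by
  have := isTotallyReal_of_discr_pos h
  have hreal : nrRealPlaces K = 2 := by
    simpa using nrRealPlaces_add_two_mul_nrComplexPlaces_eq_two K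
  rw [dedekindZeta_residue_def, hreal, IsTotallyReal.nrComplexPlaces_eq_zero,
    torsionOrder_eq_two_of_nrRealPlaces_ne_zero (by rw [hreal]; exact two_ne_zero),
    abs_of_pos (Int.cast_pos.mpr h)]
  push_cast
  ring

end Residue

/-- Theorem 8.4 (Dirichlet's class-number formula): let `χ` be a real primitive Dirichlet
character of modulus `b > 1` and set `d = χ(-1)·b`. Let `K` be a quadratic number field of
discriminant `d`, with class number `h`, regulator `R`, and `w` roots of unity. If `d < 0`
then `L(1, χ) = 2π h / (w √|d|)`; if `d > 0` then `L(1, χ) = 2 R h / √d`. -/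
theorem dirichlet_class_number_formula (b : ℕ) (hb : 1 < b)
    (χ : DirichletCharacter ℂ b) (hprim : χ.IsPrimitive)
    (hreal : ∀ a : ZMod b, (χ a).im = 0)
    (d : ℤ) (hd : (d : ℂ) = χ (-1) * (b : ℂ))
    (K : Type) [Field K] [NumberField K]
    (hK2 : Module.finrank ℚ K = 2) (hKd : NumberField.discr K = d) :
    (d < 0 →
      @DirichletCharacter.LFunction b ⟨by omega⟩ χ 1
        = ((2 * Real.pi * (NumberField.classNumber K : ℝ) /
            ((NumberField.Units.torsionOrder K : ℕ) * Real.sqrt |(d : ℝ)|) : ℝ) : ℂ)) ∧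
    (0 < d →
      @DirichletCharacter.LFunction b ⟨by omega⟩ χ 1
        = ((2 * NumberField.Units.regulator K * (NumberField.classNumber K : ℝ) /
            Real.sqrt (d : ℝ) : ℝ) : ℂ)) := by
  have : NeZero b := ⟨by omega⟩
  have : Algebra.IsQuadraticExtension ℚ K := ⟨hK2⟩
  subst hKd
  have hL := LFunction_one_eq_dedekindZeta_residue hb hprim hreal hd
  exact ⟨fun hneg ↦ by rw [hL, dedekindZeta_residue_of_discr_neg hneg],
    fun hpos ↦ by rw [hL, dedekindZeta_residue_of_discr_pos hpos]⟩
end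

section
/- Let p be an odd prime, let d ≥ 1 be an integer, and let f be a monic polynomial over 𝔽_p = ℤ/pℤ of degree d which is a product of d distinct monic linear factors (equivalently, f has d distinct roots in 𝔽_p). Then |∑_{x ∈ 𝔽_p} η_p(f(x))| < d·√p. -/
/-!
For monic `f` of odd degree `2 g + 1` this is the Stöhr–Voloch method on the curve `y ^ 2 = f x` of
genus `g`. Take functions `u 0, …, u N` whose only pole is at infinity, with the first `N + 1`
possible pole orders, and let `h` be the determinant with rows `u ^ p, u, D u, …, D^(N-1) u`, where
`D` is the derivation `2 y d/dx`. Since `u ^ p = u` at a rational point, `h` vanishes there to order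
`N`. The leading coefficient of `h` at infinity is a Vandermonde determinant in the pole orders, so
`h ≠ 0` with a pole of known order. Comparing the degree of the norm of `h` with its number of zeros
bounds `∑ η (f x) + p`, the number of affine rational points, from above; `N ≈ √p` is optimal.

Twisting by a nonsquare `c`, that is, multiplying the roots of `f` by `c`, changes the sign of the
sum and gives the lower bound. For even degree, moving a root to infinity lowers the degree by one
and changes the sum by at most one.
-/

open Polynomial

namespace WeilSum

section Derivation

variable {R A B : Type*} [CommSemiring R] [CommRing A] [Algebra R A] [CommRing B]

/-- Vanishing to order at least `m` of `h : A` at the point `ev`, as measured by the successive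
derivatives along `D`. This agrees with the usual order of vanishing when `D` does not vanish at the
point and `m` does not exceed the characteristic, see `le_of_vanishesToOrder_pow_mul`. -/
def VanishesToOrder (D : Derivation R A A) (ev : A →+* B) (m : ℕ) (h : A) : Prop :=
  ∀ j < m, ev (D^[j] h) = 0

variable {D : Derivation R A A} {ev : A →+* B} {m : ℕ} {h k : A}

lemma vanishesToOrder_zero : VanishesToOrder D ev 0 h :=
  fun _ hj => absurd hj (Nat.not_lt_zero _)

lemma vanishesToOrder_succ :
    VanishesToOrder D ev (m + 1) h ↔ ev h = 0 ∧ VanishesToOrder D ev m (D h) := by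
  refine ⟨fun H => ⟨H 0 m.succ_pos, fun j hj => H (j + 1) (by omega)⟩, ?_⟩
  rintro ⟨h0, H⟩ (_ | j) hj
  · exact h0
  · exact H j (by omega)

namespace VanishesToOrder

lemma eval_eq_zero (H : VanishesToOrder D ev m h) (hm : 0 < m) : ev h = 0 :=
  H 0 hm

lemma derivation (H : VanishesToOrder D ev m h) : VanishesToOrder D ev (m - 1) (D h) :=
  fun j hj => H (j + 1) (by omega)

lemma add (hh : VanishesToOrder D ev m h) (hk : VanishesToOrder D ev m k) :
    VanishesToOrder D ev m (h + k) := fun j hj => by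
  rw [iterate_map_add, map_add, hh j hj, hk j hj, add_zero]

lemma sum {ι : Type*} {s : Finset ι} {g : ι → A} (H : ∀ i ∈ s, VanishesToOrder D ev m (g i)) :
    VanishesToOrder D ev m (∑ i ∈ s, g i) :=
  Finset.sum_induction g _ (fun _ _ => add) (fun j _ => by rw [iterate_map_zero, map_zero]) H

lemma mul {a b : ℕ} (hm : m ≤ a + b) (hh : VanishesToOrder D ev a h)
    (hk : VanishesToOrder D ev b k) : VanishesToOrder D ev m (h * k) := by
  induction m generalizing a b h k with
  | zero => exact vanishesToOrder_zero
  | succ m ih =>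
    refine vanishesToOrder_succ.2 ⟨?_, ?_⟩
    · rcases Nat.eq_zero_or_pos a with rfl | ha
      · rw [map_mul, hk.eval_eq_zero (by omega), mul_zero]
      · rw [map_mul, hh.eval_eq_zero ha, zero_mul]
    · rw [D.leibniz]
      exact (ih (by omega) hh hk.derivation).add (ih (by omega) hk hh.derivation)

end VanishesToOrder

section Uniformizer

variable [NoZeroDivisors B] {p : ℕ} [CharP B p] {t u : A}

lemma eval_iterate_derivation_pow_mul_ne_zero (ht : ev t = 0) (hDt : ev (D t) ≠ 0)
    (hu : ev u ≠ 0) (hm : m < p) : ev (D^[m] (t ^ m * u)) ≠ 0 := by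
  induction m generalizing u with
  | zero => simpa using hu
  | succ m ih =>
    have hD : D (t ^ (m + 1) * u) = t ^ m * (((m + 1 : ℕ) : A) * D t * u + t * D u) := by
      simp only [D.leibniz, D.leibniz_pow, smul_eq_mul, nsmul_eq_mul, Nat.add_sub_cancel]
      ring
    have hm0 : ((m + 1 : ℕ) : B) ≠ 0 := fun h0 =>
      absurd (Nat.le_of_dvd m.succ_pos ((CharP.cast_eq_zero_iff B p _).1 h0)) (by omega)
    rw [Function.iterate_succ_apply, hD]
    refine ih ?_ (by omega)
    simpa only [map_add, map_mul, ht, zero_mul, add_zero, map_natCast] using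
      mul_ne_zero (mul_ne_zero hm0 hDt) hu

lemma le_of_vanishesToOrder_pow_mul {μ : ℕ} (hm : m ≤ p) (ht : ev t = 0) (hDt : ev (D t) ≠ 0)
    (hu : ev u ≠ 0) (H : VanishesToOrder D ev m (t ^ μ * u)) : m ≤ μ := by
  by_contra! hlt
  exact eval_iterate_derivation_pow_mul_ne_zero ht hDt hu (hlt.trans_le hm) (H μ hlt)

end Uniformizer

section Determinant

variable {ι : Type*} [Fintype ι] [DecidableEq ι]

lemma derivation_prod (D : Derivation R A A) (g : ι → A) :
    D (∏ i, g i) = ∑ i, ∏ j, Function.update g i (D (g i)) j := by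
  suffices H : ∀ s : Finset ι,
      D (∏ i ∈ s, g i) = ∑ i ∈ s, ∏ j ∈ s, Function.update g i (D (g i)) j from H _
  intro s
  induction s using Finset.induction_on with
  | empty => simp
  | insert a s ha ih =>
    have hne : ∀ i ∈ s, Function.update g i (D (g i)) a = g a := fun i hi =>
      Function.update_of_ne (by rintro rfl; exact ha hi) _ _
    simp only [Finset.prod_insert ha, Finset.sum_insert ha, Finset.prod_update_of_notMem ha,
      Function.update_self, D.leibniz, ih, smul_eq_mul, Finset.mul_sum]
    rw [add_comm, mul_comm]
    exact congrArg _ (Finset.sum_congr rfl fun i hi => by rw [hne i hi])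

lemma derivation_det (D : Derivation R A A) (M : Matrix ι ι A) :
    D M.det = ∑ i, (M.updateRow i fun j => D (M i j)).det := by
  simp_rw [Matrix.det_apply, map_sum]
  rw [Finset.sum_comm]
  refine Finset.sum_congr rfl fun σ _ => ?_
  simp only [Units.smul_def, map_zsmul, derivation_prod, Finset.smul_sum]
  refine Eq.trans (Finset.sum_congr rfl fun i _ => ?_) (Equiv.sum_comp σ _)
  refine congrArg _ (Finset.prod_congr rfl fun j _ => ?_)
  obtain rfl | hij := eq_or_ne j i
  · simp
  · simp [hij]

end Determinant

lemma sum_succ_le_sum_of_injective {N : ℕ} {k : Fin N → ℕ} (hk : Function.Injective k)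
    (hpos : ∀ i, 0 < k i) : ∑ i : Fin N, ((i : ℕ) + 1) ≤ ∑ i, k i := by
  have hcast : Function.Injective fun i => (k i : ℤ) := Nat.cast_injective.comp hk
  have H := Finset.sum_range_le_sum (s := Finset.univ.image fun i => (k i : ℤ)) (c := 1)
    (by simpa [Nat.one_le_iff_ne_zero, Nat.pos_iff_ne_zero] using hpos)
  rw [Finset.card_image_of_injective _ hcast, Finset.card_univ, Fintype.card_fin,
    Finset.sum_image hcast.injOn] at H
  rw [Fin.sum_univ_eq_sum_range (· + 1)]
  simp only [add_comm (1 : ℤ)] at H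
  exact_mod_cast H

section FrobeniusWronskian

variable {N : ℕ}

/-- The Stöhr–Voloch variant of the Wronskian matrix of `u 0, …, u N`: the rows are the
derivatives of `u` of the prescribed orders `k`, preceded by the row of `p`-th powers. -/
def frobeniusWronskian (D : Derivation R A A) (p : ℕ) (u : Fin (N + 1) → A) (k : Fin N → ℕ) :
    Matrix (Fin (N + 1)) (Fin (N + 1)) A :=
  Matrix.of (Fin.cons (fun j => u j ^ p) fun i j => D^[k i] (u j))

variable {p : ℕ} {u : Fin (N + 1) → A}

lemma derivation_det_frobeniusWronskian [CharP A p] (k : Fin N → ℕ) :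
    D (frobeniusWronskian D p u k).det =
      ∑ i, (frobeniusWronskian D p u (Function.update k i (k i + 1))).det := by
  have hfrob : ((frobeniusWronskian D p u k).updateRow 0 fun j =>
      D (frobeniusWronskian D p u k 0 j)).det = 0 :=
    Matrix.det_eq_zero_of_row_eq_zero 0 fun j => by simp [frobeniusWronskian, D.leibniz_pow]
  rw [derivation_det, Fin.sum_univ_succ, hfrob, zero_add]
  refine Finset.sum_congr rfl fun i _ => congrArg Matrix.det ?_
  ext a b
  refine Fin.cases ?_ (fun a => ?_) a
  · simp [frobeniusWronskian, Matrix.updateRow_apply, (Fin.succ_ne_zero i).symm]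
  · obtain rfl | hai := eq_or_ne a i
    · simp [frobeniusWronskian, Function.iterate_succ_apply']
    · simp [frobeniusWronskian, Matrix.updateRow_apply, hai]

lemma eval_det_frobeniusWronskian_eq_zero (hev : ∀ a, ev a ^ p = ev a) {k : Fin N → ℕ}
    (hk : ∑ i, k i < ∑ i : Fin N, ((i : ℕ) + 1)) : ev (frobeniusWronskian D p u k).det = 0 := by
  rw [RingHom.map_det]
  by_cases hinj : Function.Injective k
  · obtain ⟨i, hi⟩ : ∃ i, k i = 0 := by
      by_contra! hc
      exact hk.not_ge (sum_succ_le_sum_of_injective hinj fun i => Nat.pos_of_ne_zero (hc i))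
    refine Matrix.det_zero_of_row_eq (Fin.succ_ne_zero i).symm ?_
    ext j
    simp [frobeniusWronskian, hi, hev]
  · obtain ⟨a, b, hab, hne⟩ := Function.not_injective_iff.1 hinj
    refine Matrix.det_zero_of_row_eq ((Fin.succ_injective N).ne hne) ?_
    ext j
    simp [frobeniusWronskian, hab]

lemma vanishesToOrder_det_frobeniusWronskian [CharP A p] (hev : ∀ a, ev a ^ p = ev a)
    {k : Fin N → ℕ} (hk : ∑ i, k i + m ≤ ∑ i : Fin N, ((i : ℕ) + 1)) :
    VanishesToOrder D ev m (frobeniusWronskian D p u k).det := by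
  induction m generalizing k with
  | zero => exact vanishesToOrder_zero
  | succ m ih =>
    refine vanishesToOrder_succ.2 ⟨eval_det_frobeniusWronskian_eq_zero hev (by omega), ?_⟩
    rw [derivation_det_frobeniusWronskian]
    refine .sum fun i _ => ih ?_
    have hsum : ∑ j, Function.update k i (k i + 1) j = ∑ j, k j + 1 := by
      rw [Finset.sum_update_of_mem (Finset.mem_univ i), ← Finset.erase_eq,
        ← Finset.add_sum_erase _ k (Finset.mem_univ i)]
      ring
    omega

end FrobeniusWronskian

end Derivation

section Curve

variable {R : Type*} [CommRing R] {f : R[X]}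

/-- The coordinate ring of the affine curve `y ^ 2 = f x`: the element `⟨a, b⟩` is the function
`a x + b x * y`, and `star` is the hyperelliptic involution `y ↦ -y`. -/
abbrev HyperellipticRing (f : R[X]) : Type _ := QuadraticAlgebra R[X] f 0

instance {p : ℕ} [CharP R p] : CharP (HyperellipticRing f) p :=
  charP_of_injective_algebraMap QuadraticAlgebra.algebraMap_injective p

/-- The derivation `2 y d/dx` of the coordinate ring, which sends `x` to `2 y` and `y` to `f' x`; it
vanishes at no smooth point of the curve. -/
noncomputable def curveDerivation (f : R[X]) :
    Derivation R (HyperellipticRing f) (HyperellipticRing f) :=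
  Derivation.mk'
    { toFun h := ⟨2 * derivative h.im * f + h.im * derivative f, 2 * derivative h.re⟩
      map_add' a b := by ext1 <;> simp <;> ring
      map_smul' c a := by ext1 <;> simp [smul_eq_C_mul] <;> ring }
    fun a b => by ext1 <;> simp <;> ring

lemma curveDerivation_apply (h : HyperellipticRing f) : curveDerivation f h =
    ⟨2 * derivative h.im * f + h.im * derivative f, 2 * derivative h.re⟩ := rfl

/-- Evaluation of functions at the point `(x, y)` of the curve `y ^ 2 = f x`. -/
noncomputable def pointEval (f : R[X]) (x y : R) (hy : y ^ 2 = f.eval x) :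
    HyperellipticRing f →+* R where
  toFun h := h.re.eval x + h.im.eval x * y
  map_one' := by simp [QuadraticAlgebra.re_one, QuadraticAlgebra.im_one]
  map_zero' := by simp
  map_add' a b := by simp; ring
  map_mul' a b := by simp [← hy]; ring

lemma pointEval_apply {x y : R} (hy : y ^ 2 = f.eval x) (h : HyperellipticRing f) :
    pointEval f x y hy h = h.re.eval x + h.im.eval x * y := rfl

lemma pointEval_algebraMap {x y : R} (hy : y ^ 2 = f.eval x) (a : R[X]) :
    pointEval f x y hy (algebraMap R[X] (HyperellipticRing f) a) = a.eval x := by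
  simp [pointEval_apply]

lemma iterate_curveDerivation_star (j : ℕ) (h : HyperellipticRing f) :
    (curveDerivation f)^[j] (star h) = (-1) ^ j * star ((curveDerivation f)^[j] h) := by
  induction j generalizing h with
  | zero => simp
  | succ j ih =>
    have hD : curveDerivation f (star h) = star (-curveDerivation f h) := by
      ext1
      · simp [curveDerivation_apply]; ring
      · simp [curveDerivation_apply]
    rw [Function.iterate_succ_apply, hD, ih, iterate_map_neg, star_neg, pow_succ,
      Function.iterate_succ_apply]
    ring

lemma VanishesToOrder.star {m : ℕ} {x y : R} {hy : y ^ 2 = f.eval x} {hy' : (-y) ^ 2 = f.eval x}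
    {h : HyperellipticRing f}
    (H : VanishesToOrder (curveDerivation f) (pointEval f x (-y) hy') m h) :
    VanishesToOrder (curveDerivation f) (pointEval f x y hy) m (star h) := fun j hj => by
  have hstar : ∀ k : HyperellipticRing f,
      pointEval f x y hy (Star.star k) = pointEval f x (-y) hy' k := fun k => by
    simp [pointEval_apply]
  rw [iterate_curveDerivation_star, map_mul, hstar, H j hj, mul_zero]

lemma vanishesToOrder_norm {m : ℕ} {x y : R} {hy : y ^ 2 = f.eval x}
    {hy' : (-y) ^ 2 = f.eval x} {h : HyperellipticRing f}
    (H : VanishesToOrder (curveDerivation f) (pointEval f x y hy) m h)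
    (H' : VanishesToOrder (curveDerivation f) (pointEval f x (-y) hy') m h) :
    VanishesToOrder (curveDerivation f) (pointEval f x y hy) (2 * m)
      (algebraMap R[X] (HyperellipticRing f) h.norm) := by
  rw [QuadraticAlgebra.algebraMap_norm_eq_mul_star]
  exact H.mul (two_mul m).le H'.star

section RootMultiplicity

variable [IsDomain R] {p : ℕ} [CharP R p] {m : ℕ} {x y : R} {hy : y ^ 2 = f.eval x} {q : R[X]}

lemma le_rootMultiplicity_of_vanishesToOrder (hm : m ≤ p) (hy0 : 2 * y ≠ 0) (hq : q ≠ 0)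
    (H : VanishesToOrder (curveDerivation f) (pointEval f x y hy) m
      (algebraMap R[X] (HyperellipticRing f) q)) : m ≤ q.rootMultiplicity x := by
  obtain ⟨r, hr, hrx⟩ := exists_eq_pow_rootMultiplicity_mul_and_not_dvd q hq x
  rw [hr, map_mul, map_pow] at H
  refine le_of_vanishesToOrder_pow_mul hm ?_ ?_ ?_ H
  · simp [pointEval_algebraMap]
  · simpa [curveDerivation_apply, pointEval_apply] using hy0
  · rwa [pointEval_algebraMap, Ne, ← IsRoot.def, ← dvd_iff_isRoot]

-- At a branch point `y`, not `X - C x`, is a uniformizer, and `X - C x` is `y ^ 2` up to a unit.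
lemma le_two_mul_rootMultiplicity_of_vanishesToOrder (hm : m ≤ p) (hy0 : y = 0)
    (hfx : (derivative f).eval x ≠ 0) (hq : q ≠ 0)
    (H : VanishesToOrder (curveDerivation f) (pointEval f x y hy) m
      (algebraMap R[X] (HyperellipticRing f) q)) : m ≤ 2 * q.rootMultiplicity x := by
  obtain ⟨g, hg⟩ : X - C x ∣ f := dvd_iff_isRoot.2 (by rw [IsRoot.def, ← hy, hy0]; ring)
  obtain ⟨r, hr, hrx⟩ := exists_eq_pow_rootMultiplicity_mul_and_not_dvd q hq x
  set μ := q.rootMultiplicity x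
  let φ := algebraMap R[X] (HyperellipticRing f)
  have hyf : (QuadraticAlgebra.omega : HyperellipticRing f) ^ 2 = φ f := by
    rw [sq, QuadraticAlgebra.omega_mul_omega_eq_mk]
    rfl
  have hmul : φ (g ^ μ) * φ q = QuadraticAlgebra.omega ^ (2 * μ) * φ r := by
    have hfr : g ^ μ * q = f ^ μ * r := by
      calc g ^ μ * q = ((X - C x) * g) ^ μ * r := by rw [hr, mul_pow]; ring
        _ = f ^ μ * r := by rw [← hg]
    rw [pow_mul, hyf, ← map_pow, ← map_mul, ← map_mul, hfr]
  have H' := vanishesToOrder_zero.mul (Nat.zero_add m).ge H (h := φ (g ^ μ))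
  rw [hmul] at H'
  refine le_of_vanishesToOrder_pow_mul hm ?_ ?_ ?_ H'
  · simp [pointEval_apply, hy0]
  · simpa [curveDerivation_apply, pointEval_apply] using hfx
  · rwa [pointEval_algebraMap, Ne, ← IsRoot.def, ← dvd_iff_isRoot]

end RootMultiplicity

end Curve

section Leading

variable {R : Type*} [CommRing R] {f : R[X]}

/-- The polynomial in `t` obtained from a function on the curve by the substitution `x = t ^ 2`,
`y = t ^ n`, where `n` is the degree of `f`. It is multiplicative up to lower order terms, and for
odd `n` its degree is the order of the pole at infinity. -/
noncomputable def symbol (h : HyperellipticRing f) : R[X] :=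
  expand R 2 h.re + expand R 2 h.im * X ^ f.natDegree

lemma symbol_add (h k : HyperellipticRing f) : symbol (h + k) = symbol h + symbol k := by
  simp only [symbol, QuadraticAlgebra.re_add, QuadraticAlgebra.im_add, map_add]
  ring

lemma symbol_algebraMap (q : R[X]) :
    symbol (algebraMap R[X] (HyperellipticRing f) q) = expand R 2 q := by
  simp [symbol]

lemma symbol_star (hodd : Odd f.natDegree) (h : HyperellipticRing f) :
    symbol (star h) = (symbol h).comp (C (-1) * X) := by
  have hexpand : ∀ q : R[X], (expand R 2 q).comp (C (-1) * X) = expand R 2 q := fun q => by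
    rw [expand_eq_comp_X_pow, comp_assoc]
    simp
  rw [symbol, symbol, add_comp, mul_comp, hexpand, hexpand, X_pow_comp, mul_pow, ← C_pow,
    hodd.neg_one_pow]
  simp

lemma eraseLead_add_X_pow (hf : f.Monic) : f.eraseLead + X ^ f.natDegree = f := by
  simpa [hf.leadingCoeff] using f.eraseLead_add_C_mul_X_pow

lemma symbol_mul (hf : f.Monic) (h k : HyperellipticRing f) :
    symbol (h * k) = symbol h * symbol k + expand R 2 (f.eraseLead * h.im * k.im) := by
  have hexpand := congrArg (expand R 2) (eraseLead_add_X_pow hf)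
  rw [map_add, map_pow, expand_X] at hexpand
  simp only [symbol, QuadraticAlgebra.re_mul, QuadraticAlgebra.im_mul, map_add, map_mul, zero_mul,
    add_zero, ← hexpand]
  ring

lemma symbol_curveDerivation (hf : f.Monic) (hdeg : 0 < f.natDegree) (h : HyperellipticRing f) :
    symbol (curveDerivation f h) = X ^ (f.natDegree - 1) * derivative (symbol h) +
      expand R 2 (2 * derivative h.im * f.eraseLead + h.im * derivative f.eraseLead) := by
  obtain ⟨n, hn⟩ := Nat.exists_eq_succ_of_ne_zero hdeg.ne'
  have he : f.eraseLead = f - X ^ (n + 1) := by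
    rw [← Nat.succ_eq_add_one, ← hn, eq_sub_iff_add_eq, eraseLead_add_X_pow hf]
  simp only [symbol, curveDerivation_apply, he, hn, Nat.succ_eq_add_one, Nat.add_sub_cancel,
    derivative_mul, derivative_expand, derivative_X_pow, map_add, map_mul, map_sub, map_pow,
    expand_X, map_ofNat, expand_C]
  push_cast
  ring

lemma natDegree_X_pow_succ_mul_derivative_le {q : R[X]} {w : ℕ} (hq : q.natDegree ≤ w) (m : ℕ) :
    (X ^ (m + 1) * derivative q).natDegree ≤ w + m := by
  rcases Nat.eq_zero_or_pos w with rfl | hw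
  · simp [derivative_of_natDegree_zero (Nat.le_zero.1 hq)]
  · have hle := natDegree_mul_le_of_le (natDegree_X_pow_le (R := R) (m + 1))
      (natDegree_derivative_le q)
    omega

lemma coeff_X_pow_succ_mul_derivative (q : R[X]) (w m : ℕ) :
    (X ^ (m + 1) * derivative q).coeff (w + m) = q.coeff w * w := by
  rcases w with _ | w
  · simp [coeff_X_pow_mul']
  · rw [add_right_comm, add_assoc, coeff_X_pow_mul, coeff_derivative]
    push_cast
    rfl

lemma natDegree_two_mul_derivative_mul_add_le {n : ℕ} (hn : 2 ≤ n) (q : R[X]) {e : R[X]}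
    (he : e.natDegree ≤ n - 1) :
    (2 * derivative q * e + q * derivative e).natDegree ≤ q.natDegree + (n - 2) := by
  have hq := natDegree_derivative_le q
  have he' := natDegree_derivative_le e
  refine natDegree_add_le_of_degree_le ?_ (natDegree_mul_le_of_le le_rfl (by omega))
  rcases Nat.eq_zero_or_pos q.natDegree with h0 | h0
  · simp [derivative_of_natDegree_zero h0]
  · have h2 : (2 * derivative q).natDegree ≤ q.natDegree - 1 := by
      rw [← map_ofNat C 2]
      exact (natDegree_C_mul_le _ _).trans hq
    exact (natDegree_mul_le_of_le h2 he).trans (by omega)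

/-- The polynomial `X (X + m) ⋯ (X + (k - 1) m)`, whose value at `w` is the factor that the leading
coefficient of a function with a pole of order `w` at infinity acquires on applying
`curveDerivation` `k` times, for `m = f.natDegree - 2`. -/
noncomputable def derivationFactor (R : Type*) [CommRing R] (m k : ℕ) : R[X] :=
  ∏ i ∈ Finset.range k, (X + C ((i * m : ℕ) : R))

lemma monic_derivationFactor (m k : ℕ) : (derivationFactor R m k).Monic :=
  monic_prod_of_monic _ _ fun _ _ => monic_X_add_C _

lemma natDegree_derivationFactor [Nontrivial R] (m k : ℕ) :
    (derivationFactor R m k).natDegree = k := by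
  rw [derivationFactor, natDegree_prod_of_monic _ _ fun _ _ => monic_X_add_C _]
  simp only [natDegree_X_add_C, Finset.sum_const, Finset.card_range, smul_eq_mul, mul_one]

/-- The function `h` has leading term `c * t ^ w` at infinity, where `t` is as in `symbol`. The
coefficient `c` is allowed to vanish, so this means a pole of order at most `w`. -/
def HasLeadingTerm (h : HyperellipticRing f) (w : ℕ) (c : R) : Prop :=
  (symbol h).natDegree ≤ w ∧ (symbol h).coeff w = c

lemma hasLeadingTerm_zero {w : ℕ} : HasLeadingTerm (0 : HyperellipticRing f) w 0 := by
  simp [HasLeadingTerm, symbol]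

lemma hasLeadingTerm_intCast (m : ℤ) : HasLeadingTerm (m : HyperellipticRing f) 0 m := by
  rw [HasLeadingTerm, ← map_intCast (algebraMap R[X] (HyperellipticRing f)), symbol_algebraMap,
    map_intCast]
  simp

lemma exists_hasLeadingTerm_one (hodd : Odd f.natDegree) {w : ℕ}
    (hw : Even w ∨ f.natDegree ≤ w) : ∃ h : HyperellipticRing f, HasLeadingTerm h w 1 := by
  rcases Nat.even_or_odd w with ⟨k, rfl⟩ | hw'
  · refine ⟨⟨X ^ k, 0⟩, ?_⟩
    simp only [HasLeadingTerm, symbol, map_pow, expand_X, map_zero, zero_mul, add_zero, ← pow_mul,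
      ← two_mul]
    exact ⟨natDegree_X_pow_le _, coeff_X_pow_self _⟩
  · obtain ⟨k, hk⟩ : ∃ k, w = 2 * k + f.natDegree := by
      have hle := hw.resolve_left (Nat.not_even_iff_odd.2 hw')
      obtain ⟨k, hk⟩ := Nat.Odd.sub_odd hw' hodd
      exact ⟨k, by omega⟩
    refine ⟨⟨0, X ^ k⟩, ?_⟩
    simp only [HasLeadingTerm, symbol, map_pow, expand_X, map_zero, zero_add, ← pow_mul, ← pow_add,
      ← hk]
    exact ⟨natDegree_X_pow_le _, coeff_X_pow_self _⟩

lemma hasLeadingTerm_of_symbol_eq {h : HyperellipticRing f} {w : ℕ} {c : R} {q r : R[X]}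
    (hsymbol : symbol h = q + expand R 2 r) (hq : q.natDegree ≤ w) (hc : q.coeff w = c)
    (hr : r ≠ 0 → 2 * r.natDegree < w) : HasLeadingTerm h w c := by
  rw [HasLeadingTerm, hsymbol]
  rcases eq_or_ne r 0 with rfl | hr0
  · simpa using ⟨hq, hc⟩
  · have hlt : (expand R 2 r).natDegree < w := by
      rw [natDegree_expand, mul_comm]
      exact hr hr0
    refine ⟨natDegree_add_le_of_degree_le hq hlt.le, ?_⟩
    rw [coeff_add, hc, coeff_eq_zero_of_natDegree_lt hlt, add_zero]

namespace HasLeadingTerm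

variable {h k : HyperellipticRing f} {w v : ℕ} {c d : R}

lemma natDegree_im_le (hodd : Odd f.natDegree) (H : HasLeadingTerm h w c) (him : h.im ≠ 0) :
    2 * h.im.natDegree + f.natDegree ≤ w := by
  refine le_trans (le_natDegree_of_ne_zero ?_) H.1
  have hndvd : ¬ 2 ∣ 2 * h.im.natDegree + f.natDegree := by
    have := Nat.odd_iff.1 hodd
    omega
  rw [symbol, coeff_add, coeff_expand two_pos, if_neg hndvd, zero_add, coeff_mul_X_pow,
    coeff_expand_mul' two_pos]
  exact leadingCoeff_ne_zero.2 him

lemma of_lt (H : HasLeadingTerm h w c) (hw : w < v) : HasLeadingTerm h v 0 :=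
  ⟨H.1.trans hw.le, coeff_eq_zero_of_natDegree_lt (H.1.trans_lt hw)⟩

lemma add (H : HasLeadingTerm h w c) (K : HasLeadingTerm k w d) :
    HasLeadingTerm (h + k) w (c + d) := by
  rw [HasLeadingTerm, symbol_add, coeff_add, H.2, K.2]
  exact ⟨natDegree_add_le_of_degree_le H.1 K.1, rfl⟩

lemma mul (hf : f.Monic) (hodd : Odd f.natDegree) (H : HasLeadingTerm h w c)
    (K : HasLeadingTerm k v d) : HasLeadingTerm (h * k) (w + v) (c * d) := by
  refine hasLeadingTerm_of_symbol_eq (symbol_mul hf h k) (natDegree_mul_le_of_le H.1 K.1) ?_ ?_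
  · rw [coeff_mul_add_eq_of_natDegree_le H.1 K.1, H.2, K.2]
  · intro hr
    have hH := H.natDegree_im_le hodd (by rintro h0; simp [h0] at hr)
    have hK := K.natDegree_im_le hodd (by rintro h0; simp [h0] at hr)
    have he := f.eraseLead_natDegree_le
    have hle : (f.eraseLead * h.im * k.im).natDegree ≤
        f.natDegree - 1 + h.im.natDegree + k.im.natDegree :=
      natDegree_mul_le_of_le (natDegree_mul_le_of_le he le_rfl) le_rfl
    have := hodd.pos
    omega

lemma star (hodd : Odd f.natDegree) (H : HasLeadingTerm h w c) :
    HasLeadingTerm (star h) w (c * (-1) ^ w) := by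
  rw [HasLeadingTerm, symbol_star hodd, comp_C_mul_X_coeff, H.2]
  refine ⟨natDegree_comp_le.trans ?_, rfl⟩
  calc (symbol h).natDegree * (C (-1) * X : R[X]).natDegree
      ≤ w * 1 := Nat.mul_le_mul H.1 ((natDegree_C_mul_le _ _).trans natDegree_X_le)
    _ = w := mul_one w

lemma curveDerivation (hf : f.Monic) (hodd : Odd f.natDegree) (hdeg : 2 ≤ f.natDegree)
    (H : HasLeadingTerm h w c) :
    HasLeadingTerm (curveDerivation f h) (w + (f.natDegree - 2)) (c * w) := by
  have hpred : f.natDegree - 1 = f.natDegree - 2 + 1 := by omega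
  refine hasLeadingTerm_of_symbol_eq (symbol_curveDerivation hf hodd.pos h) ?_ ?_ fun hr => ?_
  · rw [hpred]
    exact natDegree_X_pow_succ_mul_derivative_le H.1 _
  · rw [hpred, coeff_X_pow_succ_mul_derivative, H.2]
  · have him := H.natDegree_im_le hodd (by rintro h0; simp [h0] at hr)
    have hlt := natDegree_two_mul_derivative_mul_add_le hdeg h.im f.eraseLead_natDegree_le
    omega

section BigOperators

variable {ι : Type*} {s : Finset ι} {H : ι → HyperellipticRing f}

lemma sum {c : ι → R} (hH : ∀ i ∈ s, HasLeadingTerm (H i) w (c i)) :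
    HasLeadingTerm (∑ i ∈ s, H i) w (∑ i ∈ s, c i) := by
  induction s using Finset.cons_induction with
  | empty => exact hasLeadingTerm_zero
  | cons a s ha ih =>
    rw [Finset.sum_cons, Finset.sum_cons]
    exact (hH a (s.mem_cons_self a)).add (ih fun i hi => hH i (Finset.mem_cons_of_mem hi))

lemma prod (hf : f.Monic) (hodd : Odd f.natDegree) {w : ι → ℕ} {c : ι → R}
    (hH : ∀ i ∈ s, HasLeadingTerm (H i) (w i) (c i)) :
    HasLeadingTerm (∏ i ∈ s, H i) (∑ i ∈ s, w i) (∏ i ∈ s, c i) := by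
  induction s using Finset.cons_induction with
  | empty => simpa using hasLeadingTerm_intCast (f := f) 1
  | cons a s ha ih =>
    rw [Finset.prod_cons, Finset.prod_cons, Finset.sum_cons]
    exact (hH a (s.mem_cons_self a)).mul hf hodd (ih fun i hi => hH i (Finset.mem_cons_of_mem hi))

end BigOperators

lemma pow (hf : f.Monic) (hodd : Odd f.natDegree) (H : HasLeadingTerm h w c) (k : ℕ) :
    HasLeadingTerm (h ^ k) (k * w) (c ^ k) := by
  simpa using prod hf hodd (s := Finset.range k) fun _ _ => H

lemma iterate_curveDerivation (hf : f.Monic) (hodd : Odd f.natDegree) (hdeg : 2 ≤ f.natDegree)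
    (H : HasLeadingTerm h w 1) (j : ℕ) :
    HasLeadingTerm ((WeilSum.curveDerivation f)^[j] h) (w + j * (f.natDegree - 2))
      ((derivationFactor R (f.natDegree - 2) j).eval (w : R)) := by
  induction j with
  | zero => simpa [derivationFactor] using H
  | succ j ih =>
    rw [Function.iterate_succ_apply', derivationFactor, Finset.prod_range_succ, eval_mul,
      ← derivationFactor]
    convert ih.curveDerivation hf hodd hdeg using 1
    · ring
    · simp

lemma det (hf : f.Monic) (hodd : Odd f.natDegree) {ι : Type*} [Fintype ι] [DecidableEq ι]
    {r e : ι → ℕ} {c : Matrix ι ι R} {M : Matrix ι ι (HyperellipticRing f)}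
    (H : ∀ i j, HasLeadingTerm (M i j) (r i + e j) (c i j)) :
    HasLeadingTerm M.det (∑ i, r i + ∑ j, e j) c.det := by
  rw [Matrix.det_apply', Matrix.det_apply']
  refine sum fun σ _ => ?_
  have hprod := prod hf hodd (s := Finset.univ) fun i _ => H (σ i) i
  rw [Finset.sum_add_distrib, Equiv.sum_comp σ r] at hprod
  simpa using (hasLeadingTerm_intCast _).mul hf hodd hprod

lemma norm [IsDomain R] (hf : f.Monic) (hodd : Odd f.natDegree) (hc : c ≠ 0)
    (H : HasLeadingTerm h w c) : h.norm ≠ 0 ∧ h.norm.natDegree ≤ w := by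
  have hnorm := H.mul hf hodd (H.star hodd)
  rw [← QuadraticAlgebra.algebraMap_norm_eq_mul_star, HasLeadingTerm, symbol_algebraMap,
    natDegree_expand] at hnorm
  refine ⟨fun h0 => ?_, by omega⟩
  have hcoeff := hnorm.2
  simp [h0, hc] at hcoeff

end HasLeadingTerm

end Leading

section Construction

lemma det_cons_single_last_eval_ne_zero {R : Type*} [CommRing R] [IsDomain R] {N : ℕ}
    {P : Fin N → R[X]} {v : Fin (N + 1) → R} (hP : ∀ i, (P i).Monic)
    (hdeg : ∀ i, (P i).natDegree = i) (hv : Function.Injective (v ∘ Fin.castSucc)) :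
    (Matrix.of (Fin.cons (Pi.single (Fin.last N) 1) fun i j => (P i).eval (v j))).det ≠ 0 := by
  rw [Matrix.det_succ_row_zero, Finset.sum_eq_single (Fin.last N)
    (fun j _ hj => by simp [hj]) (by simp)]
  have hminor : (Matrix.of (Fin.cons (Pi.single (Fin.last N) 1) fun i j =>
      (P i).eval (v j))).submatrix Fin.succ (Fin.last N).succAbove =
      (Matrix.of fun i j => (P j).eval ((v ∘ Fin.castSucc) i)).transpose := by
    ext i j
    simp
  rw [hminor, Matrix.det_transpose,
    ← Matrix.det_eval_matrixOfPolynomials_eq_det_vandermonde _ _ hdeg hP]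
  simpa using Matrix.det_vandermonde_ne_zero_iff.2 hv

lemma hasLeadingTerm_det_frobeniusWronskian {R : Type*} [CommRing R] {f : R[X]} (hf : f.Monic)
    (hodd : Odd f.natDegree) (hdeg : 2 ≤ f.natDegree) {p N : ℕ} (hp : 1 < p)
    {u : Fin (N + 1) → HyperellipticRing f} {w : Fin (N + 1) → ℕ}
    (hw : ∀ j ≠ Fin.last N, w j < w (Fin.last N)) (hu : ∀ j, HasLeadingTerm (u j) (w j) 1) :
    HasLeadingTerm (frobeniusWronskian (curveDerivation f) p u Fin.val).det
      (p * w (Fin.last N) + ∑ i : Fin N, (i * (f.natDegree - 2) + w i.castSucc))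
      (Matrix.of (Fin.cons (Pi.single (Fin.last N) 1) fun i : Fin N => fun j =>
        (derivationFactor R (f.natDegree - 2) i).eval (w j : R))).det := by
  have hsum : ∑ i, (Fin.cons ((p - 1) * w (Fin.last N)) fun i : Fin N => i * (f.natDegree - 2) :
      Fin (N + 1) → ℕ) i + ∑ j, w j =
      p * w (Fin.last N) + ∑ i : Fin N, (i * (f.natDegree - 2) + w i.castSucc) := by
    obtain ⟨q, rfl⟩ := Nat.exists_eq_succ_of_ne_zero (Nat.ne_zero_of_lt hp)
    rw [Fin.sum_univ_succ, Fin.sum_univ_castSucc w, Finset.sum_add_distrib]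
    simp
    ring
  rw [← hsum]
  refine HasLeadingTerm.det hf hodd fun i j => ?_
  refine Fin.cases ?_ (fun i => ?_) i
  · have hpow := (hu j).pow hf hodd p
    rw [one_pow] at hpow
    obtain rfl | hj := eq_or_ne j (Fin.last N)
    · simpa [frobeniusWronskian, ← Nat.succ_mul, Nat.sub_add_cancel hp.le] using hpow
    · have hlt : p * w j < (p - 1) * w (Fin.last N) + w j := by
        calc p * w j = (p - 1) * w j + w j := by rw [← Nat.succ_mul, Nat.succ_eq_add_one,
                Nat.sub_add_cancel hp.le]
          _ < (p - 1) * w (Fin.last N) + w j := Nat.add_lt_add_right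
            (Nat.mul_lt_mul_of_pos_left (hw j hj) (Nat.sub_pos_of_lt hp)) _
      simpa [frobeniusWronskian, hj] using hpow.of_lt hlt
  · simpa [frobeniusWronskian, add_comm] using (hu j).iterate_curveDerivation hf hodd hdeg i

/-- The `i`-th pole order at infinity, counting from `0`, of a function on a hyperelliptic curve of
genus `g` with one point at infinity: `0, 2, 4, …, 2 g, 2 g + 1, 2 g + 2, …`. -/
def poleOrder (g i : ℕ) : ℕ := i + min i g

lemma even_or_le_poleOrder (g i : ℕ) : Even (poleOrder g i) ∨ 2 * g + 1 ≤ poleOrder g i := by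
  rw [poleOrder, Nat.even_iff]
  omega

lemma strictMono_poleOrder (g : ℕ) : StrictMono (poleOrder g) := fun i j hij => by
  rw [poleOrder, poleOrder]
  omega

lemma sum_mul_add_poleOrder_le {g : ℕ} (hg : 1 ≤ g) (N : ℕ) :
    ∑ i : Fin N, (i * (2 * g - 1) + poleOrder g i) ≤ g * N ^ 2 := by
  induction N with
  | zero => simp
  | succ N ih =>
    obtain ⟨k, rfl⟩ := Nat.exists_eq_add_of_le' hg
    have hle : poleOrder (k + 1) N ≤ N + (k + 1) := Nat.add_le_add_left (min_le_right _ _) _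
    rw [Fin.sum_univ_castSucc]
    simp only [Fin.val_castSucc, Fin.val_last, show 2 * (k + 1) - 1 = 2 * k + 1 by omega] at ih ⊢
    nlinarith

variable {p : ℕ} [Fact p.Prime] {f : (ZMod p)[X]} {g N : ℕ}

lemma injective_natCast_poleOrder (hN : N + g ≤ p) :
    Function.Injective fun i : Fin N => (poleOrder g i : ZMod p) := fun i j hij => by
  have hlt : ∀ i : Fin N, poleOrder g i < p := fun i =>
    (Nat.add_lt_add_of_lt_of_le i.2 (min_le_right _ _)).trans_le hN
  rw [ZMod.natCast_eq_natCast_iff', Nat.mod_eq_of_lt (hlt i), Nat.mod_eq_of_lt (hlt j)] at hij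
  exact Fin.ext ((strictMono_poleOrder g).injective hij)

lemma exists_norm_ne_zero_and_vanishesToOrder (hf : f.Monic) (hdeg : f.natDegree = 2 * g + 1)
    (hg : 1 ≤ g) (hN : N + g ≤ p) : ∃ h : HyperellipticRing f, h.norm ≠ 0 ∧
      h.norm.natDegree ≤ p * (N + g) + g * N ^ 2 ∧
      ∀ x y hy, VanishesToOrder (curveDerivation f) (pointEval f x y hy) N h := by
  have hodd : Odd f.natDegree := ⟨g, hdeg⟩
  choose u hu using fun j : Fin (N + 1) =>
    exists_hasLeadingTerm_one hodd (hdeg ▸ even_or_le_poleOrder g j)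
  have hlead := hasLeadingTerm_det_frobeniusWronskian hf hodd (by omega)
    (Fact.out : p.Prime).one_lt (w := fun j => poleOrder g j)
    (fun _ hj => strictMono_poleOrder g (Fin.val_lt_last hj)) hu
  obtain ⟨hnorm, hle⟩ := hlead.norm hf hodd <| det_cons_single_last_eval_ne_zero
    (fun _ => monic_derivationFactor _ _) (fun _ => natDegree_derivationFactor _ _)
    (injective_natCast_poleOrder hN)
  refine ⟨_, hnorm, hle.trans ?_, fun x y hy =>
    vanishesToOrder_det_frobeniusWronskian (fun _ => ZMod.pow_card _) ?_⟩
  · rw [hdeg, show 2 * g + 1 - 2 = 2 * g - 1 by omega]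
    exact add_le_add (Nat.mul_le_mul_left p (Nat.add_le_add_left (min_le_right _ _) _))
      (sum_mul_add_poleOrder_le hg N)
  · simp [Finset.sum_add_distrib]

lemma mul_quadraticChar_add_one_le_rootMultiplicity (hp2 : p ≠ 2) (hN : 2 * N ≤ p)
    {h : HyperellipticRing f} (hnorm : h.norm ≠ 0) {x : ZMod p}
    (hx : f.IsRoot x → ¬ (derivative f).IsRoot x)
    (hh : ∀ y hy, VanishesToOrder (curveDerivation f) (pointEval f x y hy) N h) :
    (N : ℤ) * (quadraticChar (ZMod p) (f.eval x) + 1) ≤ h.norm.rootMultiplicity x := by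
  by_cases hfx : f.eval x = 0
  · have hy : (0 : ZMod p) ^ 2 = f.eval x := by rw [hfx, sq, zero_mul]
    have hle := le_two_mul_rootMultiplicity_of_vanishesToOrder (hy := hy) hN rfl (hx hfx) hnorm
      (vanishesToOrder_norm (hh 0 hy) (hh (-0) (by rwa [neg_zero])))
    rw [hfx, MulChar.map_zero, zero_add, mul_one]
    exact_mod_cast Nat.le_of_mul_le_mul_left hle two_pos
  by_cases hsq : IsSquare (f.eval x)
  · rw [(quadraticChar_one_iff_isSquare hfx).2 hsq]
    obtain ⟨y, hyy⟩ := hsq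
    have hy : y ^ 2 = f.eval x := by rw [hyy, sq]
    have hy0 : 2 * y ≠ 0 := mul_ne_zero (Ring.two_ne_zero (by rwa [ZMod.ringChar_zmod_n]))
      (by rintro rfl; exact hfx (by rw [hyy, zero_mul]))
    have hle := le_rootMultiplicity_of_vanishesToOrder (hy := hy) hN hy0 hnorm
      (vanishesToOrder_norm (hh y hy) (hh (-y) (by rwa [neg_sq])))
    rw [one_add_one_eq_two, mul_comm]
    exact_mod_cast hle
  · rw [quadraticChar_neg_one_iff_not_isSquare.2 hsq]
    simp

theorem mul_sum_quadraticChar_le (hp2 : p ≠ 2) (hf : f.Monic) (hdeg : f.natDegree = 2 * g + 1)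
    (hg : 1 ≤ g) (hgN : N + g ≤ p) (hN : 2 * N ≤ p)
    (hsimple : ∀ x, f.IsRoot x → ¬ (derivative f).IsRoot x) :
    (N : ℤ) * ∑ x, quadraticChar (ZMod p) (f.eval x) ≤ p * g + g * N ^ 2 := by
  obtain ⟨h, hnorm, hle, hvan⟩ := exists_norm_ne_zero_and_vanishesToOrder hf hdeg hg hgN
  have hroots : ∑ x, h.norm.rootMultiplicity x ≤ h.norm.natDegree := by
    simp_rw [← count_roots]
    rw [Multiset.sum_count_eq_card fun _ _ => Finset.mem_univ _]
    exact card_roots' _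
  have hsum : (N : ℤ) * (∑ x, quadraticChar (ZMod p) (f.eval x) + p) ≤
      p * (N + g) + g * N ^ 2 := by
    calc (N : ℤ) * (∑ x, quadraticChar (ZMod p) (f.eval x) + p)
        = ∑ x, (N : ℤ) * (quadraticChar (ZMod p) (f.eval x) + 1) := by
          simp [← Finset.mul_sum, Finset.sum_add_distrib, ZMod.card]
      _ ≤ ∑ x, (h.norm.rootMultiplicity x : ℤ) := Finset.sum_le_sum fun x _ =>
          mul_quadraticChar_add_one_le_rootMultiplicity hp2 hN hnorm (hsimple x) (hvan x)
      _ ≤ p * (N + g) + g * N ^ 2 := by exact_mod_cast hroots.trans hle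
  linarith

end Construction

section NodupRoots

lemma reverse_reverse_dvd {R : Type*} [CommRing R] (f : R[X]) : f.reverse.reverse ∣ f := by
  rcases eq_or_ne f 0 with rfl | hf
  · simp
  obtain ⟨h, hfh, hh⟩ := exists_eq_pow_rootMultiplicity_mul_and_not_dvd f hf 0
  rw [C_0, sub_zero] at hfh hh
  have hdeg : h.reverse.natDegree = h.natDegree := by
    rw [reverse_natDegree, natTrailingDegree_eq_zero_of_constantCoeff_ne_zero (by
      rwa [constantCoeff_apply, Ne, ← X_dvd_iff]), Nat.sub_zero]
  have hrev : h.reverse.reverse = h := by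
    rw [reverse, hdeg, reverse, reflect_reflect]
  rw [hfh, reverse_X_pow_mul, hrev]
  exact dvd_mul_left _ _

variable {R : Type*} [CommRing R] [IsDomain R] {f : R[X]}

lemma nodup_roots_iff_rootMultiplicity_le_one :
    f.roots.Nodup ↔ ∀ x, f.rootMultiplicity x ≤ 1 := by
  classical
  simp_rw [Multiset.nodup_iff_count_le_one, count_roots]

lemma not_isRoot_derivative_of_nodup_roots (hf0 : f ≠ 0) (hf : f.roots.Nodup) {x : R}
    (hx : f.IsRoot x) : ¬ (derivative f).IsRoot x := fun hdx =>
  (nodup_roots_iff_rootMultiplicity_le_one.1 hf x).not_gt <|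
    (one_lt_rootMultiplicity_iff_isRoot hf0).2 ⟨hx, hdx⟩

lemma nodup_roots_taylor (hf : f.roots.Nodup) (a : R) : (taylor a f).roots.Nodup := by
  rw [nodup_roots_iff_rootMultiplicity_le_one] at hf ⊢
  intro x
  rw [rootMultiplicity_eq_natTrailingDegree, ← taylor_apply, taylor_taylor, taylor_apply,
    ← rootMultiplicity_eq_natTrailingDegree]
  exact hf _

lemma natDegree_reverse_add_one (hf0 : f ≠ 0) (hf : f.roots.Nodup) (h0 : f.IsRoot 0) :
    f.reverse.natDegree + 1 = f.natDegree := by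
  have htrail : f.natTrailingDegree = 1 := by
    rw [← rootMultiplicity_eq_natTrailingDegree']
    exact (nodup_roots_iff_rootMultiplicity_le_one.1 hf 0).antisymm
      ((rootMultiplicity_pos hf0).2 h0)
  rw [natDegree_eq_reverse_natDegree_add_natTrailingDegree f, htrail]

lemma rootMultiplicity_reverse_le {F : Type*} [Field F] {f : F[X]} (hf : f ≠ 0) {c : F}
    (hc : c ≠ 0) : f.reverse.rootMultiplicity c ≤ f.rootMultiplicity c⁻¹ := by
  rw [le_rootMultiplicity_iff hf]
  set n := f.reverse.rootMultiplicity c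
  obtain ⟨h, hh⟩ := pow_rootMultiplicity_dvd f.reverse c
  have hX : (X - C c).reverse = C (-c) * (X - C c⁻¹) := by
    have hrevX : (X : F[X]).reverse = 1 := by simp [reverse]
    rw [sub_eq_add_neg, ← C_neg, reverse_add_C, hrevX, natDegree_X, pow_one, mul_sub, ← C_mul,
      neg_mul, mul_inv_cancel₀ hc, C_neg, C_neg, C_1]
    ring
  have hpow : (X - C c⁻¹) ^ n ∣ ((X - C c) ^ n).reverse := by
    clear_value n
    induction n with
    | zero => simp
    | succ n ih =>
      rw [pow_succ, pow_succ, reverse_mul_of_domain, hX]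
      exact mul_dvd_mul ih (dvd_mul_left _ _)
  refine hpow.trans (dvd_trans ?_ (reverse_reverse_dvd f))
  rw [hh, reverse_mul_of_domain]
  exact dvd_mul_right _ _

lemma nodup_roots_reverse {F : Type*} [Field F] {f : F[X]} (hf : f.roots.Nodup) :
    f.reverse.roots.Nodup := by
  rcases eq_or_ne f 0 with rfl | hf0
  · simp
  rw [nodup_roots_iff_rootMultiplicity_le_one] at hf ⊢
  intro c
  rcases eq_or_ne c 0 with rfl | hc
  · rw [rootMultiplicity_eq_natTrailingDegree', natTrailingDegree_reverse]
    exact zero_le_one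
  · exact (rootMultiplicity_reverse_le hf0 hc).trans (hf _)

end NodupRoots

section QuadCharSum

variable {F : Type*} [Field F] [Fintype F] [DecidableEq F] {f : F[X]}

/-- The complete sum over `F` of the quadratic character of the values of `f`, for which the
inequality of Weil is proved. -/
def quadCharSum (f : F[X]) : ℤ := ∑ x, quadraticChar F (f.eval x)

lemma abs_quadraticChar_le_one (a : F) : |quadraticChar F a| ≤ 1 := by
  rcases quadraticChar_isQuadratic F a with h | h | h <;> simp [h]

lemma abs_quadCharSum_le_card (f : F[X]) : |quadCharSum f| ≤ Fintype.card F := by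
  calc |quadCharSum f| ≤ ∑ x, |quadraticChar F (f.eval x)| := Finset.abs_sum_le_sum_abs _ _
    _ ≤ ∑ _x : F, 1 := Finset.sum_le_sum fun x _ => abs_quadraticChar_le_one _
    _ = Fintype.card F := by simp

lemma quadCharSum_C_mul (c : F) (f : F[X]) :
    quadCharSum (C c * f) = quadraticChar F c * quadCharSum f := by
  simp only [quadCharSum, eval_mul, eval_C, map_mul, Finset.mul_sum]

lemma abs_quadCharSum_C_mul {c : F} (hc : c ≠ 0) (f : F[X]) :
    |quadCharSum (C c * f)| = |quadCharSum f| := by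
  rw [quadCharSum_C_mul, abs_mul]
  rcases quadraticChar_dichotomy hc with h | h <;> simp [h]

lemma quadCharSum_taylor (a : F) (f : F[X]) : quadCharSum (taylor a f) = quadCharSum f := by
  simp only [quadCharSum, taylor_eval]
  exact Equiv.sum_comp (Equiv.addRight a) fun x => quadraticChar F (f.eval x)

lemma quadCharSum_scaleRoots {c : F} (hc : c ≠ 0) (f : F[X]) :
    quadCharSum (f.scaleRoots c) = quadraticChar F c ^ f.natDegree * quadCharSum f := by
  rw [quadCharSum, ← Equiv.sum_comp (Equiv.mulLeft₀ c hc), quadCharSum, Finset.mul_sum]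
  refine Finset.sum_congr rfl fun x _ => ?_
  rw [← map_pow, ← map_mul, ← scaleRoots_eval_mul]
  rfl

lemma quadraticChar_eval_inv_reverse (heven : Even f.natDegree) {x : F} (hx : x ≠ 0) :
    quadraticChar F (f.reverse.eval x⁻¹) = quadraticChar F (f.eval x) := by
  obtain ⟨k, hk⟩ := heven
  let := invertibleOfNonzero hx
  have hrev := eval₂_reverse_mul_pow (RingHom.id F) x f
  rw [eval₂_id, eval₂_id, invOf_eq_inv, hk, pow_add, ← sq] at hrev
  rw [← hrev, map_mul, quadraticChar_sq_one' (pow_ne_zero k hx), mul_one]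

lemma quadCharSum_reverse (heven : Even f.natDegree) :
    quadCharSum f.reverse - quadraticChar F f.leadingCoeff =
      quadCharSum f - quadraticChar F (f.eval 0) := by
  have hrev : f.reverse.eval 0 = f.leadingCoeff := by
    rw [← coeff_zero_eq_eval_zero, coeff_zero_reverse]
  rw [quadCharSum, ← Equiv.sum_comp (Equiv.inv F), ← hrev, quadCharSum,
    ← Finset.add_sum_erase _ _ (Finset.mem_univ 0),
    ← Finset.add_sum_erase Finset.univ (fun x => quadraticChar F (f.eval x)) (Finset.mem_univ 0),
    Equiv.inv_apply, inv_zero, add_sub_cancel_left, add_sub_cancel_left]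
  exact Finset.sum_congr rfl fun x hx =>
    quadraticChar_eval_inv_reverse heven (Finset.ne_of_mem_erase hx)

lemma quadCharSum_eq_zero_of_natDegree_eq_one (hF : ringChar F ≠ 2) (hf : f.Monic)
    (hdeg : f.natDegree = 1) : quadCharSum f = 0 := by
  rw [hf.eq_X_add_C hdeg, ← taylor_X, quadCharSum_taylor]
  simpa [quadCharSum] using quadraticChar_sum_zero hF

end QuadCharSum

section Bound

lemma mul_add_mul_natSqrt_sq_lt {p g : ℕ} (hg : 2 * g + 1 ≤ Nat.sqrt p) :
    (p * g + g * Nat.sqrt p ^ 2 : ℝ) < Nat.sqrt p * ((2 * g + 1 : ℕ) * √p) := by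
  have hle : (Nat.sqrt p : ℝ) ≤ √p := Real.nat_sqrt_le_real_sqrt
  have hlt : √p < Nat.sqrt p + 1 := Real.real_sqrt_lt_nat_sqrt_succ
  have hg' : (2 * g + 1 : ℝ) ≤ Nat.sqrt p := by exact_mod_cast hg
  have hsq : (√p - Nat.sqrt p) ^ 2 < 1 := by nlinarith
  have hsqrt : (Nat.sqrt p : ℝ) ≤ Nat.sqrt p * √p := by nlinarith
  calc (p * g + g * Nat.sqrt p ^ 2 : ℝ)
      = g * (√p - Nat.sqrt p) ^ 2 + Nat.sqrt p * (2 * g * √p) := by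
        nth_rewrite 1 [← Real.mul_self_sqrt p.cast_nonneg]
        ring
    _ < Nat.sqrt p * √p + Nat.sqrt p * (2 * g * √p) := by nlinarith
    _ = Nat.sqrt p * ((2 * g + 1 : ℕ) * √p) := by push_cast; ring

variable {p : ℕ} [Fact p.Prime] {f : (ZMod p)[X]}

lemma quadCharSum_lt_of_natDegree_sq_lt (hp2 : p ≠ 2) (hf : f.Monic) (hroots : f.roots.Nodup)
    (hodd : Odd f.natDegree) (hlt : f.natDegree ^ 2 < p) :
    (quadCharSum f : ℝ) < f.natDegree * √p := by
  obtain ⟨g, hg⟩ := hodd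
  rw [hg] at hlt ⊢
  rcases Nat.eq_zero_or_pos g with rfl | hg0
  · rw [quadCharSum_eq_zero_of_natDegree_eq_one (by rwa [ZMod.ringChar_zmod_n]) hf hg]
    simpa using (Fact.out : p.Prime).pos
  have hN : 2 * g + 1 ≤ Nat.sqrt p := Nat.le_sqrt'.2 hlt.le
  have hsq : Nat.sqrt p * Nat.sqrt p ≤ p := Nat.sqrt_le p
  have hsum := mul_sum_quadraticChar_le hp2 hf hg hg0 (N := Nat.sqrt p) (by nlinarith)
    (by nlinarith) fun _ => not_isRoot_derivative_of_nodup_roots hf.ne_zero hroots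
  have hsum' : (Nat.sqrt p : ℝ) * quadCharSum f ≤ p * g + g * Nat.sqrt p ^ 2 := by
    exact_mod_cast hsum
  exact lt_of_mul_lt_mul_left (hsum'.trans_lt (mul_add_mul_natSqrt_sq_lt hN)) (Nat.cast_nonneg _)

lemma lt_mul_sqrt_of_lt_sq {p d : ℕ} (hp : 0 < p) (hlt : p < d ^ 2) : (p : ℝ) < d * √p := by
  have hsqrt : √(p : ℝ) < d := by
    rw [← Real.sqrt_sq d.cast_nonneg]
    exact Real.sqrt_lt_sqrt p.cast_nonneg (by exact_mod_cast hlt)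
  calc (p : ℝ) = √p * √p := (Real.mul_self_sqrt p.cast_nonneg).symm
    _ < d * √p := mul_lt_mul_of_pos_right hsqrt (Real.sqrt_pos.2 (Nat.cast_pos.2 hp))

lemma abs_quadCharSum_lt_of_monic (hp2 : p ≠ 2) (hf : f.Monic) (hroots : f.roots.Nodup)
    (hodd : Odd f.natDegree) : |(quadCharSum f : ℝ)| < f.natDegree * √p := by
  have hp : p.Prime := Fact.out
  have hne : f.natDegree ^ 2 ≠ p := fun h => hp.not_isSquare (h ▸ IsSquare.sq _)
  rcases lt_or_gt_of_ne hne with hlt | hlt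
  · obtain ⟨c, hc⟩ := quadraticChar_exists_neg_one (F := ZMod p)
      (by rwa [ZMod.ringChar_zmod_n])
    have hc0 : c ≠ 0 := by rintro rfl; simp at hc
    have htwist : quadCharSum (f.scaleRoots c) = -quadCharSum f := by
      rw [quadCharSum_scaleRoots hc0, hc, hodd.neg_one_pow, neg_one_mul]
    have hroots' : (f.scaleRoots c).roots.Nodup := by
      rw [roots_scaleRoots f hc0.isUnit]
      exact hroots.map (mul_right_injective₀ hc0)
    have hupper := quadCharSum_lt_of_natDegree_sq_lt hp2 hf hroots hodd hlt
    have hlower := quadCharSum_lt_of_natDegree_sq_lt hp2 ((monic_scaleRoots_iff c).2 hf) hroots'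
      (by rwa [natDegree_scaleRoots]) (by rwa [natDegree_scaleRoots])
    rw [htwist, natDegree_scaleRoots, Int.cast_neg] at hlower
    exact abs_lt.2 ⟨neg_lt.1 hlower, hupper⟩
  · have hcard : |(quadCharSum f : ℝ)| ≤ p := by
      exact_mod_cast (abs_quadCharSum_le_card f).trans_eq (by rw [ZMod.card])
    exact hcard.trans_lt (lt_mul_sqrt_of_lt_sq hp.pos hlt)

lemma abs_quadCharSum_lt_of_odd_natDegree (hp2 : p ≠ 2) (hroots : f.roots.Nodup)
    (hodd : Odd f.natDegree) : |(quadCharSum f : ℝ)| < f.natDegree * √p := by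
  have hc : f.leadingCoeff ≠ 0 := by
    rw [Ne, leadingCoeff_eq_zero]
    rintro rfl
    simp at hodd
  have hc' : f.leadingCoeff⁻¹ ≠ 0 := inv_ne_zero hc
  have hdeg : (C f.leadingCoeff⁻¹ * f).natDegree = f.natDegree := natDegree_C_mul hc'
  have hmonic : (C f.leadingCoeff⁻¹ * f).Monic := monic_C_mul_of_mul_leadingCoeff_eq_one
    (inv_mul_cancel₀ hc)
  have hbound := abs_quadCharSum_lt_of_monic hp2 hmonic (by rwa [roots_C_mul f hc'])
    (by rwa [hdeg])
  rwa [← Int.cast_abs, abs_quadCharSum_C_mul hc', Int.cast_abs, hdeg] at hbound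

lemma abs_quadCharSum_lt_of_even_natDegree (hp2 : p ≠ 2) (hf0 : f ≠ 0) (hroots : f.roots.Nodup)
    (heven : Even f.natDegree) {a : ZMod p} (ha : f.IsRoot a) :
    |(quadCharSum f : ℝ)| < f.natDegree * √p := by
  set k := taylor a f
  have hk0 : k.IsRoot 0 := by rwa [IsRoot.def, taylor_eval, zero_add]
  have hkroots : k.roots.Nodup := nodup_roots_taylor hroots a
  have hdeg : k.reverse.natDegree + 1 = f.natDegree := by
    rw [natDegree_reverse_add_one ((taylor_eq_zero a f).not.2 hf0) hkroots hk0, natDegree_taylor]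
  have hodd : Odd k.reverse.natDegree := by
    rwa [← hdeg, Nat.even_add_one, Nat.not_even_iff_odd] at heven
  have hsum : quadCharSum f = quadCharSum k.reverse - quadraticChar (ZMod p) k.leadingCoeff := by
    rw [quadCharSum_reverse (by rwa [natDegree_taylor]), hk0.eq_zero, MulChar.map_zero, sub_zero,
      quadCharSum_taylor]
  have hle : |(quadCharSum f : ℝ)| ≤ |(quadCharSum k.reverse : ℝ)| + 1 := by
    rw [hsum]
    exact_mod_cast (abs_sub _ _).trans (add_le_add_right (abs_quadraticChar_le_one _) _)
  have hsqrt : (1 : ℝ) ≤ √p := Real.one_le_sqrt.2 (by exact_mod_cast (Fact.out : p.Prime).one_le)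
  calc |(quadCharSum f : ℝ)| ≤ |(quadCharSum k.reverse : ℝ)| + 1 := hle
    _ < k.reverse.natDegree * √p + √p := add_lt_add_of_lt_of_le
        (abs_quadCharSum_lt_of_odd_natDegree hp2 (nodup_roots_reverse hkroots) hodd) hsqrt
    _ = f.natDegree * √p := by rw [← hdeg]; push_cast; ring

end Bound

end WeilSum

theorem complete_weil_sum_bound_general (p : ℕ) [Fact p.Prime] (hp2 : p ≠ 2) (f : (ZMod p)[X])
    (hf0 : f ≠ 0) (hroots : f.roots.Nodup) (hf : Odd f.natDegree ∨ ∃ a, f.IsRoot a) :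
    |((∑ x : ZMod p, quadraticChar (ZMod p) (f.eval x) : ℤ) : ℝ)| < f.natDegree * √p := by
  rcases Nat.even_or_odd f.natDegree with heven | hodd
  · obtain ⟨a, ha⟩ := hf.resolve_left (Nat.not_odd_iff_even.2 heven)
    exact WeilSum.abs_quadCharSum_lt_of_even_natDegree hp2 hf0 hroots heven ha
  · exact WeilSum.abs_quadCharSum_lt_of_odd_natDegree hp2 hroots hodd

/-- Theorem 9.1 (Weil-sum estimate): if `p` is an odd prime and `f` is a monic polynomial over
`𝔽_p` of degree `d ≥ 1` that is a product of `d` distinct monic linear factors, then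
`|∑_{x ∈ 𝔽_p} η_p(f(x))| < d √p`, where `η_p` is the quadratic character of `𝔽_p`. -/
theorem complete_weil_sum_bound (p : ℕ) [Fact p.Prime] (hp2 : p ≠ 2)
    (d : ℕ) (hd : 1 ≤ d) (f : Polynomial (ZMod p))
    (t : Finset (ZMod p)) (htcard : t.card = d)
    (hf : f = ∏ r ∈ t, (Polynomial.X - Polynomial.C r)) :
    |((∑ x : ZMod p, quadraticChar (ZMod p) (f.eval x) : ℤ) : ℝ)|
      < (d : ℝ) * Real.sqrt p := by
  have hroots : f.roots = t.val := by rw [hf, roots_prod_X_sub_C]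
  have hdeg : f.natDegree = d := by rw [hf, natDegree_finsetProd_X_sub_C_eq_card, htcard]
  obtain ⟨a, ha⟩ := Finset.card_pos.1 (htcard ▸ hd)
  have hf0 : f ≠ 0 := ne_zero_of_natDegree_gt (hdeg ▸ hd)
  rw [← hdeg]
  exact complete_weil_sum_bound_general p hp2 f hf0 (hroots ▸ t.nodup)
    (.inr ⟨a, isRoot_of_mem_roots (hroots ▸ ha)⟩)
end

section
/- There exists p₀ > 0 such that for every prime p ≥ p₀ the following holds: if d ≥ 1 is an integer, f is a monic polynomial over 𝔽_p = ℤ/pℤ of degree d which is a product of d distinct monic linear factors, and N is an integer with 0 ≤ N ≤ p - 1, then |∑_{x=0}^{N} η_p(f(x))| ≤ d·(1 + log p)·√p, where x runs over the integers 0, 1, …, N reduced modulo p and log is the natural logarithm. -/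
/-!
For a set `T` of `d` points of a finite field `F` with `q` elements, and an additive character `ψ`,
the mixed sums `∑ₓ η(∏_{c ∈ T} (x - c)) ψ(x)` over the extension of degree `n` are `-∑ ωᵢ ^ n` for
`d` complex numbers `ωᵢ`: the `L`-series of the pair is a polynomial of degree at most `d`, and
Newton's identities turn its Euler product into power sums of its reciprocal roots. Summing over all
`ψ` replaces `x` by the Artin–Schreier expression `z ^ q - z` and leaves a single sum of the
quadratic character of a polynomial over an extension with `r ^ 2` elements. Stepanov's method
bounds that sum by a constant times `r`, with an auxiliary polynomial vanishing wherever the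
character takes the value `1`. Since powers of complex numbers cannot cancel along all large
exponents, every `ωᵢ` satisfies `|ωᵢ| ≤ √q`, so each mixed sum over `F` is at most `d √q`.
An incomplete sum over `ZMod p` is a combination of the mixed sums whose weights are
geometric sums, and these have total size at most `p (1 + log p)`.
-/

open Finset Polynomial

section Stepanov

/-- The polynomial `∑ X ^ (r * i) * U i`. When every `U i` has degree less than `r`, its
coefficients are those of the `U i` written one after the other, in blocks of length `r`. -/
noncomputable def digitSum {R : Type*} [Semiring R] (r : ℕ) {I : ℕ} (U : Fin I → R[X]) : R[X] :=
  ∑ i : Fin I, X ^ (r * (i : ℕ)) * U i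

theorem coeff_digitSum {R : Type*} [Semiring R] {r I : ℕ} (hr : 0 < r) (U : Fin I → R[X])
    (hU : ∀ i, U i ∈ degreeLT R r) (n : ℕ) :
    (digitSum r U).coeff n = if h : n / r < I then (U ⟨n / r, h⟩).coeff (n % r) else 0 := by
  have coeff_term (i : Fin I) (hi : (i : ℕ) ≠ n / r) : (X ^ (r * (i : ℕ)) * U i).coeff n = 0 := by
    rw [coeff_X_pow_mul', ite_eq_right_iff]
    intro hle
    refine coeff_eq_zero_of_degree_lt ((mem_degreeLT.1 (hU i)).trans_le ?_)
    have : (i : ℕ) < n / r := lt_of_le_of_ne ((Nat.le_div_iff_mul_le hr).2 (by lia)) hi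
    have : r * (i + 1) ≤ n := (Nat.mul_le_mul_left r this).trans (Nat.mul_div_le n r)
    exact_mod_cast Nat.le_sub_of_add_le (by lia)
  rw [digitSum, finsetSum_coeff]
  split_ifs with h
  · rw [sum_eq_single ⟨n / r, h⟩ (fun i _ hi ↦ coeff_term i fun hi' ↦ hi (Fin.ext hi'))
      (by simp), coeff_X_pow_mul', if_pos (Nat.mul_div_le n r), Nat.mod_def]
  · exact sum_eq_zero fun i _ ↦ coeff_term i (by lia)

theorem natDegree_digitSum_lt {R : Type*} [Semiring R] {r I n : ℕ} (hr : 0 < r) (hn : n ≤ r)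
    {U : Fin I → R[X]} (hU : ∀ i, U i ∈ degreeLT R n) (h0 : digitSum r U ≠ 0) :
    (digitSum r U).natDegree / r < I ∧ (digitSum r U).natDegree % r < n := by
  have hlead := leadingCoeff_ne_zero.2 h0
  rw [leadingCoeff, coeff_digitSum hr U fun i ↦ degreeLT_mono hn (hU i)] at hlead
  split_ifs at hlead with h
  · refine ⟨h, ?_⟩
    by_contra! hle
    exact hlead (coeff_eq_zero_of_degree_lt
      ((mem_degreeLT.1 (hU _)).trans_le (by exact_mod_cast hle)))
  · exact absurd rfl hlead

theorem eq_zero_of_digitSum_eq_zero {R : Type*} [Semiring R] {r I : ℕ} (hr : 0 < r)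
    {U : Fin I → R[X]} (hU : ∀ i, U i ∈ degreeLT R r) (h0 : digitSum r U = 0) : U = 0 := by
  ext i c
  rcases lt_or_ge c r with hc | hc
  · have hdiv : (r * i + c) / r = i := by
      rw [Nat.mul_add_div hr, Nat.div_eq_of_lt hc, add_zero]
    have := coeff_digitSum hr U hU (r * i + c)
    simpa [h0, hdiv, Nat.mul_add_mod, Nat.mod_eq_of_lt hc, eq_comm] using this
  · exact coeff_eq_zero_of_degree_lt ((mem_degreeLT.1 (hU i)).trans_le (by exact_mod_cast hc))

variable {K : Type*} [Field K]

theorem digitSum_add_mul_digitSum_ne_zero {r I a b : ℕ} {h : K[X]} {U V : Fin I → K[X]}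
    (h0 : h ≠ 0) (ha : a ≤ h.natDegree % r) (hb : h.natDegree % r + b ≤ r) (hr : 0 < r)
    (hU : ∀ i, U i ∈ degreeLT K a) (hV : ∀ i, V i ∈ degreeLT K b) (hUV : (U, V) ≠ 0) :
    digitSum r U + h * digitSum r V ≠ 0 := by
  intro hsum
  have hU' i : U i ∈ degreeLT K r := degreeLT_mono (ha.trans (Nat.mod_lt _ hr).le) (hU i)
  have hV' i : V i ∈ degreeLT K r := degreeLT_mono (by lia) (hV i)
  by_cases hQ : digitSum r V = 0
  · have hP : digitSum r U = 0 := by simpa [hQ] using hsum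
    exact hUV (Prod.ext (eq_zero_of_digitSum_eq_zero hr hU' hP)
      (eq_zero_of_digitSum_eq_zero hr hV' hQ))
  have hP : digitSum r U = -(h * digitSum r V) := eq_neg_of_add_eq_zero_left hsum
  have hmodP := (natDegree_digitSum_lt hr (by lia) hU
    (by rw [hP]; exact neg_ne_zero.2 (mul_ne_zero h0 hQ))).2
  have hmodQ := (natDegree_digitSum_lt hr (by lia) hV hQ).2
  rw [hP, natDegree_neg, natDegree_mul h0 hQ, Nat.add_mod, Nat.mod_eq_of_lt (by lia)] at hmodP
  lia

theorem natDegree_digitSum_add_mul_digitSum_lt {r I a b : ℕ} {h : K[X]} {U V : Fin I → K[X]}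
    (hI : 0 < I) (ha : a ≤ r) (hb : h.natDegree % r + b ≤ r) (hr : 0 < r)
    (hU : ∀ i, U i ∈ degreeLT K a) (hV : ∀ i, V i ∈ degreeLT K b) :
    (digitSum r U + h * digitSum r V).natDegree < (h.natDegree / r + I) * r := by
  refine (natDegree_add_le _ _).trans_lt (max_lt ?_ ?_) <;> rw [← Nat.div_lt_iff_lt_mul hr]
  · by_cases hP : digitSum r U = 0
    · simp [hP, hI]
    · exact (natDegree_digitSum_lt hr ha hU hP).1.trans_le (Nat.le_add_left _ _)
  · by_cases hQ : h * digitSum r V = 0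
    · simp [hQ, hI]
    have hQ' := natDegree_digitSum_lt hr (by lia) hV (right_ne_zero_of_mul hQ)
    rw [natDegree_mul (left_ne_zero_of_mul hQ) (right_ne_zero_of_mul hQ), Nat.add_div hr,
      if_neg (by lia)]
    lia

theorem exists_ne_zero_map_eq_zero {G H : Type*} [AddGroup G] [AddGroup H] [Finite H]
    (φ : G →+ H) (hcard : Nat.card H < Nat.card G) : ∃ g ≠ 0, φ g = 0 := by
  by_contra! h
  have hφ : Function.Injective φ :=
    (injective_iff_map_eq_zero φ).2 fun g hg ↦ by_contra fun hg0 ↦ h g hg0 hg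
  exact hcard.not_ge (Nat.card_le_card_of_injective φ hφ)

theorem natCard_degreeLT (n : ℕ) : Nat.card (degreeLT K n) = Nat.card K ^ n := by
  rw [Nat.card_congr (degreeLTEquiv K n).toEquiv, Nat.card_fun, Nat.card_fin]

theorem natDegree_pow_le_of_mem_degreeLT {n : ℕ} {w : K[X]} (hw : w ∈ degreeLT K (n + 1)) (r : ℕ) :
    (w ^ r).natDegree ≤ r * n := by
  rw [degreeLT_succ_eq_degreeLE, mem_degreeLE] at hw
  exact natDegree_pow_le_of_le r (natDegree_le_of_degree_le hw)

theorem sum_X_pow_mul_pow_add_mul_pow_mem_degreeLT {r I a b M : ℕ} {h : K[X]} {U V : Fin I → K[X]}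
    (hU : ∀ i, U i ∈ degreeLT K (a + 1)) (hV : ∀ i, V i ∈ degreeLT K (b + 1))
    (ha : r * a + I ≤ M) (hb : h.natDegree + r * b + I ≤ M) :
    ∑ i : Fin I, X ^ (i : ℕ) * (U i ^ r + h * V i ^ r) ∈ degreeLT K M := by
  refine (degreeLT K M).sum_mem fun i _ ↦ ?_
  have := natDegree_mul_le_of_le (natDegree_X_pow_le (R := K) (i : ℕ))
    (natDegree_add_le_of_le (natDegree_pow_le_of_mem_degreeLT (hU i) r)
      (natDegree_mul_le_of_le (le_refl h.natDegree) (natDegree_pow_le_of_mem_degreeLT (hV i) r)))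
  rw [mem_degreeLT]
  exact degree_le_natDegree.trans_lt (by exact_mod_cast this.trans_lt (by lia))

theorem exists_sum_pow_add_mul_pow_eq_zero [Finite K] (p j : ℕ) [Fact p.Prime] [CharP K p]
    {I a b M : ℕ} {h : K[X]} (ha : p ^ j * a + I ≤ M) (hb : h.natDegree + p ^ j * b + I ≤ M)
    (hM : M < I * (a + 1 + (b + 1))) :
    ∃ U V : Fin I → K[X], (∀ i, U i ∈ degreeLT K (a + 1)) ∧ (∀ i, V i ∈ degreeLT K (b + 1)) ∧
      (U, V) ≠ 0 ∧ ∑ i : Fin I, X ^ (i : ℕ) * (U i ^ p ^ j + h * V i ^ p ^ j) = 0 := by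
  let φ : (Fin I → degreeLT K (a + 1)) × (Fin I → degreeLT K (b + 1)) →+ K[X] :=
    { toFun := fun u ↦ ∑ i : Fin I,
        X ^ (i : ℕ) * ((u.1 i : K[X]) ^ p ^ j + h * (u.2 i : K[X]) ^ p ^ j)
      map_zero' := by simp [(expChar_pos K p).ne']
      map_add' := fun u v ↦ by
        rw [← sum_add_distrib]
        refine sum_congr rfl fun i _ ↦ ?_
        simp only [Prod.fst_add, Prod.snd_add, Pi.add_apply, Submodule.coe_add,
          add_pow_char_pow]
        ring }
  have hφ u : φ u ∈ degreeLT K M :=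
    sum_X_pow_mul_pow_add_mul_pow_mem_degreeLT (fun i ↦ (u.1 i).2) (fun i ↦ (u.2 i).2) ha hb
  have : Finite (degreeLT K M) := .of_equiv _ (degreeLTEquiv K M).toEquiv.symm
  obtain ⟨u, hu0, hu⟩ := exists_ne_zero_map_eq_zero (φ.codRestrict (degreeLT K M) hφ) (by
    simp only [Nat.card_prod, Nat.card_fun, natCard_degreeLT, Nat.card_eq_fintype_card,
      Fintype.card_fin, ← pow_mul, ← pow_add]
    exact Nat.pow_lt_pow_right Finite.one_lt_card (by linarith))
  refine ⟨fun i ↦ u.1 i, fun i ↦ u.2 i, fun i ↦ (u.1 i).2, fun i ↦ (u.2 i).2, fun h0 ↦ hu0 ?_,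
    congr_arg Subtype.val hu⟩
  ext i : 3
  exacts [congr_fun (congr_arg Prod.fst h0) i, congr_fun (congr_arg Prod.snd h0) i]

theorem eval_digitSum_pow {p j I : ℕ} [Fact p.Prime] [CharP K p] (U : Fin I → K[X]) {z : K}
    (hz : z ^ (p ^ j) ^ 2 = z) :
    (digitSum (p ^ j) U).eval z ^ p ^ j = ∑ i : Fin I, z ^ (i : ℕ) * (U i).eval z ^ p ^ j := by
  simp only [digitSum, eval_finsetSum, sum_pow_char_pow, eval_mul, eval_pow, eval_X, mul_pow]
  refine sum_congr rfl fun i _ ↦ ?_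
  rw [← pow_mul, show p ^ j * (i : ℕ) * p ^ j = (p ^ j) ^ 2 * i by ring, pow_mul, hz]

theorem eval_digitSum_add_mul_digitSum_eq_zero {p j I : ℕ} [Fact p.Prime] [CharP K p] {h : K[X]}
    {U V : Fin I → K[X]}
    (hUV : ∑ i : Fin I, X ^ (i : ℕ) * (U i ^ p ^ j + h * V i ^ p ^ j) = 0) {z : K}
    (hz : z ^ (p ^ j) ^ 2 = z) (hh : h.eval z ^ p ^ j = h.eval z) :
    (digitSum (p ^ j) U + h * digitSum (p ^ j) V).eval z = 0 := by
  refine eq_zero_of_pow_eq_zero (n := p ^ j) ?_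
  rw [← eval_zero (x := z), ← hUV, eval_finsetSum, eval_add, eval_mul, add_pow_char_pow, mul_pow,
    hh, eval_digitSum_pow _ hz, eval_digitSum_pow _ hz, mul_sum, ← sum_add_distrib]
  refine sum_congr rfl fun i _ ↦ ?_
  simp only [eval_mul, eval_add, eval_pow, eval_X]
  ring

theorem exists_charP_pow_eq_of_card_eq_sq [Fintype K] {r : ℕ} (hcard : Fintype.card K = r ^ 2) :
    ∃ p j : ℕ, p.Prime ∧ CharP K p ∧ r = p ^ j := by
  obtain ⟨p, _, n, hp, hn⟩ := FiniteField.card' K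
  obtain ⟨j, -, hj⟩ := (Nat.dvd_prime_pow hp).1 (hn ▸ hcard ▸ dvd_pow_self r two_ne_zero)
  exact ⟨p, j, hp, ‹_›, hj⟩

/-- With `h = f ^ (m + 1)`, a point `x` where `f(x) ^ (2 * m * (m + 1)) = 1` satisfies
`h(x) ^ r = h(x)`, while `x ^ r ^ 2 = x`. For `A = P + h * Q`, these relations turn `A(x) ^ r` into
the value of a polynomial of small degree, which depends additively on `P` and `Q` because `r` is a
power of the characteristic; by the pigeonhole principle it vanishes for some `A ≠ 0`. -/
theorem card_filter_eval_pow_eq_one_le [Fintype K] [DecidableEq K] {r m g : ℕ}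
    (hcard : Fintype.card K = r ^ 2) (hr : r = 2 * m + 1) (hg : g < m) {f : K[X]}
    (hf : f.natDegree = 2 * g + 1) :
    #{x | f.eval x ^ (2 * m * (m + 1)) = 1} ≤ (m + 2 * g + 1) * r := by
  obtain ⟨p, j, hp, _, hj⟩ := exists_charP_pow_eq_of_card_eq_sq hcard
  have : Fact p.Prime := ⟨hp⟩
  obtain ⟨b, rfl⟩ := Nat.exists_eq_add_of_lt hg
  set m := g + b + 1 with hm
  set h := f ^ (m + 1) with hh
  have hdeg : h.natDegree = r * g + (m + 1 + g) := by
    rw [natDegree_pow, hf, hr]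
    ring
  have h0 : h ≠ 0 := ne_zero_of_natDegree_gt (n := 0) (by lia)
  have hdiv : h.natDegree / r = g := by
    rw [hdeg, Nat.mul_add_div (by lia), Nat.div_eq_of_lt (by lia), add_zero]
  have hmod : h.natDegree % r = m + 1 + g := by
    rw [hdeg, Nat.mul_add_mod, Nat.mod_eq_of_lt (by lia)]
  obtain ⟨U, V, hU, hV, hUV, hΦ⟩ := exists_sum_pow_add_mul_pow_eq_zero (K := K) p j
    (I := m + g + 1) (a := m) (b := b) (M := r * m + (m + g + 1)) (h := h)
    (by rw [hj]) (by rw [hdeg, ← hj, hm]; nlinarith) (by rw [hr, hm]; nlinarith)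
  set A := digitSum r U + h * digitSum r V with hA
  have hA0 : A ≠ 0 := digitSum_add_mul_digitSum_ne_zero h0 (by lia) (by lia) (by lia) hU hV hUV
  have hAdeg : A.natDegree < (m + 2 * g + 1) * r :=
    (natDegree_digitSum_add_mul_digitSum_lt (by lia) (by lia) (by lia) (by lia) hU hV).trans_eq
      (by rw [hdiv]; ring)
  suffices h_root : ∀ x, f.eval x ^ (2 * m * (m + 1)) = 1 → A.eval x = 0 by
    have hsub : ({x | f.eval x ^ (2 * m * (m + 1)) = 1} : Finset K) ⊆ A.roots.toFinset :=
      fun x hx ↦ by simp_all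
    exact (card_le_card hsub).trans (A.roots.toFinset_card_le.trans
      (A.card_roots'.trans hAdeg.le))
  intro x hx
  subst hj
  refine eval_digitSum_add_mul_digitSum_eq_zero hΦ (hcard ▸ FiniteField.pow_card x) ?_
  rw [hh, eval_pow, ← pow_mul, hr,
    show (m + 1) * (2 * m + 1) = 2 * m * (m + 1) + (m + 1) by ring, pow_add, hx, one_mul]

end Stepanov

section QuadraticSums

variable {K : Type*} [Field K] [Fintype K] [DecidableEq K]

theorem sum_quadraticChar_add_card (hK : ringChar K ≠ 2) (F : K → K) :
    ∑ x, quadraticChar K (F x) + Fintype.card K =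
      2 * #{x | F x ^ (Fintype.card K / 2) = 1} + #{x | F x = 0} := by
  have pointwise (u : K) : quadraticChar K u + 1 =
      2 * (if u ^ (Fintype.card K / 2) = 1 then 1 else 0) + if u = 0 then 1 else 0 := by
    by_cases hu : u = 0
    · simp [hu, (Nat.div_pos (Fintype.one_lt_card (α := K)) two_pos).ne']
    · rw [quadraticChar_eq_pow_of_char_ne_two hK hu]
      split_ifs <;> rfl
  calc ∑ x, quadraticChar K (F x) + Fintype.card K
      = ∑ x, (quadraticChar K (F x) + 1) := by simp [sum_add_distrib]
    _ = _ := by simp only [pointwise, sum_add_distrib, ← mul_sum, sum_boole]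

variable {r : ℕ} {f : K[X]}

theorem sum_quadraticChar_le_of_odd_natDegree (hK : ringChar K ≠ 2)
    (hcard : Fintype.card K = r ^ 2) (hodd : Odd f.natDegree) (hlt : f.natDegree < r) :
    ∑ x, quadraticChar K (f.eval x) ≤ 2 * f.natDegree * r := by
  obtain ⟨m, hm⟩ : Odd r :=
    (Nat.odd_pow_iff two_ne_zero).1 (hcard ▸ Nat.odd_iff.2 (FiniteField.odd_card_of_char_ne_two hK))
  obtain ⟨g, hg⟩ := hodd
  have hhalf : Fintype.card K / 2 = 2 * m * (m + 1) := by
    rw [hcard, hm, show (2 * m + 1) ^ 2 = 2 * (2 * m * (m + 1)) + 1 by ring]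
    lia
  have hzeros : #{x | f.eval x = 0} ≤ f.natDegree := by
    have hf : f ≠ 0 := ne_zero_of_natDegree_gt (n := 0) (by lia)
    refine (card_le_card fun x hx ↦ ?_).trans (f.roots.toFinset_card_le.trans f.card_roots')
    simp_all
  have hpoints := card_filter_eval_pow_eq_one_le hcard hm (g := g) (by lia) hg
  have hsum := sum_quadraticChar_add_card hK fun x ↦ f.eval x
  rw [hhalf, hcard] at hsum
  zify at hpoints hzeros hlt hg
  have hm' : (r : ℤ) ^ 2 = (2 * m + 1) * r := by
    rw [sq, hm]
    push_cast
    ring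
  push_cast at hsum
  rw [hg] at hzeros hlt ⊢
  linarith

theorem abs_sum_quadraticChar_le_of_odd_natDegree (hK : ringChar K ≠ 2)
    (hcard : Fintype.card K = r ^ 2) (hodd : Odd f.natDegree) (hlt : f.natDegree < r) :
    |∑ x, quadraticChar K (f.eval x)| ≤ 2 * f.natDegree * r := by
  obtain ⟨e, he⟩ := quadraticChar_exists_neg_one hK
  have he0 : e ≠ 0 := by rintro rfl; simp at he
  have hneg := sum_quadraticChar_le_of_odd_natDegree (f := C e * f) hK hcard
    (by rwa [natDegree_C_mul he0]) (by rwa [natDegree_C_mul he0])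
  simp only [natDegree_C_mul he0, eval_mul, eval_C, map_mul, he, neg_one_mul, sum_neg_distrib]
    at hneg
  exact abs_le'.2 ⟨sum_quadraticChar_le_of_odd_natDegree hK hcard hodd hlt, hneg⟩

theorem sum_quadraticChar_reverse {G : K[X]} (hodd : Odd G.natDegree) :
    ∑ x, quadraticChar K (G.reverse.eval x) =
      ∑ x, quadraticChar K (x * G.eval x) + quadraticChar K (G.reverse.eval 0) := by
  have pointwise (x : K) : quadraticChar K (G.reverse.eval x⁻¹) =
      quadraticChar K (x * G.eval x) + if x = 0 then quadraticChar K (G.reverse.eval 0) else 0 := by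
    rcases eq_or_ne x 0 with rfl | hx
    · simp
    let := invertibleOfNonzero hx
    have heval : G.reverse.eval x⁻¹ * x ^ G.natDegree = G.eval x := by
      simpa using eval₂_reverse_mul_pow (RingHom.id K) x G
    obtain ⟨n, hn⟩ := hodd
    rw [if_neg hx, add_zero, ← heval, hn, show x * (G.reverse.eval x⁻¹ * x ^ (2 * n + 1)) =
      (x ^ (n + 1)) ^ 2 * G.reverse.eval x⁻¹ by ring, map_mul,
      quadraticChar_sq_one' (pow_ne_zero _ hx), one_mul]
  calc ∑ x, quadraticChar K (G.reverse.eval x)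
      = ∑ x, quadraticChar K (G.reverse.eval x⁻¹) :=
        (inv_involutive.bijective.sum_comp fun x ↦ quadraticChar K (G.reverse.eval x)).symm
    _ = _ := by simp only [pointwise, sum_add_distrib, sum_ite_eq', mem_univ, if_true]

theorem abs_quadraticChar_le_one (u : K) : |quadraticChar K u| ≤ 1 := by
  rcases eq_or_ne u 0 with rfl | hu
  · simp
  · rcases quadraticChar_dichotomy hu with h | h <;> simp [h]

/-- In even degree, the substitution `x ↦ x⁻¹` exchanges `X * G` for the reverse of `G`, which has
odd degree. -/
theorem abs_sum_quadraticChar_X_mul_le {G : K[X]} (hK : ringChar K ≠ 2)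
    (hcard : Fintype.card K = r ^ 2) (hG : G.coeff 0 ≠ 0) (hlt : (X * G).natDegree < r) :
    |∑ x, quadraticChar K ((X * G).eval x)| ≤ 2 * (X * G).natDegree * r := by
  rcases Nat.even_or_odd (X * G).natDegree with heven | hodd
  · have hdeg : (X * G).natDegree = G.natDegree + 1 :=
      natDegree_X_mul (by rintro rfl; exact hG (coeff_zero 0))
    have hodd : Odd G.natDegree := by grind
    have hrev : G.reverse.natDegree = G.natDegree := by
      rw [reverse_natDegree, natTrailingDegree_eq_zero_of_constantCoeff_ne_zero hG, Nat.sub_zero]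
    have hbound := abs_sum_quadraticChar_le_of_odd_natDegree (f := G.reverse) hK hcard
      (by rwa [hrev]) (by lia)
    have hchar := abs_quadraticChar_le_one (G.reverse.eval 0)
    rw [hrev, sum_quadraticChar_reverse hodd] at hbound
    simp only [eval_mul, eval_X, hdeg]
    zify at hlt hdeg
    rw [abs_le] at *
    constructor <;> push_cast <;> nlinarith
  · exact abs_sum_quadraticChar_le_of_odd_natDegree hK hcard hodd hlt

end QuadraticSums

section CharSum

variable {F : Type*} [Field F]

/-- The complete mixed character sum `∑ₓ χ(N(∏_{c ∈ T} (x - c))) ψ(Tr x)` over an extension `K` of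
`F`, where the norm and the trace are those of `K` over `F`. -/
noncomputable def charSum (χ : MulChar F ℂ) (ψ : AddChar F ℂ) (T : Finset F) (K : Type*) [Field K]
    [Fintype K] [Algebra F K] : ℂ :=
  ∑ x : K, χ (Algebra.norm F (∏ c ∈ T, (x - algebraMap F K c))) * ψ (Algebra.trace F K x)

variable [Fintype F] {K : Type*} [Field K] [Algebra F K]

variable (F K) in
/-- The `F`-linear Artin–Schreier map `z ↦ z ^ q - z`, where `q` is the cardinality of `F`. -/
noncomputable def artinSchreier : K →ₗ[F] K :=
  (FiniteField.frobeniusAlgHom F K).toLinearMap - LinearMap.id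

theorem artinSchreier_apply (z : K) : artinSchreier F K z = z ^ Fintype.card F - z := rfl

section

variable [Finite K]

theorem pow_card_eq_self_iff_mem_range_algebraMap {z : K} :
    z ^ Fintype.card F = z ↔ z ∈ Set.range (algebraMap F K) := by
  refine ⟨fun hz ↦ (IsGalois.mem_range_algebraMap_iff_fixed z).2 fun σ ↦ ?_, ?_⟩
  · obtain ⟨n, rfl⟩ := (FiniteField.bijective_frobeniusAlgEquivOfAlgebraic_pow F K).2 σ
    rw [AlgEquiv.coe_pow, FiniteField.coe_frobeniusAlgEquivOfAlgebraic]
    exact Function.IsFixedPt.iterate hz n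
  · rintro ⟨c, rfl⟩
    rw [← map_pow, FiniteField.pow_card]

theorem ker_artinSchreier :
    LinearMap.ker (artinSchreier F K) = LinearMap.range (Algebra.linearMap F K) := by
  ext z
  rw [LinearMap.mem_ker, artinSchreier_apply, sub_eq_zero]
  exact pow_card_eq_self_iff_mem_range_algebraMap

theorem finrank_ker_artinSchreier : Module.finrank F (LinearMap.ker (artinSchreier F K)) = 1 := by
  rw [ker_artinSchreier, LinearMap.finrank_range_of_inj (algebraMap F K).injective,
    Module.finrank_self]

/-- The additive form of Hilbert 90. -/
theorem range_artinSchreier :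
    LinearMap.range (artinSchreier F K) = LinearMap.ker (Algebra.trace F K) := by
  refine Submodule.eq_of_le_of_finrank_eq ?_ ?_
  · rintro _ ⟨z, rfl⟩
    rw [LinearMap.mem_ker, artinSchreier_apply, map_sub, sub_eq_zero]
    exact Algebra.trace_eq_of_algEquiv (FiniteField.frobeniusAlgEquivOfAlgebraic F K) z
  · have hL := (artinSchreier F K).finrank_range_add_finrank_ker
    have htr := (Algebra.trace F K).finrank_range_add_finrank_ker
    rw [finrank_ker_artinSchreier] at hL
    rw [LinearMap.range_eq_top.2 (Algebra.trace_surjective F K), finrank_top,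
      Module.finrank_self] at htr
    lia

end

variable [Fintype K]

theorem card_half_eq_of_algebra (hF : ringChar F ≠ 2) :
    (Fintype.card K - 1) / (Fintype.card F - 1) * (Fintype.card F / 2) = Fintype.card K / 2 := by
  obtain ⟨s, hs⟩ : Odd (Fintype.card F) := Nat.odd_iff.2 (FiniteField.odd_card_of_char_ne_two hF)
  obtain ⟨t, ht⟩ : Fintype.card F - 1 ∣ Fintype.card K - 1 := by
    rw [Module.card_eq_pow_finrank (K := F) (V := K)]
    exact Nat.sub_one_dvd_pow_sub_one _ _
  have hF1 : 1 < Fintype.card F := Fintype.one_lt_card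
  have hK1 : 1 < Fintype.card K := Fintype.one_lt_card
  rw [hs, Nat.add_sub_cancel] at ht
  have hK : Fintype.card K = 2 * (s * t) + 1 := by lia
  rw [ht, hs, Nat.add_sub_cancel, Nat.mul_div_cancel_left _ (by lia), hK,
    show (2 * s + 1) / 2 = s by lia, mul_comm]
  lia

theorem quadraticChar_norm [DecidableEq F] [DecidableEq K] (hF : ringChar F ≠ 2) (u : K) :
    quadraticChar F (Algebra.norm F u) = quadraticChar K u := by
  have hK : ringChar K ≠ 2 := Algebra.ringChar_eq F K ▸ hF
  rcases eq_or_ne u 0 with rfl | hu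
  · simp [Algebra.norm_zero]
  have hN : Algebra.norm F u ≠ 0 := Algebra.norm_ne_zero_iff.2 hu
  have hcast : ((quadraticChar F (Algebra.norm F u) : ℤ) : K) = (quadraticChar K u : ℤ) := by
    rw [quadraticChar_eq_pow_of_char_ne_two' hK, ← card_half_eq_of_algebra (K := K) hF, pow_mul,
      ← Nat.card_eq_fintype_card, ← Nat.card_eq_fintype_card,
      ← FiniteField.algebraMap_norm_eq_pow, ← map_pow, Nat.card_eq_fintype_card,
      ← quadraticChar_eq_pow_of_char_ne_two' hF, map_intCast]
  refine Int.cast_injOn_of_ringChar_ne_two hK ?_ ?_ hcast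
  · rcases quadraticChar_dichotomy hN with h | h <;> simp [h]
  · rcases quadraticChar_dichotomy hu with h | h <;> simp [h]

theorem card_filter_pow_card_sub_eq [DecidableEq K] [DecidableEq F] (x : K) :
    #{z : K | z ^ Fintype.card F - z = x} =
      if Algebra.trace F K x = 0 then Fintype.card F else 0 := by
  have hx : Algebra.trace F K x = 0 ↔ x ∈ Set.range (artinSchreier F K) := by
    rw [← LinearMap.mem_ker, ← range_artinSchreier]
    rfl
  simp only [hx]
  split_ifs with h
  · have hcard := Module.natCard_eq_pow_finrank (K := F) (V := LinearMap.ker (artinSchreier F K))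
    rw [finrank_ker_artinSchreier, pow_one, Nat.card_eq_fintype_card (α := F)] at hcard
    calc #{z : K | z ^ Fintype.card F - z = x} = #{z : K | artinSchreier F K z = 0} :=
          AddMonoidHom.card_fiber_eq_of_mem_range (artinSchreier F K) h ⟨0, map_zero _⟩
      _ = Fintype.card F := (Nat.subtype_card _ (by simp)).symm.trans hcard
  · exact card_eq_zero.2 (filter_eq_empty_iff.2 fun z _ hz ↦ h ⟨z, hz⟩)

theorem sum_charSum (χ : MulChar F ℂ) (T : Finset F) :
    ∑ ψ : AddChar F ℂ, charSum χ ψ T K =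
      ∑ z : K, χ (Algebra.norm F (∏ c ∈ T, (z ^ Fintype.card F - z - algebraMap F K c))) := by
  classical
  simp only [charSum]
  rw [sum_comm, ← sum_fiberwise (univ : Finset K) (fun z ↦ z ^ Fintype.card F - z)
    fun z ↦ χ (Algebra.norm F (∏ c ∈ T, (z ^ Fintype.card F - z - algebraMap F K c)))]
  refine sum_congr rfl fun x _ ↦ ?_
  have hfiber : ∀ z ∈ ({z | z ^ Fintype.card F - z = x} : Finset K),
      χ (Algebra.norm F (∏ c ∈ T, (z ^ Fintype.card F - z - algebraMap F K c))) =
        χ (Algebra.norm F (∏ c ∈ T, (x - algebraMap F K c))) := fun z hz ↦ by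
    rw [(mem_filter.1 hz).2]
  rw [← mul_sum, AddChar.sum_apply_eq_ite, sum_congr rfl hfiber, sum_const,
    card_filter_pow_card_sub_eq (F := F) x, nsmul_eq_mul, mul_comm, Nat.cast_ite, Nat.cast_zero]

variable (K) in
theorem abs_sum_quadraticChar_prod_pow_card_sub_le [DecidableEq K] {T : Finset F} {r : ℕ}
    (hF : ringChar F ≠ 2) (hT : 0 ∈ T) (hcard : Fintype.card K = r ^ 2)
    (hlt : Fintype.card F * #T < r) :
    |∑ z : K, quadraticChar K (∏ c ∈ T, (z ^ Fintype.card F - z - algebraMap F K c))| ≤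
      2 * (Fintype.card F * #T : ℕ) * r := by
  classical
  set q := Fintype.card F
  have hq : 1 < q := Fintype.one_lt_card
  let P (c : F) : K[X] := X ^ q - X - C (algebraMap F K c)
  let G : K[X] := (X ^ (q - 1) - 1) * ∏ c ∈ T.erase 0, P c
  have hP c : (P c).natDegree = q := by
    rw [natDegree_sub_C, FiniteField.X_pow_card_sub_X_natDegree_eq K hq]
  have hXG : X * G = ∏ c ∈ T, P c := by
    rw [← mul_prod_erase T P hT, ← mul_assoc, mul_sub, mul_one, mul_pow_sub_one (by lia)]
    simp [P]
  have hdeg : (X * G).natDegree = q * #T := by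
    rw [hXG, natDegree_prod _ _ fun c _ ↦ ne_zero_of_natDegree_gt (n := 0) (by rw [hP]; lia)]
    simp [hP, mul_comm]
  have hG : G.coeff 0 ≠ 0 := by
    simp only [coeff_zero_eq_eval_zero, G, P, eval_mul, eval_prod]
    simp +contextual [prod_ne_zero_iff, zero_pow (show q - 1 ≠ 0 by lia),
      zero_pow (show q ≠ 0 by lia)]
  have hbound := abs_sum_quadraticChar_X_mul_le (Algebra.ringChar_eq F K ▸ hF) hcard hG
    (by rwa [hdeg])
  rw [hdeg, hXG] at hbound
  simpa only [P, eval_prod, eval_sub, eval_pow, eval_X, eval_C] using hbound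

/-- The quadratic character with complex values. -/
noncomputable def complexQuadraticChar (F : Type*) [Field F] [Fintype F] [DecidableEq F] :
    MulChar F ℂ :=
  (quadraticChar F).ringHomComp (Int.castRingHom ℂ)

theorem norm_sum_charSum_complexQuadraticChar_le [DecidableEq F] {T : Finset F} {r : ℕ}
    (hF : ringChar F ≠ 2) (hT : 0 ∈ T) (hcard : Fintype.card K = r ^ 2)
    (hlt : Fintype.card F * #T < r) :
    ‖∑ ψ : AddChar F ℂ, charSum (complexQuadraticChar F) ψ T K‖ ≤
      2 * (Fintype.card F * #T) * r := by
  classical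
  have hsum : ∑ ψ : AddChar F ℂ, charSum (complexQuadraticChar F) ψ T K =
      (∑ z : K, quadraticChar K (∏ c ∈ T, (z ^ Fintype.card F - z - algebraMap F K c)) : ℤ) := by
    rw [sum_charSum]
    simp [complexQuadraticChar, quadraticChar_norm hF]
  rw [hsum, Complex.norm_intCast]
  exact_mod_cast abs_sum_quadraticChar_prod_pow_card_sub_le K hF hT hcard hlt

end CharSum

section MonicSums

variable {F : Type*} [Field F]

open scoped Classical in
theorem pow_dvd_iff_le_count_normalizedFactors {g π : F[X]} (hg : g ≠ 0) (hmon : π.Monic)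
    (hirr : Irreducible π) (e : ℕ) :
    π ^ e ∣ g ↔ e ≤ (UniqueFactorizationMonoid.normalizedFactors g).count π := by
  have := UniqueFactorizationMonoid.emultiplicity_eq_count_normalizedFactors hirr hg
  rw [hmon.normalize_eq_self] at this
  rw [pow_dvd_iff_le_emultiplicity, this, Nat.cast_le]

open scoped Classical in
theorem sum_count_normalizedFactors_mul_natDegree {g : F[X]} (hg : g.Monic) :
    ∑ π ∈ (UniqueFactorizationMonoid.normalizedFactors g).toFinset,
      (UniqueFactorizationMonoid.normalizedFactors g).count π * π.natDegree = g.natDegree := by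
  have hdeg := natDegree_multiset_prod_of_monic (UniqueFactorizationMonoid.normalizedFactors g)
    fun π hπ ↦ ((Polynomial.mem_normalizedFactors_iff hg.ne_zero).1 hπ).2.1
  have hprod := UniqueFactorizationMonoid.prod_normalizedFactors_eq hg.ne_zero
  rw [hprod, hg.normalize_eq_self, sum_multiset_map_count] at hdeg
  exact hdeg.symm

variable (F) [Finite F]

theorem finite_monic_natDegree_eq (n : ℕ) : {g : F[X] | g.Monic ∧ g.natDegree = n}.Finite :=
  have : Finite (degreeLT F n) := .of_equiv _ (degreeLTEquiv F n).symm.toEquiv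
  .of_equiv _ (monicEquivDegreeLT (R := F) n).symm

/-- The monic polynomials of degree `n`. -/
noncomputable def monics (n : ℕ) : Finset F[X] :=
  (finite_monic_natDegree_eq F n).toFinset

open scoped Classical in
/-- The monic irreducible polynomials of degree dividing `k`, where `k ≠ 0`; there are none for
`k = 0`, so that sums over them start with a zero term. -/
noncomputable def monicIrreducibles (k : ℕ) : Finset F[X] :=
  {π ∈ k.divisors.biUnion (monics F) | Irreducible π}

variable {F}

theorem mem_monics {n : ℕ} {g : F[X]} : g ∈ monics F n ↔ g.Monic ∧ g.natDegree = n := by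
  simp [monics]

theorem mem_monicIrreducibles {k : ℕ} {π : F[X]} :
    π ∈ monicIrreducibles F k ↔ π.Monic ∧ Irreducible π ∧ π.natDegree ∣ k ∧ k ≠ 0 := by
  simp only [monicIrreducibles, mem_filter, mem_biUnion, mem_monics, Nat.mem_divisors]
  grind

open scoped Classical in
theorem sum_natDegree_monicIrreducibles_pow_dvd {n : ℕ} {g : F[X]} (hg : g ∈ monics F n) :
    ∑ k ∈ range (n + 1),
      ∑ π ∈ monicIrreducibles F k with π ^ (k / π.natDegree) ∣ g, π.natDegree = n := by
  obtain ⟨hmon, rfl⟩ := mem_monics.1 hg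
  set s := UniqueFactorizationMonoid.normalizedFactors g
  have mem_s π : π ∈ s ↔ Irreducible π ∧ π.Monic ∧ π ∣ g :=
    Polynomial.mem_normalizedFactors_iff hmon.ne_zero
  have pow_dvd {π} (hπ : π.Monic) (hirr : Irreducible π) e : π ^ e ∣ g ↔ e ≤ s.count π :=
    pow_dvd_iff_le_count_normalizedFactors hmon.ne_zero hπ hirr e
  have exchange (k : ℕ) (π : F[X]) : k ∈ range (g.natDegree + 1) ∧
      π ∈ {π ∈ monicIrreducibles F k | π ^ (k / π.natDegree) ∣ g} ↔
      k ∈ (Icc 1 (s.count π)).image (· * π.natDegree) ∧ π ∈ s.toFinset := by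
    simp only [mem_range, mem_filter, mem_monicIrreducibles, mem_image, mem_Icc,
      Multiset.mem_toFinset, mem_s]
    constructor
    · rintro ⟨-, ⟨hπ, hirr, ⟨e, rfl⟩, hk⟩, hdvd⟩
      have he : e ≠ 0 := right_ne_zero_of_mul hk
      rw [Nat.mul_div_cancel_left _ hirr.natDegree_pos] at hdvd
      exact ⟨⟨e, ⟨by lia, (pow_dvd hπ hirr e).1 hdvd⟩, mul_comm _ _⟩, hirr, hπ,
        (dvd_pow_self π he).trans hdvd⟩
    · rintro ⟨⟨e, ⟨he, hle⟩, rfl⟩, hirr, hπ, -⟩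
      have hdvd := (pow_dvd hπ hirr e).2 hle
      have hdeg := natDegree_le_of_dvd hdvd hmon.ne_zero
      rw [natDegree_pow] at hdeg
      have hpos := hirr.natDegree_pos
      rw [Nat.mul_div_cancel _ hpos]
      exact ⟨by lia, ⟨hπ, hirr, dvd_mul_left _ _, by positivity⟩, hdvd⟩
  rw [sum_comm' exchange, ← sum_count_normalizedFactors_mul_natDegree hmon]
  refine sum_congr rfl fun π hπ ↦ ?_
  have hpos := ((mem_s π).1 (Multiset.mem_toFinset.1 hπ)).1.natDegree_pos
  rw [sum_const, card_image_of_injective _ (mul_left_injective₀ hpos.ne'), Nat.card_Icc,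
    smul_eq_mul, Nat.add_sub_cancel]

variable {R : Type*} [CommSemiring R]

/-- The sum of `Λ` over the monic polynomials of degree `n`, that is, the `n`-th coefficient of
the `L`-series `∑ Λ(g) u ^ deg g` over monic `g`. -/
noncomputable def monicSum (Λ : F[X] → R) (n : ℕ) : R :=
  ∑ g ∈ monics F n, Λ g

/-- The von Mangoldt-type sum of `deg π * Λ(π ^ e)` over the prime powers `π ^ e` of degree `k`,
that is, the `k`-th coefficient of `u L'(u) / L(u)` for the `L`-series of a completely
multiplicative `Λ`. -/
noncomputable def primePowerSum (Λ : F[X] → R) (k : ℕ) : R :=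
  ∑ π ∈ monicIrreducibles F k, π.natDegree * Λ (π ^ (k / π.natDegree))

theorem monicSum_zero (Λ : F[X] → R) : monicSum Λ 0 = Λ 1 := by
  have : monics F 0 = {1} := by
    ext g
    rw [mem_monics, mem_singleton]
    refine ⟨fun h ↦ h.1.natDegree_eq_zero.1 h.2, ?_⟩
    rintro rfl
    exact ⟨monic_one, natDegree_one⟩
  rw [monicSum, this, sum_singleton]

variable {Λ : F[X] → R}

open scoped Classical in
theorem sum_monics_filter_dvd (hΛ : ∀ g h : F[X], g.Monic → h.Monic → Λ (g * h) = Λ g * Λ h)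
    {n k : ℕ} (hk : k ≤ n) {q : F[X]} (hq : q ∈ monics F k) :
    ∑ g ∈ monics F n with q ∣ g, Λ g = Λ q * monicSum Λ (n - k) := by
  obtain ⟨hmon, rfl⟩ := mem_monics.1 hq
  rw [monicSum, mul_sum]
  symm
  refine sum_bij (fun h _ ↦ q * h) (fun h hh ↦ ?_)
    (fun _ _ _ _ h ↦ mul_left_cancel₀ hmon.ne_zero h) (fun g hg ↦ ?_)
    fun h hh ↦ (hΛ q h hmon (mem_monics.1 hh).1).symm
  · obtain ⟨hh, hdeg⟩ := mem_monics.1 hh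
    exact mem_filter.2 ⟨mem_monics.2 ⟨hmon.mul hh, by rw [hmon.natDegree_mul hh]; lia⟩,
      dvd_mul_right _ _⟩
  · obtain ⟨hg, h, rfl⟩ := mem_filter.1 hg
    obtain ⟨hg, hdeg⟩ := mem_monics.1 hg
    have hh : h.Monic := hmon.of_mul_monic_left hg
    rw [hmon.natDegree_mul hh] at hdeg
    exact ⟨h, mem_monics.2 ⟨hh, by lia⟩, rfl⟩

theorem natCast_mul_monicSum (hΛ : ∀ g h : F[X], g.Monic → h.Monic → Λ (g * h) = Λ g * Λ h)
    (n : ℕ) :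
    n * monicSum Λ n = ∑ ij ∈ antidiagonal n, primePowerSum Λ ij.1 * monicSum Λ ij.2 := by
  classical
  have swap (k : ℕ) (hk : k ∈ range (n + 1)) :
      ∑ g ∈ monics F n, ∑ π ∈ monicIrreducibles F k with π ^ (k / π.natDegree) ∣ g,
        (π.natDegree : R) * Λ g = primePowerSum Λ k * monicSum Λ (n - k) := by
    rw [primePowerSum, sum_mul, sum_comm' (t' := monicIrreducibles F k)
      (s' := fun π ↦ {g ∈ monics F n | π ^ (k / π.natDegree) ∣ g})
      (by simp only [mem_filter]; tauto)]
    refine sum_congr rfl fun π hπ ↦ ?_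
    obtain ⟨hmon, -, hdvd, -⟩ := mem_monicIrreducibles.1 hπ
    have hmem : π ^ (k / π.natDegree) ∈ monics F k :=
      mem_monics.2 ⟨hmon.pow _, by rw [natDegree_pow, Nat.div_mul_cancel hdvd]⟩
    rw [← mul_sum, sum_monics_filter_dvd hΛ (by simpa using mem_range_succ_iff.1 hk) hmem,
      mul_assoc]
  calc n * monicSum Λ n
      = ∑ g ∈ monics F n, ∑ k ∈ range (n + 1),
          ∑ π ∈ monicIrreducibles F k with π ^ (k / π.natDegree) ∣ g, (π.natDegree : R) * Λ g := by
        rw [monicSum, mul_sum]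
        refine sum_congr rfl fun g hg ↦ ?_
        simp only [← sum_mul, ← Nat.cast_sum, sum_natDegree_monicIrreducibles_pow_dvd hg]
    _ = ∑ k ∈ range (n + 1), primePowerSum Λ k * monicSum Λ (n - k) := by
        rw [sum_comm, sum_congr rfl swap]
    _ = _ := (Nat.sum_antidiagonal_eq_sum_range_succ
        (fun i j ↦ primePowerSum Λ i * monicSum Λ j) n).symm

end MonicSums

section CharWeight

variable {F : Type*} [Field F] (χ : MulChar F ℂ) (ψ : AddChar F ℂ) (T : Finset F)

/-- The multiplicative function on monic polynomials which, on the power of the minimal polynomial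
of `x : K` of degree `[K : F]`, takes the value `χ(N(∏_{c ∈ T} (x - c))) ψ(Tr x)`. -/
noncomputable def charWeight (g : F[X]) : ℂ :=
  χ (∏ c ∈ T, (-1) ^ g.natDegree * g.eval c) * ψ (-g.nextCoeff)

theorem charWeight_one : charWeight χ ψ T 1 = 1 := by
  simp [charWeight, nextCoeff]

theorem charWeight_mul {g h : F[X]} (hg : g.Monic) (hh : h.Monic) :
    charWeight χ ψ T (g * h) = charWeight χ ψ T g * charWeight χ ψ T h := by
  have hprod : ∏ c ∈ T, (-1) ^ (g * h).natDegree * (g * h).eval c =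
      (∏ c ∈ T, (-1) ^ g.natDegree * g.eval c) * ∏ c ∈ T, (-1) ^ h.natDegree * h.eval c := by
    rw [← prod_mul_distrib]
    refine prod_congr rfl fun c _ ↦ ?_
    rw [hg.natDegree_mul hh, eval_mul]
    ring
  rw [charWeight, hprod, map_mul, hg.nextCoeff_mul hh, neg_add, AddChar.map_add_eq_mul, charWeight,
    charWeight]
  ring

section

open IntermediateField

variable {K : Type*} [Field K] [Algebra F K] [FiniteDimensional F K] (x : K)

theorem finrank_adjoin_singleton_eq_div :
    Module.finrank F⟮x⟯ K = Module.finrank F K / (minpoly F x).natDegree := by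
  have hx : IsIntegral F x := .of_finite F x
  rw [← Module.finrank_mul_finrank F F⟮x⟯ K, adjoin.finrank hx,
    Nat.mul_div_cancel_left _ (minpoly.natDegree_pos hx)]

theorem norm_eq_coeff_zero_minpoly_pow :
    Algebra.norm F x = ((-1) ^ (minpoly F x).natDegree * (minpoly F x).coeff 0) ^
      (Module.finrank F K / (minpoly F x).natDegree) := by
  have hx : IsIntegral F x := .of_finite F x
  have hgen := Algebra.PowerBasis.norm_gen_eq_coeff_zero_minpoly (adjoin.powerBasis hx)
  rw [adjoin.powerBasis_gen, adjoin.powerBasis_dim, minpoly_gen] at hgen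
  rw [Algebra.norm_eq_norm_adjoin, hgen, finrank_adjoin_singleton_eq_div]

theorem norm_sub_algebraMap_eq_eval_minpoly_pow (c : F) :
    Algebra.norm F (x - algebraMap F K c) =
      ((-1) ^ (minpoly F x).natDegree * (minpoly F x).eval c) ^
        (Module.finrank F K / (minpoly F x).natDegree) := by
  rw [norm_eq_coeff_zero_minpoly_pow, minpoly.sub_algebraMap, natDegree_comp, natDegree_X_add_C,
    mul_one, coeff_zero_eq_eval_zero, eval_comp]
  simp

theorem charWeight_minpoly_pow :
    charWeight χ ψ T (minpoly F x ^ (Module.finrank F K / (minpoly F x).natDegree)) =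
      χ (Algebra.norm F (∏ c ∈ T, (x - algebraMap F K c))) * ψ (Algebra.trace F K x) := by
  have hx : (minpoly F x).Monic := minpoly.monic (.of_finite F x)
  have hnorm : Algebra.norm F (∏ c ∈ T, (x - algebraMap F K c)) =
      ∏ c ∈ T, ((-1) ^ (minpoly F x).natDegree * (minpoly F x).eval c) ^
        (Module.finrank F K / (minpoly F x).natDegree) := by
    rw [map_prod]
    exact prod_congr rfl fun c _ ↦ norm_sub_algebraMap_eq_eval_minpoly_pow x c
  rw [charWeight, hnorm, trace_eq_finrank_mul_minpoly_nextCoeff, finrank_adjoin_singleton_eq_div,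
    hx.nextCoeff_pow, natDegree_pow, nsmul_eq_mul, mul_neg]
  simp only [eval_pow, mul_pow, ← pow_mul, mul_comm]

end

variable {T χ}

theorem sum_mulChar_add_mul_eq_zero [Fintype F] (hχ : χ ≠ 1) (a : F) {b : F} (hb : b ≠ 0) :
    ∑ t, χ (a + t * b) = 0 := by
  rw [← MulChar.sum_eq_zero_of_ne_one hχ]
  exact Equiv.sum_comp ((Equiv.mulRight₀ b hb).trans (Equiv.addLeft a)) χ

variable [Finite F]

theorem add_mem_monics {n : ℕ} {g h : F[X]} (hg : g ∈ monics F n) (hh : h.degree < n) :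
    g + h ∈ monics F n := by
  rw [mem_monics] at hg ⊢
  have hdeg : h.degree < g.degree := by rwa [degree_eq_natDegree hg.1.ne_zero, hg.2]
  exact ⟨hg.1.add_of_left hdeg, by rw [natDegree_add_eq_left_of_degree_lt hdeg, hg.2]⟩

theorem sum_monics_add_right {R : Type*} [AddCommMonoid R] {n : ℕ} {h : F[X]} (hh : h.degree < n)
    (f : F[X] → R) : ∑ g ∈ monics F n, f (g + h) = ∑ g ∈ monics F n, f g :=
  sum_bij' (fun g _ ↦ g + h) (fun g _ ↦ g + -h) (fun _ hg ↦ add_mem_monics hg hh)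
    (fun _ hg ↦ add_mem_monics hg (by rwa [degree_neg])) (by simp) (by simp) fun _ _ ↦ rfl

/-- For `c₀ ∈ T`, adding multiples of the product of `X - c` over the other `c ∈ T` to `g` changes
neither `nextCoeff` nor the values at those `c`, but moves `g(c₀)` through all of `F`. -/
theorem monicSum_charWeight_eq_zero (hχ : χ ≠ 1) (hT : T.Nonempty) {n : ℕ} (hn : #T < n) :
    monicSum (charWeight χ ψ T) n = 0 := by
  classical
  obtain ⟨c₀, hc₀⟩ := hT
  let h : F[X] := ∏ c ∈ T.erase c₀, (X - C c)
  have hdeg (t : F) : (C t * h).natDegree < n - 1 := by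
    refine (natDegree_C_mul_le t h).trans_lt ?_
    rw [natDegree_finsetProd_X_sub_C_eq_card, card_erase_of_mem hc₀]
    have := card_pos.2 ⟨c₀, hc₀⟩
    lia
  have hdeg' (t : F) : (C t * h).degree < n :=
    degree_le_natDegree.trans_lt (by exact_mod_cast (hdeg t).trans_le (n.sub_le 1))
  have heval₀ : h.eval c₀ ≠ 0 := by
    rw [eval_prod, prod_ne_zero_iff]
    exact fun c hc ↦ by simpa [sub_eq_zero] using (ne_of_mem_erase hc).symm
  have heval {c : F} (hc : c ∈ T.erase c₀) : h.eval c = 0 := by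
    rw [eval_prod, prod_eq_zero hc (by simp)]
  have shift {g : F[X]} (hg : g ∈ monics F n) (t : F) : charWeight χ ψ T (g + C t * h) =
      χ (g.eval c₀ + t * h.eval c₀) *
        (χ ((-1) ^ n * ∏ c ∈ T.erase c₀, (-1) ^ n * g.eval c) * ψ (-g.nextCoeff)) := by
    have hg' := mem_monics.1 hg
    have hgt := mem_monics.1 (add_mem_monics hg (hdeg' t))
    have hnext : (g + C t * h).nextCoeff = g.nextCoeff := by
      rw [nextCoeff_of_natDegree_pos (by lia), nextCoeff_of_natDegree_pos (by lia), hgt.2, hg'.2,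
        coeff_add, coeff_eq_zero_of_natDegree_lt (hdeg t), add_zero]
    have hprod : ∏ c ∈ T.erase c₀, (-1) ^ n * (g + C t * h).eval c =
        ∏ c ∈ T.erase c₀, (-1) ^ n * g.eval c :=
      prod_congr rfl fun c hc ↦ by simp [heval hc]
    rw [charWeight, hnext, hgt.2, ← mul_prod_erase T _ hc₀, hprod]
    simp only [eval_add, eval_mul, eval_C, map_mul]
    ring
  have := Fintype.ofFinite F
  have hcard : (Fintype.card F : ℂ) ≠ 0 := Nat.cast_ne_zero.2 Fintype.card_ne_zero
  refine (mul_eq_zero.1 ?_).resolve_left hcard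
  calc (Fintype.card F : ℂ) * monicSum (charWeight χ ψ T) n
      = ∑ t : F, ∑ g ∈ monics F n, charWeight χ ψ T (g + C t * h) := by
        simp [sum_monics_add_right (hdeg' _), monicSum]
    _ = 0 := by
        rw [sum_comm]
        refine sum_eq_zero fun g hg ↦ ?_
        simp only [shift hg, ← sum_mul, sum_mulChar_add_mul_eq_zero hχ _ heval₀, zero_mul]

variable {K : Type*} [Field K] [Fintype K] [Algebra F K]

theorem card_filter_minpoly_eq [DecidableEq F[X]] {π : F[X]} (hmon : π.Monic)
    (hirr : Irreducible π) (hdvd : π.natDegree ∣ Module.finrank F K) :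
    #{x : K | minpoly F x = π} = π.natDegree := by
  have hcard : Nat.card F ^ Module.finrank F K = Fintype.card K := by
    rw [← Module.natCard_eq_pow_finrank, Nat.card_eq_fintype_card]
  have hroots : (X ^ Fintype.card K - X : K[X]).Splits := by
    rw [splits_iff_card_roots, FiniteField.roots_X_pow_card_sub_X K,
      FiniteField.X_pow_card_sub_X_natDegree_eq K Fintype.one_lt_card]
    rfl
  have hdvd_map := map_dvd (algebraMap F K) (hirr.natDegree_dvd_iff_dvd_X_pow_card_pow_sub_X.1 hdvd)
  rw [hcard] at hdvd_map
  have hsplits : (π.map (algebraMap F K)).Splits :=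
    hroots.of_dvd (FiniteField.X_pow_card_sub_X_ne_zero K Fintype.one_lt_card)
      (by simpa using hdvd_map)
  rw [← card_rootSet_eq_natDegree (PerfectField.separable_of_irreducible hirr) hsplits,
    ← Nat.card_eq_fintype_card]
  refine (Nat.subtype_card _ fun x ↦ ?_).symm
  simp only [mem_filter, mem_univ, true_and, mem_rootSet]
  refine ⟨?_, fun hx ↦ (minpoly.eq_of_irreducible_of_monic hirr hx.2 hmon).symm⟩
  rintro rfl
  exact ⟨hmon.ne_zero, minpoly.aeval _ _⟩

variable (χ T) in
theorem charSum_eq_primePowerSum :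
    charSum χ ψ T K = primePowerSum (charWeight χ ψ T) (Module.finrank F K) := by
  classical
  have hmem (x : K) (_ : x ∈ univ) : minpoly F x ∈ monicIrreducibles F (Module.finrank F K) := by
    have hx : IsIntegral F x := .of_finite F x
    exact mem_monicIrreducibles.2
      ⟨minpoly.monic hx, minpoly.irreducible hx, minpoly.degree_dvd hx, Module.finrank_pos.ne'⟩
  simp only [charSum, ← charWeight_minpoly_pow]
  rw [← sum_fiberwise_of_maps_to hmem, primePowerSum]
  refine sum_congr rfl fun π hπ ↦ ?_
  obtain ⟨hmon, hirr, hdvd, -⟩ := mem_monicIrreducibles.1 hπ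
  rw [← card_filter_minpoly_eq (K := K) hmon hirr hdvd, ← nsmul_eq_mul, ← sum_const]
  refine sum_congr rfl fun x hx ↦ ?_
  rw [(mem_filter.1 hx).2, card_filter_minpoly_eq hmon hirr hdvd]

end CharWeight

section PowerSums

section Newton

variable {L : Type*} [Field L] {d : ℕ} {A S : ℕ → L}

theorem exists_forall_eq_aeval_esymm [IsAlgClosed L] (hA0 : A 0 = 1)
    (hA : ∀ n, d < n → A n = 0) :
    ∃ ω : Fin d → L, ∀ n,
      A n = (-1) ^ n * MvPolynomial.aeval ω (MvPolynomial.esymm (Fin d) L n) := by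
  classical
  let P : L[X] := ∑ k ∈ range (d + 1), C (A (d - k)) * X ^ k
  have hcoeff {k : ℕ} (hk : k ≤ d) : P.coeff k = A (d - k) := by
    simp [P, finsetSum_coeff, hk]
  have hle : P.natDegree ≤ d := by
    refine natDegree_sum_le_of_forall_le _ _ fun k hk ↦ (natDegree_C_mul_X_pow_le _ _).trans ?_
    exact mem_range_succ_iff.1 hk
  have hlead : P.coeff d = 1 := by rw [hcoeff le_rfl, Nat.sub_self, hA0]
  have hmon : P.Monic := monic_of_natDegree_le_of_coeff_eq_one d hle hlead
  have hdeg : P.natDegree = d := natDegree_eq_of_le_of_coeff_ne_zero hle (by simp [hlead])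
  have hcard : P.roots.card = P.natDegree := splits_iff_card_roots.1 (IsAlgClosed.splits P)
  let e := Fintype.equivFinOfCardEq ((Multiset.card_coe P.roots).trans (hcard.trans hdeg))
  have hroots : (univ : Finset (Fin d)).val.map (fun i ↦ ((e.symm i).1 : L)) = P.roots := by
    conv_rhs => rw [← Multiset.map_univ_coe P.roots]
    rw [← Finset.map_univ_equiv e.symm, map_val, Multiset.map_map]
    rfl
  refine ⟨fun i ↦ (e.symm i).1, fun n ↦ ?_⟩
  rw [MvPolynomial.aeval_esymm_eq_multiset_esymm, hroots]
  rcases le_or_gt n d with hn | hn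
  · have := coeff_eq_esymm_roots_of_card hcard ((d.sub_le n).trans_eq hdeg.symm)
    rw [hcoeff (d.sub_le n), hmon.leadingCoeff, hdeg, Nat.sub_sub_self hn, one_mul] at this
    exact this
  · rw [hA n hn, Multiset.esymm, Multiset.powersetCard_eq_empty _ (by rwa [hcard, hdeg])]
    simp

theorem eq_neg_sum_pow_of_forall_eq_aeval_esymm {ω : Fin d → L}
    (hω : ∀ n, A n = (-1) ^ n * MvPolynomial.aeval ω (MvPolynomial.esymm (Fin d) L n))
    (hrec : ∀ n : ℕ, n * A n = ∑ ij ∈ antidiagonal n, S ij.1 * A ij.2) {n : ℕ} (hn : n ≠ 0) :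
    S n = -∑ i, ω i ^ n := by
  let S' n := if n = 0 then 0 else -∑ i, ω i ^ n
  have newton (n : ℕ) : n * A n = ∑ ij ∈ antidiagonal n, A ij.1 * S' ij.2 := by
    have := congrArg (MvPolynomial.aeval ω) (MvPolynomial.mul_esymm_eq_sum (Fin d) L n)
    simp only [map_mul, map_natCast, map_sum, map_pow, map_neg, map_one, MvPolynomial.psum,
      MvPolynomial.aeval_X, ← hω] at this
    rw [hω, mul_left_comm, this, ← mul_assoc, ← pow_add, Odd.neg_one_pow (by simp),
      neg_one_mul, ← sum_neg_distrib, sum_filter]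
    refine sum_congr rfl fun ij hij ↦ ?_
    have : ij.1 < n ↔ ij.2 ≠ 0 := by have := mem_antidiagonal.1 hij; lia
    by_cases h : ij.2 = 0 <;> simp [S', this, h]
  have hmul : PowerSeries.mk S * PowerSeries.mk A = PowerSeries.mk S' * PowerSeries.mk A := by
    ext n
    rw [PowerSeries.coeff_mul, mul_comm, PowerSeries.coeff_mul]
    simp only [PowerSeries.coeff_mk, ← hrec, newton]
  have hA : PowerSeries.mk A ≠ 0 := fun h ↦ by
    simpa [hω 0] using congrArg (PowerSeries.coeff 0) h
  simpa [S', hn] using congrArg (PowerSeries.coeff n) (mul_right_cancel₀ hA hmul)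

theorem exists_forall_eq_neg_sum_pow [IsAlgClosed L] (hA0 : A 0 = 1) (hA : ∀ n, d < n → A n = 0)
    (hrec : ∀ n : ℕ, n * A n = ∑ ij ∈ antidiagonal n, S ij.1 * A ij.2) :
    ∃ ω : Fin d → L, ∀ n ≠ 0, S n = -∑ i, ω i ^ n := by
  obtain ⟨ω, hω⟩ := exists_forall_eq_aeval_esymm hA0 hA
  exact ⟨ω, fun n ↦ eq_neg_sum_pow_of_forall_eq_aeval_esymm hω hrec⟩

end Newton

/-- Along a sequence of exponents for which all `(z i / ‖z i‖) ^ k` tend to `1`, the powers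
`z i ^ k` do not cancel. -/
theorem norm_le_of_eventually_norm_sum_pow_le {ι : Type*} [Fintype ι] {z : ι → ℂ} {B R : ℝ}
    (hR : 0 < R) (h : ∀ᶠ k in .atTop, ‖∑ i, z i ^ k‖ ≤ B * R ^ k) (j : ι) : ‖z j‖ ≤ R := by
  let u (i : ι) : Circle := Circle.exp (z i).arg
  have hz (k : ℕ) (i : ι) : z i ^ k = (‖z i‖ ^ k : ℝ) * ((u ^ k) i : ℂ) := by
    conv_lhs => rw [← Complex.norm_mul_exp_arg_mul_I (z i), mul_pow]
    simp [u]
  have hnear : ∀ᶠ v : ι → Circle in nhds 1, ∀ i, 1 / 2 ≤ (v i : ℂ).re := by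
    refine Filter.eventually_all.2 fun i ↦ ?_
    have hcont : Continuous fun v : ι → Circle ↦ (v i : ℂ).re := by fun_prop
    exact (hcont.tendsto 1).eventually (eventually_ge_nhds (by norm_num))
  have hfreq : ∃ᶠ k in .atTop, ‖z j‖ ^ k ≤ 2 * B * R ^ k := by
    refine (((mapClusterPt_one_atTop_pow u).frequently hnear).and_eventually h).mono ?_
    rintro k ⟨hk, hle⟩
    have hre (i : ι) : ‖z i‖ ^ k / 2 ≤ (z i ^ k).re := by
      rw [hz, Complex.re_ofReal_mul, div_eq_mul_one_div]
      exact mul_le_mul_of_nonneg_left (hk i) (by positivity)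
    have : ‖z j‖ ^ k / 2 ≤ B * R ^ k :=
      calc ‖z j‖ ^ k / 2
          ≤ ∑ i, ‖z i‖ ^ k / 2 :=
            single_le_sum (f := fun i ↦ ‖z i‖ ^ k / 2) (fun i _ ↦ by positivity) (mem_univ j)
        _ ≤ ∑ i, (z i ^ k).re := sum_le_sum fun i _ ↦ hre i
        _ = (∑ i, z i ^ k).re := (Complex.re_sum _ _).symm
        _ ≤ B * R ^ k := (Complex.re_le_norm _).trans hle
    linarith
  by_contra! hlt
  have hgrow := tendsto_pow_atTop_atTop_of_one_lt ((one_lt_div hR).2 hlt)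
  obtain ⟨k, hk, hk'⟩ := (hfreq.and_eventually (hgrow.eventually_gt_atTop (2 * B))).exists
  rw [div_pow, lt_div_iff₀ (by positivity)] at hk'
  exact hk.not_gt hk'

end PowerSums

section CompleteSums

variable {F : Type*} [Field F]

theorem exists_forall_primePowerSum_charWeight_eq [Finite F] {χ : MulChar F ℂ} {T : Finset F}
    (hχ : χ ≠ 1) (hT : T.Nonempty) (ψ : AddChar F ℂ) :
    ∃ ω : Fin #T → ℂ, ∀ n ≠ 0, primePowerSum (charWeight χ ψ T) n = -∑ i, ω i ^ n :=
  exists_forall_eq_neg_sum_pow ((monicSum_zero _).trans (charWeight_one χ ψ T))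
    (fun _ ↦ monicSum_charWeight_eq_zero ψ hχ hT)
    (natCast_mul_monicSum fun _ _ ↦ charWeight_mul χ ψ T)

variable [Fintype F]

theorem charSum_self (χ : MulChar F ℂ) (ψ : AddChar F ℂ) (T : Finset F) :
    charSum χ ψ T F = ∑ x, χ (∏ c ∈ T, (x - c)) * ψ x := by
  simp [charSum]

variable [DecidableEq F]

theorem charSum_self_eq_charSum_image_sub_mul (χ : MulChar F ℂ) (ψ : AddChar F ℂ) (T : Finset F)
    (c₀ : F) : charSum χ ψ T F = charSum χ ψ (T.image (· - c₀)) F * ψ c₀ := by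
  rw [charSum_self, charSum_self, sum_mul, ← Equiv.sum_comp (Equiv.addRight c₀)]
  refine sum_congr rfl fun x _ ↦ ?_
  rw [prod_image sub_left_injective.injOn, Equiv.coe_addRight, AddChar.map_add_eq_mul, mul_assoc]
  simp only [sub_sub_eq_add_sub]

theorem complexQuadraticChar_ne_one (hF : ringChar F ≠ 2) : complexQuadraticChar F ≠ 1 :=
  (MulChar.ringHomComp_ne_one_iff Int.cast_injective).2 (quadraticChar_ne_one hF)

theorem norm_charSum_complexQuadraticChar_le_of_zero_mem (hF : ringChar F ≠ 2) {T : Finset F}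
    (hT : 0 ∈ T) (ψ : AddChar F ℂ) :
    ‖charSum (complexQuadraticChar F) ψ T F‖ ≤ #T * √(Fintype.card F) := by
  set q := Fintype.card F
  have hq1 : 1 < q := Fintype.one_lt_card
  choose ω hω using exists_forall_primePowerSum_charWeight_eq (complexQuadraticChar_ne_one hF)
    ⟨0, hT⟩
  have hpow : ∀ᶠ k in .atTop,
      ‖∑ j : AddChar F ℂ × Fin #T, (ω j.1 j.2 ^ 2) ^ k‖ ≤ 2 * (q * #T) * (q : ℝ) ^ k := by
    filter_upwards [(tendsto_pow_atTop_atTop_of_one_lt hq1).eventually_gt_atTop (q * #T),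
      Filter.eventually_ne_atTop 0] with k hlt hk
    have : NeZero (2 * k) := ⟨by lia⟩
    have := Fact.mk (CharP.char_is_prime F (ringChar F))
    let K := FiniteField.Extension F (ringChar F) (2 * k)
    have : Fintype K := Fintype.ofFinite K
    have hcard : Fintype.card K = (q ^ k) ^ 2 := by
      rw [← Nat.card_eq_fintype_card, FiniteField.natCard_extension, Nat.card_eq_fintype_card,
        ← pow_mul, mul_comm k]
    have hsum : ∑ j : AddChar F ℂ × Fin #T, (ω j.1 j.2 ^ 2) ^ k =
        -∑ ψ, charSum (complexQuadraticChar F) ψ T K := by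
      simp only [Fintype.sum_prod_type, ← sum_neg_distrib, charSum_eq_primePowerSum,
        K, FiniteField.finrank_extension, hω _ _ (NeZero.ne (2 * k)), neg_neg, pow_mul]
    rw [hsum, norm_neg]
    exact_mod_cast norm_sum_charSum_complexQuadraticChar_le hF hT hcard hlt
  have hroot (i : Fin #T) : ‖ω ψ i‖ ≤ √q := by
    have := norm_le_of_eventually_norm_sum_pow_le (by positivity) hpow (ψ, i)
    exact Real.le_sqrt_of_sq_le (by rwa [← norm_pow])
  calc ‖charSum (complexQuadraticChar F) ψ T F‖ = ‖∑ i, ω ψ i‖ := by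
        rw [charSum_eq_primePowerSum, Module.finrank_self, hω _ _ one_ne_zero, norm_neg]
        simp only [pow_one]
    _ ≤ ∑ _i : Fin #T, √q := norm_sum_le_of_le _ fun i _ ↦ hroot i
    _ = #T * √q := by simp

theorem norm_sum_quadraticChar_mul_addChar_le (hF : ringChar F ≠ 2) {T : Finset F}
    (hT : T.Nonempty) (ψ : AddChar F ℂ) :
    ‖∑ x, (quadraticChar F (∏ c ∈ T, (x - c)) : ℂ) * ψ x‖ ≤ #T * √(Fintype.card F) := by
  obtain ⟨c₀, hc₀⟩ := hT
  have hbound := norm_charSum_complexQuadraticChar_le_of_zero_mem hF (T := T.image (· - c₀))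
    (mem_image.2 ⟨c₀, hc₀, sub_self c₀⟩) ψ
  rwa [card_image_of_injective T sub_left_injective, ← mul_one ‖_‖, ← AddChar.norm_apply ψ c₀,
    ← norm_mul, ← charSum_self_eq_charSum_image_sub_mul, charSum_self] at hbound

end CompleteSums

section Completion

open Real

section FiniteGroup

variable {G ι : Type*} [AddCommGroup G] [Fintype G]

theorem card_mul_sum_eq_sum_addChar (f : G → ℂ) (s : Finset ι) (y : ι → G) :
    Fintype.card G * ∑ i ∈ s, f (y i) =
      ∑ ψ : AddChar G ℂ, (∑ x, f x * ψ (-x)) * ∑ i ∈ s, ψ (y i) := by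
  classical
  have inversion (i : ι) :
      ∑ ψ : AddChar G ℂ, (∑ x, f x * ψ (-x)) * ψ (y i) = Fintype.card G * f (y i) := by
    simp only [sum_mul, mul_assoc, ← AddChar.map_add_eq_mul]
    rw [sum_comm]
    simp [← mul_sum, AddChar.sum_apply_eq_ite, neg_add_eq_zero, mul_comm]
  rw [mul_sum, sum_congr rfl fun i _ ↦ (inversion i).symm, sum_comm]
  simp only [mul_sum s]

theorem card_mul_norm_sum_le {f : G → ℂ} {B : ℝ} (hf : ∀ ψ : AddChar G ℂ, ‖∑ x, f x * ψ x‖ ≤ B)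
    (s : Finset ι) (y : ι → G) :
    Fintype.card G * ‖∑ i ∈ s, f (y i)‖ ≤ B * ∑ ψ : AddChar G ℂ, ‖∑ i ∈ s, ψ (y i)‖ := by
  rw [← Complex.norm_natCast, ← norm_mul, card_mul_sum_eq_sum_addChar, mul_sum]
  refine norm_sum_le_of_le _ fun ψ _ ↦ ?_
  rw [norm_mul]
  exact mul_le_mul_of_nonneg_right (hf ψ⁻¹) (norm_nonneg _)

end FiniteGroup

theorem pi_mul_mul_one_sub_le_sin {t : ℝ} (h0 : 0 ≤ t) (h1 : t ≤ 1) :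
    π * (t * (1 - t)) ≤ sin (π * t) := by
  wlog ht : t ≤ 1 / 2 generalizing t
  · have := this (t := 1 - t) (by linarith) (by linarith) (by linarith)
    rwa [sub_sub_cancel, mul_comm (1 - t) t, mul_one_sub π t, sin_pi_sub] at this
  have hsin := sin_ge_sub_cube (mul_nonneg pi_nonneg h0)
  have hpi : π ^ 2 ≤ 12 := by nlinarith [pi_pos, pi_lt_d2]
  have hcube : π * t ^ 2 * (π ^ 2 * t) ≤ π * t ^ 2 * 6 := by
    have := pi_nonneg
    gcongr
    nlinarith
  linarith

theorem two_div_pi_mul_harmonic_le_log (n : ℕ) : 2 / π * harmonic n ≤ log (n + 1) := by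
  induction n with
  | zero => simp
  | succ n ih =>
    have hn : (0 : ℝ) < n + 1 := by positivity
    have hlog := le_log_one_add_of_nonneg (x := 1 / ((n : ℝ) + 1)) (by positivity)
    have hstep : 2 / π * (1 / (n + 1)) ≤ 2 * (1 / (n + 1)) / (1 / (n + 1) + 2 : ℝ) := by
      have hpi : 1 / (n + 1) + 2 ≤ π := by
        rw [div_add' _ _ _ hn.ne', div_le_iff₀ hn]
        nlinarith [pi_gt_three]
      rw [div_mul_eq_mul_div]
      gcongr
    have hsucc : (n : ℝ) + 1 + 1 = (n + 1) * (1 + 1 / (n + 1)) := by field_simp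
    rw [harmonic_succ]
    push_cast
    rw [hsucc, log_mul hn.ne' (by positivity), mul_add, ← one_div]
    exact add_le_add ih (hstep.trans hlog)

theorem norm_geom_sum_exp_le {t : ℝ} (h0 : 0 < t) (h1 : t < 1) (M : ℕ) :
    ‖∑ x ∈ range M, Complex.exp (Complex.I * (2 * π * t : ℝ)) ^ x‖ ≤ (t⁻¹ + (1 - t)⁻¹) / π := by
  set z := Complex.exp (Complex.I * (2 * π * t : ℝ)) with hz
  have hz1 : ‖z‖ = 1 := Complex.norm_exp_I_mul_ofReal _
  have hpos : 0 < π * (t * (1 - t)) := mul_pos pi_pos (mul_pos h0 (sub_pos.2 h1))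
  have hsub : 2 * (π * (t * (1 - t))) ≤ ‖z - 1‖ := by
    have hsin := pi_mul_mul_one_sub_le_sin h0.le h1.le
    rw [hz, Complex.norm_exp_I_mul_ofReal_sub_one, mul_assoc, mul_div_cancel_left₀ _ two_ne_zero,
      norm_mul, norm_of_nonneg zero_le_two, norm_of_nonneg (hpos.le.trans hsin)]
    exact mul_le_mul_of_nonneg_left hsin zero_le_two
  have hgeom : ‖∑ x ∈ range M, z ^ x‖ * ‖z - 1‖ ≤ 2 := by
    rw [← norm_mul, geom_sum_mul]
    refine (norm_sub_le _ _).trans_eq ?_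
    rw [norm_pow, hz1, one_pow, norm_one, one_add_one_eq_two]
  calc ‖∑ x ∈ range M, z ^ x‖ ≤ 2 / (2 * (π * (t * (1 - t)))) := by
        rw [le_div_iff₀ (by positivity)]
        exact (mul_le_mul_of_nonneg_left hsub (norm_nonneg _)).trans hgeom
    _ = (t⁻¹ + (1 - t)⁻¹) / π := by
        have := (sub_pos.2 h1).ne'
        field_simp
        ring

theorem sum_addChar_zmod {E : Type*} [AddCommMonoid E] (n : ℕ) [NeZero n]
    (g : (ℕ → ℂ) → E) :
    ∑ ψ : AddChar (ZMod n) ℂ, g (fun x ↦ ψ x) =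
      ∑ j ∈ range n, g fun x ↦ Complex.exp (Complex.I * (2 * π * (j / n) : ℝ)) ^ x := by
  rw [← Equiv.sum_comp AddChar.zmodAddEquiv.toEquiv]
  refine sum_nbij' ZMod.val Nat.cast (by simp [ZMod.val_lt]) (by simp) (by simp)
    (fun j hj ↦ ZMod.val_cast_of_lt (mem_range.1 hj)) fun a _ ↦ ?_
  congr 1 with x
  have hψ := congrArg Circle.coeHom (AddChar.zmod_intCast n a.val x)
  simp only [Int.cast_natCast, ZMod.natCast_zmod_val] at hψ
  rw [← Complex.exp_nat_mul]
  refine hψ.trans (congrArg Complex.exp ?_)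
  push_cast
  ring

theorem sum_norm_sum_addChar_range_le (n M : ℕ) [NeZero n] :
    ∑ ψ : AddChar (ZMod n) ℂ, ‖∑ x ∈ range M, ψ x‖ ≤ M + n * log n := by
  obtain ⟨m, rfl⟩ := Nat.exists_eq_succ_of_ne_zero (NeZero.ne n)
  have hterm (j) (hj : j ∈ range m) :
      ‖∑ x ∈ range M, Complex.exp
        (Complex.I * (2 * π * ((j + 1 : ℕ) / (m + 1 : ℕ)) : ℝ)) ^ x‖ ≤
      (m + 1) / π * ((j + 1 : ℝ)⁻¹ + ((m - 1 - j : ℕ) + 1 : ℝ)⁻¹) := by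
    have hj := mem_range.1 hj
    have hlt : ((j + 1 : ℕ) / (m + 1 : ℕ) : ℝ) < 1 := by
      rw [div_lt_one (by positivity)]
      exact_mod_cast Nat.succ_lt_succ hj
    refine (norm_geom_sum_exp_le (by positivity) hlt M).trans_eq ?_
    have hsub : (1 - (j + 1 : ℕ) / (m + 1 : ℕ) : ℝ) = ((m - 1 - j : ℕ) + 1) / (m + 1) := by
      rw [Nat.sub_sub, Nat.cast_sub (by lia)]
      field_simp
      push_cast
      ring
    rw [hsub, inv_div, inv_div]
    push_cast
    ring
  have hharmonic : ∑ j ∈ range m, (j + 1 : ℝ)⁻¹ = harmonic m := by simp [harmonic]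
  rw [sum_addChar_zmod (m + 1) fun ψ ↦ ‖∑ x ∈ range M, ψ x‖, sum_range_succ', add_comm]
  refine add_le_add (by simp) ?_
  refine (sum_le_sum hterm).trans ?_
  rw [← mul_sum, sum_add_distrib, sum_range_reflect (fun j : ℕ ↦ (j + 1 : ℝ)⁻¹), hharmonic]
  calc (m + 1) / π * (harmonic m + harmonic m : ℝ) = (m + 1) * (2 / π * harmonic m) := by ring
    _ ≤ (m + 1) * log (m + 1) := by gcongr; exact two_div_pi_mul_harmonic_le_log m
    _ = _ := by push_cast; rfl

end Completion

theorem incomplete_weil_sum_bound_general {p : ℕ} [Fact p.Prime] (hp : p ≠ 2)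
    {t : Finset (ZMod p)} (ht : t.Nonempty) {M : ℕ} (hM : M ≤ p) :
    |((∑ x ∈ range M, quadraticChar (ZMod p) ((∏ r ∈ t, (X - C r)).eval (x : ZMod p)) : ℤ) : ℝ)|
      ≤ #t * (1 + Real.log p) * √p := by
  have hp0 : (0 : ℝ) < p := mod_cast (Fact.out : p.Prime).pos
  have hcomplete := norm_sum_quadraticChar_mul_addChar_le
    ((ZMod.ringChar_zmod_n p).trans_ne hp) ht
  have hcompletion := card_mul_norm_sum_le hcomplete (range M) fun x ↦ (x : ZMod p)
  rw [ZMod.card] at hcompletion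
  simp only [eval_prod, eval_sub, eval_X, eval_C]
  rw [← Complex.norm_intCast, Int.cast_sum]
  refine le_of_mul_le_mul_left (hcompletion.trans ?_) hp0
  calc #t * √p * ∑ ψ : AddChar (ZMod p) ℂ, ‖∑ x ∈ range M, ψ x‖
      ≤ #t * √p * (p + p * Real.log p) := by
        gcongr
        exact (sum_norm_sum_addChar_range_le p M).trans (by gcongr)
    _ = p * (#t * (1 + Real.log p) * √p) := by ring

/-- Theorem 9.2 (incomplete Weil-sum estimate): there is `p₀ > 0` such that for every prime
`p ≥ p₀`, every monic polynomial `f` over `𝔽_p` of degree `d ≥ 1` that is a product of `d`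
distinct monic linear factors, and every `N` with `0 ≤ N ≤ p - 1`,
`|∑_{x=0}^{N} η_p(f(x))| ≤ d (1 + log p) √p`. -/
theorem incomplete_weil_sum_bound :
    ∃ p₀ : ℕ, 0 < p₀ ∧ ∀ (p : ℕ) [Fact p.Prime], p₀ ≤ p →
      ∀ d : ℕ, 1 ≤ d → ∀ f : Polynomial (ZMod p), ∀ t : Finset (ZMod p), t.card = d →
        f = ∏ r ∈ t, (Polynomial.X - Polynomial.C r) →
        ∀ N : ℕ, N ≤ p - 1 →
          |((∑ x ∈ Finset.range (N + 1), quadraticChar (ZMod p) (f.eval (x : ZMod p)) : ℤ) : ℝ)|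
            ≤ (d : ℝ) * (1 + Real.log p) * Real.sqrt p := by
  refine ⟨3, three_pos, fun p _ hp d hd f t hdt hf N hN ↦ ?_⟩
  subst hdt hf
  exact incomplete_weil_sum_bound_general (by lia) (card_pos.1 hd) (by lia)
end
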